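/- arXiv:2603.13178 — 5 statements merged into one kernel-verified Lean document; each statement's English description precedes it below -/
import Mathlib

section
/- If G is a finite regular simple graph (all vertices have the same degree), then G admits a locally irregular total coloring with 2 colors, i.e., tlir(G) ≤ 2. -/
open Finset
open scoped Classical

variable {V : Type*}

/-- The total degree of a vertex `v` in color `i`, given a vertex coloring `cV` and an
edge coloring `cE` of a graph `G` with `k` colors: the number of edges of color `i`
incident to `v`, plus `1` if `v` itself has color `i`. -/
noncomputable def totalDeg [Fintype V] (G : SimpleGraph V) {k : ℕ}
    (cV : V → Fin k) (cE : Sym2 V → Fin k) (i : Fin k) (v : V) : ℕ :=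
  (univ.filter fun u => G.Adj v u ∧ cE s(v, u) = i).card + (if cV v = i then 1 else 0)

/-- `(cV, cE)` is a locally irregular total coloring of `G`: for every edge `uv`,
the total degrees of `u` and `v` in the color of `uv` are distinct. -/
def IsTLIR [Fintype V] (G : SimpleGraph V) {k : ℕ}
    (cV : V → Fin k) (cE : Sym2 V → Fin k) : Prop :=
  ∀ u v, G.Adj u v →
    totalDeg G cV cE (cE s(u, v)) u ≠ totalDeg G cV cE (cE s(u, v)) v

/-- `G` admits a locally irregular total coloring with `k` colors, i.e. `tlir(G) ≤ k`. -/
def HasTLIR [Fintype V] (G : SimpleGraph V) (k : ℕ) : Prop :=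
  ∃ (cV : V → Fin k) (cE : Sym2 V → Fin k), IsTLIR G cV cE

/-!
Let `p = ⌊d / 2⌋`. Choose a set `A` of vertices such that the cut between `A` and its complement is
maximal (with a small weight correction for odd `d`), and a Grundy coloring `C` of the graph formed
by the edges inside the two sides. Give `v` the target `p - C v` if `v ∈ A` and `p + C v + 1`
otherwise. Adjacent vertices have distinct targets: on one side because `C` is proper, across the
cut because `p - C u < p + C v + 1`.

Some subgraph `H` has at every vertex degree equal to the target or one less: in the Hall-type
condition for such a factor, the edges to be counted are bounded by the maximality of the cut, and
the values of `C` are paid for by the edges that the Grundy property provides. Color the edges of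
`H` with the first color, and use the vertex colors to make up the missing unit. The total degree of
`v` in the first color is then its target `t`, and in the second it is `d + 1 - t`, so both are
distinct at adjacent vertices.
-/

open SimpleGraph
open scoped symmDiff

section Switch

variable {G H : SimpleGraph V} {u v w : V}

lemma symmDiff_edge_le (hH : H ≤ G) (h : G.Adj v u) : H ∆ edge v u ≤ G :=
  symmDiff_le_sup.trans (sup_le hH ((edge_le_iff G).2 (.inr h)))

lemma symmDiff_edge_adj_of_ne {x y : V} (h : s(x, y) ≠ s(v, u)) :
    (H ∆ edge v u).Adj x y ↔ H.Adj x y := by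
  have : ¬ (edge v u).Adj x y := fun hxy => h ((adj_edge _ _).1 hxy).1.symm
  simp [symmDiff_def, this]

lemma symmDiff_edge_adj_self (h : v ≠ u) : (H ∆ edge v u).Adj v u ↔ ¬ H.Adj v u := by
  simp [symmDiff_def, edge_adj, h]

variable [Fintype V]

lemma degree_sdiff_add_degree [DecidableRel G.Adj] [DecidableRel H.Adj] (hH : H ≤ G) :
    (G \ H).degree v + H.degree v = G.degree v := by
  simp only [← card_neighborFinset_eq_degree]
  rw [neighborFinset_sdiff, card_sdiff_add_card_eq_card]
  intro x
  simpa using @hH v x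

lemma degree_symmDiff_edge_of_ne (hv : w ≠ v) (hu : w ≠ u) :
    (H ∆ edge v u).degree w = H.degree w := by
  simp only [← card_neighborFinset_eq_degree]
  congr 1
  ext x
  have : s(w, x) ≠ s(v, u) := by simp [hv, hu]
  simp only [mem_neighborFinset, symmDiff_edge_adj_of_ne this]

lemma degree_symmDiff_edge_left (h : v ≠ u) :
    ((H ∆ edge v u).degree v : ℤ) = H.degree v + if H.Adj v u then -1 else 1 := by
  have hne {x : V} (hx : x ≠ u) : s(v, x) ≠ s(v, u) := fun hs => hx (Sym2.congr_right.1 hs)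
  simp only [← card_neighborFinset_eq_degree]
  split_ifs with hA
  · have : (H ∆ edge v u).neighborFinset v = (H.neighborFinset v).erase u := by
      ext x
      by_cases hx : x = u
      · simp [hx, symmDiff_edge_adj_self h, hA]
      · simp [hx, symmDiff_edge_adj_of_ne (hne hx)]
    rw [this, cast_card_erase_of_mem (by simpa using hA), sub_eq_add_neg]
  · have : (H ∆ edge v u).neighborFinset v = insert u (H.neighborFinset v) := by
      ext x
      by_cases hx : x = u
      · simp [hx, symmDiff_edge_adj_self h, hA]
      · simp [hx, symmDiff_edge_adj_of_ne (hne hx)]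
    rw [this, card_insert_of_notMem (by simpa using hA), Nat.cast_add_one]

lemma degree_symmDiff_edge_right (h : v ≠ u) :
    ((H ∆ edge v u).degree u : ℤ) = H.degree u + if H.Adj v u then -1 else 1 := by
  rw [edge_comm, H.adj_comm]
  exact degree_symmDiff_edge_left h.symm

end Switch

section Factor

variable [Fintype V] {G H : SimpleGraph V} {a b : V → ℤ} {u v w : V}

/-- The distance of the degree of `v` in `H` from the interval `[a v, b v]`. -/
noncomputable def vertexDefect (a b : V → ℤ) (H : SimpleGraph V) (v : V) : ℕ :=
  (H.degree v - b v).toNat + (a v - H.degree v).toNat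

/-- The total distance of the degrees of `H` from the intervals `[a v, b v]`. -/
noncomputable def degreeDefect (a b : V → ℤ) (H : SimpleGraph V) : ℕ :=
  ∑ v, vertexDefect a b H v

/-- Switching `vu` cannot worsen the degree of `v`, and improves it if it is out of range. -/
def Eases (a b : V → ℤ) (H : SimpleGraph V) (v u : V) : Prop :=
  if H.Adj v u then b v ≤ H.degree v else H.degree v ≤ a v

/-- Switching `vu` takes the degree of `v` out of range, or further out of it. -/
def Strains (a b : V → ℤ) (H : SimpleGraph V) (v u : V) : Prop :=
  if H.Adj v u then H.degree v ≤ a v else b v ≤ H.degree v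

/-- There is a walk in `G` with `n + 1` edges starting at `v` along which every vertex but the last
is eased by switching the edge that leaves it, while the last vertex is not strained by switching
the last edge. If the degree of `v` is out of range, then switching the edges of a shortest such
walk lowers the defect. -/
def HasAugmentingWalk (G : SimpleGraph V) (a b : V → ℤ) (H : SimpleGraph V) : ℕ → V → Prop
  | 0, v => ∃ u, G.Adj v u ∧ Eases a b H v u ∧ ¬ Strains a b H u v
  | n + 1, v => ∃ u, G.Adj v u ∧ Eases a b H v u ∧ HasAugmentingWalk G a b H n u

lemma vertexDefect_eq_zero_iff :
    vertexDefect a b H v = 0 ↔ (H.degree v : ℤ) ∈ Set.Icc (a v) (b v) := by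
  simp only [vertexDefect, Set.mem_Icc]
  omega

lemma Eases.not_strains (hab : a v < b v) (h : Eases a b H v u) : ¬ Strains a b H v u := by
  unfold Eases Strains at *
  split_ifs at * <;> omega

lemma vertexDefect_symmDiff_edge_left (hab : a v < b v) (hne : v ≠ u)
    (hv : vertexDefect a b H v ≠ 0) (he : Eases a b H v u) :
    vertexDefect a b (H ∆ edge v u) v + 1 = vertexDefect a b H v := by
  have hdeg := degree_symmDiff_edge_left (H := H) hne
  unfold vertexDefect Eases at *
  split_ifs at * <;> omega

lemma vertexDefect_symmDiff_edge_right_le_add_one (hne : v ≠ u) :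
    vertexDefect a b (H ∆ edge v u) u ≤ vertexDefect a b H u + 1 := by
  have hdeg := degree_symmDiff_edge_right (H := H) hne
  unfold vertexDefect
  split_ifs at hdeg <;> omega

lemma vertexDefect_symmDiff_edge_right_le (hne : v ≠ u) (hs : ¬ Strains a b H u v) :
    vertexDefect a b (H ∆ edge v u) u ≤ vertexDefect a b H u := by
  have hdeg := degree_symmDiff_edge_right (H := H) hne
  rw [Strains, H.adj_comm] at hs
  unfold vertexDefect
  split_ifs at * <;> omega

lemma Strains.vertexDefect_symmDiff_edge_ne_zero (hne : v ≠ u) (hs : Strains a b H u v) :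
    vertexDefect a b (H ∆ edge v u) u ≠ 0 := by
  have hdeg := degree_symmDiff_edge_right (H := H) hne
  rw [Strains, H.adj_comm] at hs
  unfold vertexDefect
  split_ifs at * <;> omega

lemma degreeDefect_symmDiff_edge_add (hne : v ≠ u) :
    degreeDefect a b (H ∆ edge v u) + (vertexDefect a b H v + vertexDefect a b H u) =
      degreeDefect a b H +
        (vertexDefect a b (H ∆ edge v u) v + vertexDefect a b (H ∆ edge v u) u) := by
  have hrest : ∑ w ∈ univ \ {v, u}, vertexDefect a b (H ∆ edge v u) w =
      ∑ w ∈ univ \ {v, u}, vertexDefect a b H w := by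
    refine sum_congr rfl fun w hw => ?_
    simp only [mem_sdiff, mem_univ, mem_insert, mem_singleton, not_or, true_and] at hw
    simp only [vertexDefect, degree_symmDiff_edge_of_ne hw.1 hw.2]
  simp only [degreeDefect, ← sum_sdiff (subset_univ {v, u}), sum_pair hne, hrest]
  omega

lemma degree_le_symmDiff_edge_iff (hab : ∀ v, a v < b v) (hne : v ≠ u)
    (hv : vertexDefect a b H v ≠ 0) (he : Eases a b H v u) (hs : Strains a b H u v) (w : V) :
    ((H ∆ edge v u).degree w ≤ a w ↔ H.degree w ≤ a w) ∧
      (b w ≤ (H ∆ edge v u).degree w ↔ b w ≤ H.degree w) := by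
  rw [Strains, H.adj_comm] at hs
  unfold vertexDefect Eases at *
  by_cases hwv : w = v
  · have hdeg := degree_symmDiff_edge_left (H := H) hne
    subst hwv
    have := hab w
    split_ifs at * <;> omega
  by_cases hwu : w = u
  · have hdeg := degree_symmDiff_edge_right (H := H) hne
    subst hwu
    have := hab w
    split_ifs at * <;> omega
  simp only [degree_symmDiff_edge_of_ne hwv hwu, iff_self, and_self]

/-- A shortest augmenting walk from `v` that starts with `vu` does not come back to `v`, and eased
vertices are not strained, so the rest of the walk does not use `vu` and survives its switch. -/
lemma HasAugmentingWalk.symmDiff_edge (hab : ∀ v, a v < b v) (hne : v ≠ u)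
    (hv : vertexDefect a b H v ≠ 0) (he : Eases a b H v u) (hs : Strains a b H u v) {n : ℕ}
    (hn : ∀ m ≤ n, ¬ HasAugmentingWalk G a b H m v) (hw : HasAugmentingWalk G a b H n w) :
    HasAugmentingWalk G a b (H ∆ edge v u) n w := by
  have hdeg := degree_le_symmDiff_edge_iff hab hne hv he hs
  have hedge {x y : V} (hxv : x ≠ v) (hxy : Eases a b H x y) : s(x, y) ≠ s(v, u) := by
    rintro h
    obtain ⟨rfl, -⟩ | ⟨rfl, rfl⟩ := Sym2.eq_iff.1 h
    · exact hxv rfl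
    · exact hxy.not_strains (hab _) hs
  have heases {x y : V} (hxv : x ≠ v) (hxy : Eases a b H x y) :
      Eases a b (H ∆ edge v u) x y := by
    simpa only [Eases, symmDiff_edge_adj_of_ne (hedge hxv hxy), hdeg] using hxy
  induction n generalizing w with
  | zero =>
    obtain ⟨x, hwx, hwe, hxs⟩ := hw
    have hwv : w ≠ v := by rintro rfl; exact hn 0 le_rfl ⟨x, hwx, hwe, hxs⟩
    have hne' : s(x, w) ≠ s(v, u) := Sym2.eq_swap.trans_ne (hedge hwv hwe)
    refine ⟨x, hwx, heases hwv hwe, ?_⟩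
    simpa only [Strains, symmDiff_edge_adj_of_ne hne', hdeg] using hxs
  | succ n ih =>
    obtain ⟨x, hwx, hwe, hx⟩ := hw
    have hwv : w ≠ v := by rintro rfl; exact hn _ le_rfl ⟨x, hwx, hwe, hx⟩
    exact ⟨x, hwx, heases hwv hwe, ih (fun m hm => hn m (by omega)) hx⟩

lemma HasAugmentingWalk.exists_degreeDefect_lt (hab : ∀ v, a v < b v) (hH : H ≤ G) {n : ℕ}
    (hw : HasAugmentingWalk G a b H n v) (hv : vertexDefect a b H v ≠ 0) :
    ∃ H' ≤ G, degreeDefect a b H' < degreeDefect a b H := by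
  induction n using Nat.strong_induction_on generalizing H v with
  | _ n ih =>
  by_cases! hshort : ∃ m < n, HasAugmentingWalk G a b H m v
  · obtain ⟨m, hm, hmv⟩ := hshort
    exact ih m hm hH hmv hv
  cases n with
  | zero =>
    obtain ⟨u, hvu, he, hs⟩ := hw
    have hleft := vertexDefect_symmDiff_edge_left (hab v) hvu.ne hv he
    have hright := vertexDefect_symmDiff_edge_right_le hvu.ne hs
    have htotal := degreeDefect_symmDiff_edge_add (H := H) (a := a) (b := b) hvu.ne
    exact ⟨_, symmDiff_edge_le hH hvu, by omega⟩
  | succ n =>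
    obtain ⟨u, hvu, he, hu⟩ := hw
    have hs : Strains a b H u v := by
      by_contra hs
      exact hshort 0 n.succ_pos ⟨u, hvu, he, hs⟩
    obtain ⟨H', hH', hlt⟩ := ih n n.lt_succ_self (symmDiff_edge_le hH hvu)
      (hu.symmDiff_edge hab hvu.ne hv he hs fun m hm => hshort m (by omega))
      (hs.vertexDefect_symmDiff_edge_ne_zero hvu.ne)
    have hleft := vertexDefect_symmDiff_edge_left (hab v) hvu.ne hv he
    have hright := vertexDefect_symmDiff_edge_right_le_add_one (H := H) (a := a) (b := b) hvu.ne
    have htotal := degreeDefect_symmDiff_edge_add (H := H) (a := a) (b := b) hvu.ne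
    exact ⟨H', hH', by omega⟩

lemma sum_degree_eq_card_interedges [DecidableRel H.Adj] {S T : Finset V}
    (h : ∀ v ∈ S, ∀ u, H.Adj v u → u ∈ T) : ∑ v ∈ S, H.degree v = #(H.interedges S T) := by
  rw [interedges_def, card_filter, sum_product]
  refine sum_congr rfl fun v hv => ?_
  rw [← card_neighborFinset_eq_degree, ← card_filter]
  congr 1
  ext u
  simpa using h v hv u

lemma sum_degree_add_sum_degree_eq_card_interedges {S T : Finset V} (hH : H ≤ G)
    (hS : ∀ v ∈ S, ∀ u, H.Adj v u → u ∈ T) (hT : ∀ v ∈ T, ∀ u, (G \ H).Adj v u → u ∈ S) :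
    ∑ v ∈ S, H.degree v + ∑ v ∈ T, (G \ H).degree v = #(G.interedges S T) := by
  have hsum : ∑ v ∈ T, (G \ H).degree v = #((G \ H).interedges S T) := by
    rw [sum_degree_eq_card_interedges hT]
    have : Std.Symm (G \ H).Adj := (G \ H).symm
    exact Rel.card_interedges_comm _ _
  have hdisj : Disjoint (H.interedges S T) ((G \ H).interedges S T) := by
    rw [Finset.disjoint_left]
    simp only [mem_interedges_iff, sdiff_adj]
    tauto
  rw [sum_degree_eq_card_interedges hS, hsum, ← card_union_of_disjoint hdisj]
  congr 1
  ext e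
  have := @hH e.1 e.2
  simp only [mem_union, mem_interedges_iff, sdiff_adj]
  tauto

lemma Eases.strains_and_not_hasAugmentingWalk (he : Eases a b H v u) (hvu : G.Adj v u)
    (hv : ∀ n, ¬ HasAugmentingWalk G a b H n v) :
    Strains a b H u v ∧ ∀ n, ¬ HasAugmentingWalk G a b H n u :=
  ⟨by_contra fun hs => hv 0 ⟨u, hvu, he, hs⟩, fun n hn => hv (n + 1) ⟨u, hvu, he, hn⟩⟩

lemma sum_add_sum_lt_sum_degree_add_sum_degree {S T : Finset V} (hH : H ≤ G)
    (hb : ∀ v ∈ S, b v ≤ H.degree v) (ha : ∀ v ∈ T, H.degree v ≤ a v)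
    (hw : (w ∈ S ∧ b w < H.degree w) ∨ (w ∈ T ∧ H.degree w < a w)) :
    ∑ v ∈ S, b v + ∑ v ∈ T, (G.degree v - a v) <
      ∑ v ∈ S, (H.degree v : ℤ) + ∑ v ∈ T, ((G \ H).degree v : ℤ) := by
  have hdeg (v : V) : ((G \ H).degree v : ℤ) = G.degree v - H.degree v := by
    rw [← degree_sdiff_add_degree hH]
    push_cast
    ring
  have ha' : ∀ v ∈ T, (G.degree v - a v : ℤ) ≤ (G \ H).degree v := fun v hv => by
    linarith [hdeg v, ha v hv]
  rcases hw with ⟨hwS, hlt⟩ | ⟨hwT, hlt⟩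
  · exact add_lt_add_of_lt_of_le (sum_lt_sum hb ⟨w, hwS, hlt⟩) (sum_le_sum ha')
  · exact add_lt_add_of_le_of_lt (sum_le_sum hb)
      (sum_lt_sum ha' ⟨w, hwT, by linarith [hdeg w]⟩)

lemma exists_sum_add_sum_lt_card_interedges (hab : ∀ v, a v < b v) (hH : H ≤ G)
    (hw : vertexDefect a b H w ≠ 0) (hwN : ∀ n, ¬ HasAugmentingWalk G a b H n w) :
    ∃ S T : Finset V, Disjoint S T ∧
      ∑ v ∈ S, b v + ∑ v ∈ T, (G.degree v - a v) < (#(G.interedges S T) : ℤ) := by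
  let N (v : V) : Prop := ∀ n, ¬ HasAugmentingWalk G a b H n v
  let S : Finset V := {v | N v ∧ b v ≤ H.degree v}
  let T : Finset V := {v | N v ∧ H.degree v ≤ a v}
  have hS : ∀ v ∈ S, ∀ u, H.Adj v u → u ∈ T := by
    intro v hv u hvu
    obtain ⟨hN, hdeg⟩ := (mem_filter.1 hv).2
    have he : Eases a b H v u := by rwa [Eases, if_pos hvu]
    obtain ⟨hs, hu⟩ := he.strains_and_not_hasAugmentingWalk (hH hvu) hN
    rw [Strains, if_pos hvu.symm] at hs
    exact mem_filter.2 ⟨mem_univ u, hu, hs⟩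
  have hT : ∀ v ∈ T, ∀ u, (G \ H).Adj v u → u ∈ S := by
    intro v hv u hvu
    obtain ⟨hN, hdeg⟩ := (mem_filter.1 hv).2
    have he : Eases a b H v u := by rwa [Eases, if_neg hvu.2]
    obtain ⟨hs, hu⟩ := he.strains_and_not_hasAugmentingWalk hvu.1 hN
    rw [Strains, H.adj_comm, if_neg hvu.2] at hs
    exact mem_filter.2 ⟨mem_univ u, hu, hs⟩
  have hdisj : Disjoint S T :=
    disjoint_filter.2 fun v _ hvS hvT => ((hvT.2.trans_lt (hab v)).trans_le hvS.2).false
  have hwST : (w ∈ S ∧ b w < H.degree w) ∨ (w ∈ T ∧ H.degree w < a w) := by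
    have hout : b w < H.degree w ∨ H.degree w < a w := by
      unfold vertexDefect at hw
      omega
    exact hout.imp (fun h => ⟨mem_filter.2 ⟨mem_univ w, hwN, h.le⟩, h⟩)
      fun h => ⟨mem_filter.2 ⟨mem_univ w, hwN, h.le⟩, h⟩
  refine ⟨S, T, hdisj, ?_⟩
  rw [← sum_degree_add_sum_degree_eq_card_interedges hH hS hT]
  push_cast
  exact sum_add_sum_lt_sum_degree_add_sum_degree hH (fun v hv => (mem_filter.1 hv).2.2)
    (fun v hv => (mem_filter.1 hv).2.2) hwST

/-- The sufficiency half of Lovász' theorem on `(g, f)`-factors, in the case `g < f`. -/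
theorem exists_le_degree_mem_Icc (hab : ∀ v, a v < b v)
    (hST : ∀ S T : Finset V, Disjoint S T →
      (#(G.interedges S T) : ℤ) ≤ ∑ v ∈ S, b v + ∑ v ∈ T, (G.degree v - a v)) :
    ∃ H ≤ G, ∀ v, (H.degree v : ℤ) ∈ Set.Icc (a v) (b v) := by
  obtain ⟨⟨H, hH⟩, hmin⟩ := Finite.exists_min fun H : Set.Iic G => degreeDefect a b H
  refine ⟨H, hH, fun w => vertexDefect_eq_zero_iff.1 ?_⟩
  by_contra hw
  have hwN (n : ℕ) : ¬ HasAugmentingWalk G a b H n w := fun hn =>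
    have ⟨H', hH', hlt⟩ := hn.exists_degreeDefect_lt hab hH hw
    (hmin ⟨H', hH'⟩).not_gt hlt
  obtain ⟨S, T, hdisj, hlt⟩ := exists_sum_add_sum_lt_card_interedges hab hH hw hwN
  exact (hST S T hdisj).not_gt hlt

end Factor

lemma sum_ite_symmDiff_add [Fintype V] (p q : V → ℤ) (A : Set V) (X : Finset V) :
    (∑ v, if v ∈ A ∆ X then p v else q v) + 2 * ∑ v ∈ X, (if v ∈ A then p v else q v) =
      (∑ v, if v ∈ A then p v else q v) + ∑ v ∈ X, (p v + q v) := by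
  have hX : ∑ v ∈ X, (if v ∈ A ∆ X then p v else q v) +
      ∑ v ∈ X, (if v ∈ A then p v else q v) = ∑ v ∈ X, (p v + q v) := by
    rw [← sum_add_distrib]
    refine sum_congr rfl fun v hv => ?_
    by_cases hvA : v ∈ A <;> simp [Set.mem_symmDiff, hv, hvA, add_comm]
  have hXc : ∑ v ∈ Xᶜ, (if v ∈ A ∆ X then p v else q v) =
      ∑ v ∈ Xᶜ, if v ∈ A then p v else q v := by
    refine sum_congr rfl fun v hv => ?_
    simp [Set.mem_symmDiff, mem_compl.1 hv]
  linarith [sum_add_sum_compl X fun v => if v ∈ A ∆ X then p v else q v,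
    sum_add_sum_compl X fun v => if v ∈ A then p v else q v]

section Counting

variable {G : SimpleGraph V}

lemma between_compl_adj {A : Set V} {u v : V} :
    (G.between A Aᶜ).Adj u v ↔ G.Adj u v ∧ (u ∈ A ↔ v ∉ A) := by
  rw [between_adj, Set.mem_compl_iff, Set.mem_compl_iff]
  tauto

lemma sdiff_between_compl_adj {A : Set V} {u v : V} :
    (G \ G.between A Aᶜ).Adj u v ↔ G.Adj u v ∧ (u ∈ A ↔ v ∈ A) := by
  rw [sdiff_adj, between_compl_adj]
  tauto

variable [Fintype V]

/-- The edges of `G` with both ends in `X`. -/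
noncomputable def edgesWithin (G : SimpleGraph V) (X : Finset V) : Finset (Sym2 V) :=
  {e | e ∈ G.edgeSet ∧ ∀ v ∈ e, v ∈ X}

/-- The edges of `G` with at least one end in `X`. -/
noncomputable def edgesMeeting (G : SimpleGraph V) (X : Finset V) : Finset (Sym2 V) :=
  {e | e ∈ G.edgeSet ∧ ∃ v ∈ e, v ∈ X}

lemma mk_mem_edgesWithin {X : Finset V} {u v : V} :
    s(u, v) ∈ edgesWithin G X ↔ G.Adj u v ∧ u ∈ X ∧ v ∈ X := by
  simp [edgesWithin]

lemma mk_mem_edgesMeeting {X : Finset V} {u v : V} :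
    s(u, v) ∈ edgesMeeting G X ↔ G.Adj u v ∧ (u ∈ X ∨ v ∈ X) := by
  simp [edgesMeeting]

lemma sum_degree_eq_card_edgesWithin_add_card_edgesMeeting [DecidableRel G.Adj] (X : Finset V) :
    ∑ v ∈ X, G.degree v = #(edgesWithin G X) + #(edgesMeeting G X) := by
  have hdeg (v : V) : G.degree v = #{e | e ∈ G.edgeSet ∧ v ∈ e} := by
    rw [← card_incidenceFinset_eq_degree]
    congr 1
    ext e
    simp [incidenceSet]
  simp only [hdeg, edgesWithin, edgesMeeting, card_filter]
  rw [sum_comm, ← sum_add_distrib]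
  refine sum_congr rfl fun e _ => ?_
  induction e with | _ u v
  by_cases huv : G.Adj u v
  · have hends : ∑ w ∈ X, (if w = u ∨ w = v then 1 else 0) =
        (if u ∈ X then 1 else 0) + if v ∈ X then 1 else 0 := by
      rw [← card_filter, filter_or, card_union_of_disjoint
        (disjoint_filter.2 fun w _ hu hv => huv.ne (hu.symm.trans hv))]
      simp only [card_filter, sum_ite_eq']
    simp only [mem_edgeSet, huv, Sym2.mem_iff, true_and, hends, forall_eq_or_imp, forall_eq,
      exists_eq_or_imp, exists_eq_left]
    split_ifs <;> simp_all
  · simp [huv]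

lemma card_edgesWithin_between_symmDiff (A : Set V) (X : Finset V) :
    #(edgesWithin (G.between (A ∆ X) (A ∆ X)ᶜ) univ) +
        #(edgesMeeting (G.between A Aᶜ) X) + #(edgesWithin (G \ G.between A Aᶜ) X) =
      #(edgesWithin (G.between A Aᶜ) univ) +
        #(edgesMeeting (G \ G.between A Aᶜ) X) + #(edgesWithin (G.between A Aᶜ) X) := by
  simp only [edgesWithin, edgesMeeting, card_filter, ← sum_add_distrib]
  refine sum_congr rfl fun e _ => ?_
  induction e with | _ u v
  simp only [mem_edgeSet, between_compl_adj, sdiff_between_compl_adj, Sym2.mem_iff,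
    forall_eq_or_imp, forall_eq, exists_eq_or_imp, exists_eq_left, mem_univ, Set.mem_symmDiff,
    mem_coe]
  by_cases huv : G.Adj u v <;> by_cases hu : u ∈ X <;> by_cases hv : v ∈ X <;>
    by_cases huA : u ∈ A <;> by_cases hvA : v ∈ A <;> simp [huv, hu, hv, huA, hvA]

/-- The cut maximizes its number of edges plus `∑ v, if v ∈ A then p v else q v`; the inequality
for `X` says that moving `X` to the other side does not increase this quantity. -/
lemma exists_cut_card_le_sum (p q : V → ℤ) (hpq : ∀ v, (G.degree v : ℤ) = p v + q v) :
    ∃ A : Set V, ∀ X : Finset V,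
      (#(edgesWithin (G.between A Aᶜ) X) + #(edgesMeeting (G \ G.between A Aᶜ) X) : ℤ) ≤
        ∑ v ∈ X, if v ∈ A then p v else q v := by
  obtain ⟨A, hA⟩ := Finite.exists_max fun A : Set V =>
    (#(edgesWithin (G.between A Aᶜ) univ) : ℤ) + ∑ v, if v ∈ A then p v else q v
  refine ⟨A, fun X => ?_⟩
  have hmax := hA (A ∆ X)
  have hflip := card_edgesWithin_between_symmDiff (G := G) A X
  have hdeg : ∑ v ∈ X, (G.degree v : ℤ) =
      #(edgesWithin (G.between A Aᶜ) X) + #(edgesMeeting (G.between A Aᶜ) X) +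
        (#(edgesWithin (G \ G.between A Aᶜ) X) + #(edgesMeeting (G \ G.between A Aᶜ) X)) := by
    have hsplit (v : V) := degree_sdiff_add_degree (v := v) (between_le (G := G) (s := A) (t := Aᶜ))
    rw [← Nat.cast_sum, ← sum_congr rfl fun v _ => hsplit v, sum_add_distrib,
      sum_degree_eq_card_edgesWithin_add_card_edgesMeeting,
      sum_degree_eq_card_edgesWithin_add_card_edgesMeeting]
    push_cast
    ring
  have hweight := sum_ite_symmDiff_add p q A X
  simp only [hpq] at hdeg
  linarith

end Counting

lemma exists_grundyColoring [Finite V] (G : SimpleGraph V) :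
    ∃ C : G.Coloring ℕ, ∀ u, ∀ i < C u, ∃ v, G.Adj u v ∧ C v = i := by
  have := Fintype.ofFinite V
  obtain ⟨f, hf⟩ := Countable.exists_injective_nat V
  have : Nonempty (G.Coloring ℕ) := ⟨Coloring.mk f fun h => hf.ne h.ne⟩
  let total (C : G.Coloring ℕ) : ℕ := ∑ v, C v
  refine ⟨Function.argmin total, fun u i hi => ?_⟩
  set C := Function.argmin total
  by_contra! hu
  let C' : G.Coloring ℕ := Coloring.mk (Function.update C u i) fun {v w} hvw => by
    by_cases hv : v = u
    · subst hv
      simpa [hvw.ne'] using (hu w hvw).symm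
    by_cases hw : w = u
    · subst hw
      simpa [hv] using hu v hvw.symm
    simpa [hv, hw] using C.valid hvw
  have hlt : total C' < total C := by
    have hC' (v : V) : C' v = Function.update C u i v := rfl
    refine sum_lt_sum (fun v _ => ?_) ⟨u, mem_univ u, by simpa [hC'] using hi⟩
    by_cases hv : v = u
    · simpa [hC', hv] using hi.le
    · simp [hC', hv]
  exact (Function.argmin_le total C').not_gt hlt

lemma sum_coloring_le_card_edgesMeeting [Fintype V] {G : SimpleGraph V} {C : G.Coloring ℕ}
    (hC : ∀ u, ∀ i < C u, ∃ v, G.Adj u v ∧ C v = i) (X : Finset V) :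
    ∑ v ∈ X, C v ≤ #(edgesMeeting G X) := by
  choose! f hadj hcol using hC
  rw [← sum_congr rfl fun v _ => card_range (C v), ← card_sigma]
  refine card_le_card_of_injOn (fun x => s(x.1, f x.1 x.2)) ?_ ?_
  · rintro ⟨u, i⟩ h
    rw [mem_coe, mem_sigma, mem_range] at h
    exact mk_mem_edgesMeeting.2 ⟨hadj u i h.2, .inl h.1⟩
  · rintro ⟨u, i⟩ h ⟨v, j⟩ h' heq
    rw [mem_coe, mem_sigma, mem_range] at h h'
    dsimp only at h h' heq
    have hi := hcol u i h.2
    have hj := hcol v j h'.2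
    obtain ⟨rfl, hf⟩ | ⟨huf, hvf⟩ := Sym2.eq_iff.1 heq
    · rw [← hi, ← hj, hf]
    · rw [← huf] at hj
      rw [hvf] at hi
      omega

section Target

variable {G : SimpleGraph V} {A : Set V}

/-- The total degree of `v` aimed at in the first color, where `A` is one side of a cut and `c` is
a proper coloring of the graph formed by the edges inside the two sides: when `p` is constant,
adjacent vertices have different targets. -/
noncomputable def targetDegree (p : V → ℤ) (A : Set V) (c : V → ℕ) (v : V) : ℤ :=
  if v ∈ A then p v - c v else p v + c v + 1

lemma targetDegree_ne_of_adj {p : V → ℤ} {C : (G \ G.between A Aᶜ).Coloring ℕ} {u v : V}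
    (huv : G.Adj u v) (hp : p u = p v) : targetDegree p A C u ≠ targetDegree p A C v := by
  have hC (h : u ∈ A ↔ v ∈ A) := C.valid (sdiff_between_compl_adj.2 ⟨huv, h⟩)
  unfold targetDegree
  by_cases hu : u ∈ A <;> by_cases hv : v ∈ A <;> simp only [hu, hv, if_true, if_false]
  · have := hC (iff_of_true hu hv)
    omega
  · omega
  · omega
  · have := hC (iff_of_false hu hv)
    omega

variable [Fintype V]

/-- An edge from `S` to `T` that crosses the cut has both ends in the first of the two sets or both
in the second; any other edge from `S` to `T` joins the two sets. -/
lemma card_interedges_le_card_edgesWithin_add {S T : Finset V} (hST : Disjoint S T) :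
    #(G.interedges S T) ≤
      #(edgesWithin (G.between A Aᶜ) ({v ∈ S | v ∈ A} ∪ {v ∈ T | v ∉ A})) +
      (#(edgesWithin (G.between A Aᶜ) ({v ∈ S | v ∉ A} ∪ {v ∈ T | v ∈ A})) +
        #(edgesMeeting (G \ G.between A Aᶜ) ({v ∈ S | v ∉ A} ∪ {v ∈ T | v ∈ A}))) := by
  refine le_trans ?_ ((card_union_le _ _).trans
    (Nat.add_le_add_left (card_union_le _ _) _))
  refine card_le_card_of_injOn (fun x => s(x.1, x.2)) ?_ ?_
  · rintro ⟨u, v⟩ huv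
    obtain ⟨hu, hv, hadj⟩ := (mem_interedges_iff G).1 huv
    simp only [coe_union, Set.mem_union, mem_coe, mk_mem_edgesWithin, mk_mem_edgesMeeting,
      between_compl_adj, sdiff_between_compl_adj, mem_union, mem_filter]
    tauto
  · rintro ⟨u, v⟩ huv ⟨u', v'⟩ huv' heq
    obtain ⟨hu, -⟩ := (mem_interedges_iff G).1 huv
    obtain ⟨-, hv', -⟩ := (mem_interedges_iff G).1 huv'
    obtain ⟨rfl, rfl⟩ | ⟨rfl, rfl⟩ := Sym2.eq_iff.1 heq
    · rfl
    · exact (Finset.disjoint_left.1 hST hu hv').elim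

lemma card_interedges_le_sum_add_sum {τ : V → ℤ} {c : V → ℕ} {S T : Finset V}
    (hST : Disjoint S T)
    (hτ : ∀ X : Finset V,
      (#(edgesWithin (G.between A Aᶜ) X) + #(edgesMeeting (G \ G.between A Aᶜ) X) : ℤ) ≤
        ∑ v ∈ X, τ v)
    (hc : ∀ X : Finset V, ∑ v ∈ X, c v ≤ #(edgesMeeting (G \ G.between A Aᶜ) X)) :
    (#(G.interedges S T) : ℤ) ≤ ∑ v ∈ S, (if v ∈ A then τ v - c v else τ v) +
      ∑ v ∈ T, (if v ∈ A then τ v else τ v - c v) := by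
  let X : Finset V := {v ∈ S | v ∈ A} ∪ {v ∈ T | v ∉ A}
  let Y : Finset V := {v ∈ S | v ∉ A} ∪ {v ∈ T | v ∈ A}
  have hcard : #(G.interedges S T) ≤ #(edgesWithin (G.between A Aᶜ) X) +
      (#(edgesWithin (G.between A Aᶜ) Y) + #(edgesMeeting (G \ G.between A Aᶜ) Y)) :=
    card_interedges_le_card_edgesWithin_add hST
  have hcX := hc X
  zify at hcard hcX
  calc (#(G.interedges S T) : ℤ)
    _ ≤ ∑ v ∈ X, (τ v - c v) + ∑ v ∈ Y, τ v := by
      rw [sum_sub_distrib]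
      linarith [hτ X, hτ Y]
    _ = _ := by
      rw [sum_union (disjoint_filter_filter hST), sum_union (disjoint_filter_filter hST),
        sum_ite, sum_ite]
      ring

lemma exists_degree_mem_Icc_targetDegree (G : SimpleGraph V) {p q : V → ℤ}
    (hdeg : ∀ v, (G.degree v : ℤ) = p v + q v) (hp : ∀ v, p v ≤ q v + 1)
    (hq : ∀ v, q v ≤ p v + 1) :
    ∃ (A : Set V) (C : (G \ G.between A Aᶜ).Coloring ℕ), ∃ H ≤ G, ∀ v,
      (H.degree v : ℤ) ∈ Set.Icc (targetDegree p A C v - 1) (targetDegree p A C v) := by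
  obtain ⟨A, hA⟩ := exists_cut_card_le_sum p q hdeg
  obtain ⟨C, hC⟩ := exists_grundyColoring (G \ G.between A Aᶜ)
  refine ⟨A, C, exists_le_degree_mem_Icc (fun v => sub_one_lt _) fun S T hST => ?_⟩
  refine (card_interedges_le_sum_add_sum hST hA (sum_coloring_le_card_edgesMeeting hC)).trans ?_
  gcongr with v _ v _
  all_goals
    have := hp v
    have := hq v
    simp only [targetDegree, hdeg]
    split_ifs <;> omega

end Target

section TotalColoring

variable [Fintype V] {G H : SimpleGraph V} {v : V}

lemma totalDeg_eq_degree_add [DecidableRel H.Adj] {k : ℕ} {cV : V → Fin k}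
    {cE : Sym2 V → Fin k} {i : Fin k}
    (h : ∀ u, H.Adj v u ↔ G.Adj v u ∧ cE s(v, u) = i) :
    totalDeg G cV cE i v = H.degree v + if cV v = i then 1 else 0 := by
  simp only [totalDeg, ← h, ← card_neighborFinset_eq_degree, neighborFinset_eq_filter]

lemma hasTLIR_two_of_degree_mem_Icc {s : V → ℤ} (hH : H ≤ G)
    (hs : ∀ v, (H.degree v : ℤ) ∈ Set.Icc (s v - 1) (s v))
    (hin : ∀ u v, H.Adj u v → s u ≠ s v)
    (hout : ∀ u v, (G \ H).Adj u v → G.degree u - s u ≠ G.degree v - s v) : HasTLIR G 2 := by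
  let cV (v : V) : Fin 2 := if (H.degree v : ℤ) = s v then 1 else 0
  let cE (e : Sym2 V) : Fin 2 := if e ∈ H.edgeSet then 0 else 1
  have hzero (v : V) : (totalDeg G cV cE 0 v : ℤ) = s v := by
    rw [totalDeg_eq_degree_add (H := H) fun u => by simpa [cE] using @hH v u]
    obtain ⟨hlo, hhi⟩ := hs v
    by_cases hv : (H.degree v : ℤ) = s v
    · simp [cV, hv]
    · simp only [cV, if_neg hv, if_true]
      omega
  have hone (v : V) : (totalDeg G cV cE 1 v : ℤ) = G.degree v - s v + 1 := by
    rw [totalDeg_eq_degree_add (H := G \ H) fun u => by simp [cE],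
      ← degree_sdiff_add_degree hH]
    obtain ⟨hlo, hhi⟩ := hs v
    by_cases hv : (H.degree v : ℤ) = s v
    · simp [cV, hv]
    · simp only [cV, if_neg hv, zero_ne_one, if_false]
      omega
  refine ⟨cV, cE, fun u v huv heq => ?_⟩
  rw [← Nat.cast_inj (R := ℤ)] at heq
  by_cases h : H.Adj u v
  · rw [show cE s(u, v) = 0 from if_pos h, hzero, hzero] at heq
    exact hin u v h heq
  · rw [show cE s(u, v) = 1 from if_neg h, hone, hone] at heq
    exact hout u v ⟨huv, h⟩ (add_right_cancel heq)

end TotalColoring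

/-- Every finite regular simple graph admits a locally irregular total
coloring with 2 colors, i.e. `tlir(G) ≤ 2`. -/
theorem stmt1 {V : Type*} [Fintype V] (G : SimpleGraph V) (d : ℕ)
    (hreg : G.IsRegularOfDegree d) : HasTLIR G 2 := by
  obtain ⟨A, C, H, hH, hdeg⟩ := exists_degree_mem_Icc_targetDegree G (p := fun _ => d / 2)
    (q := fun _ => d - d / 2) (fun v => by rw [hreg v]; ring) (fun _ => by omega) fun _ => by omega
  refine hasTLIR_two_of_degree_mem_Icc hH hdeg
    (fun u v huv => targetDegree_ne_of_adj (hH huv) rfl) fun u v huv => ?_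
  rw [hreg u, hreg v, Ne, sub_right_inj]
  exact targetDegree_ne_of_adj huv.1 rfl
end

section
/- If G is a finite cactus graph, then G admits a locally irregular total coloring with 2 colors, i.e., tlir(G) ≤ 2. -/
open Finset
open scoped Classical

variable {V : Type*}

/-- A cactus: a connected simple graph whose cycles are pairwise edge-disjoint,
i.e. any two cycles sharing an edge have the same edge set (equivalently, every
edge lies on at most one cycle). -/
def IsCactus {V : Type*} (G : SimpleGraph V) : Prop :=
  G.Connected ∧
    ∀ ⦃u w : V⦄ (p : G.Walk u u) (q : G.Walk w w),
      p.IsCycle → q.IsCycle → (∃ e, e ∈ p.edges ∧ e ∈ q.edges) →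
        (∀ e, e ∈ p.edges ↔ e ∈ q.edges)

/-!
Whatever the edge coloring, the vertex colors can be chosen so that the total degree of each vertex
`v` in color `0` has a prescribed parity `ρ v`; the total degree in color `1` then has the parity of
`ρ v + deg v + 1`. An edge whose ends have degrees of different parity is irregular as soon as its
color is `0` or `1` according to whether `ρ` changes along it. An edge whose ends have degrees of
the same parity is irregular in either color if `ρ` changes along it, so it would be enough that
these edges form a bipartite graph `D`.

They need not, but `D` can be corrected. In a breadth-first leveling of a graph with edge-disjoint
cycles, the horizontal edges, those within a level, form a matching, and the cycle through a
horizontal edge `ab` contains no other horizontal edge and goes from `a` and `b` to their parents. A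
cycle without horizontal edges is even. Hence `D` becomes bipartite once the horizontal edges `ab`
are removed for which the edge from `a` to its parent is in `D` as well; let `ρ` be a bipartition of
the rest. The colors of those two edges are still free, and some choice of them makes `ab`
irregular. Doing this from the highest level down to the lowest, a recoloring never disturbs the
horizontal edges that were treated before.
-/

/-- The cycles of `G` are pairwise edge-disjoint, that is, cycles sharing an edge have the same
edges: what remains of `IsCactus` when connectedness is dropped. -/
def HasEdgeDisjointCycles (G : SimpleGraph V) : Prop :=
  ∀ ⦃u w : V⦄ (p : G.Walk u u) (q : G.Walk w w),
    p.IsCycle → q.IsCycle → (∃ e, e ∈ p.edges ∧ e ∈ q.edges) →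
      ∀ e, e ∈ p.edges ↔ e ∈ q.edges

/-- The data produced by breadth-first searches from one root in each component of `G`: a level
function `l` and a parent function `p`. The parent of a root, a vertex of level `0`, is a junk
value. -/
structure IsLeveling (G : SimpleGraph V) (l : V → ℕ) (p : V → V) : Prop where
  eq_of_reachable : ∀ ⦃u v⦄, G.Reachable u v → l u = 0 → l v = 0 → u = v
  adj_parent : ∀ ⦃v⦄, l v ≠ 0 → G.Adj v (p v)
  level_parent : ∀ ⦃v⦄, l v ≠ 0 → l (p v) + 1 = l v
  level_le : ∀ ⦃u v⦄, G.Adj u v → l u ≤ l v + 1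

/-- The spanning subgraph of `G` whose edges join vertices on different levels. The remaining
edges of `G` are called horizontal. -/
def verticalGraph (G : SimpleGraph V) (l : V → ℕ) : SimpleGraph V where
  Adj u v := G.Adj u v ∧ l u ≠ l v
  symm := ⟨fun _ _ h => ⟨h.1.symm, h.2.symm⟩⟩
  loopless := ⟨fun _ h => h.2 rfl⟩

theorem verticalGraph_le (G : SimpleGraph V) (l : V → ℕ) : verticalGraph G l ≤ G :=
  fun _ _ h => h.1

theorem exists_adj_dist_add_one {G : SimpleGraph V} {r v : V} (h : G.dist r v ≠ 0) :
    ∃ w, G.Adj v w ∧ G.dist r w + 1 = G.dist r v := by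
  obtain ⟨q, hq⟩ := SimpleGraph.exists_walk_of_dist_ne_zero (SimpleGraph.dist_comm ▸ h)
  cases q with
  | nil => simp at h
  | @cons _ w _ hvw q =>
    have hwr : G.dist w r ≤ q.length := SimpleGraph.dist_le q
    have hdiff := hvw.diff_dist_adj (u := r)
    rw [SimpleGraph.Walk.length_cons] at hq
    rw [SimpleGraph.dist_comm] at hwr hq
    exact ⟨w, hvw, by omega⟩

theorem exists_isLeveling (G : SimpleGraph V) : ∃ l p, IsLeveling G l p := by
  let root (v : V) : V := Quot.out (G.connectedComponentMk v)
  have root_congr {u v : V} (h : G.Reachable u v) : root u = root v :=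
    congrArg Quot.out (SimpleGraph.ConnectedComponent.sound h)
  have reachable_root (v : V) : G.Reachable (root v) v :=
    SimpleGraph.ConnectedComponent.exact (Quot.out_eq (G.connectedComponentMk v))
  have exists_parent (v : V) : ∃ w, G.dist (root v) v ≠ 0 →
      G.Adj v w ∧ G.dist (root v) w + 1 = G.dist (root v) v := by
    by_cases h : G.dist (root v) v = 0
    · exact ⟨v, fun h' => absurd h h'⟩
    · obtain ⟨w, hw⟩ := exists_adj_dist_add_one h
      exact ⟨w, fun _ => hw⟩
  choose p hp using exists_parent
  refine ⟨fun v => G.dist (root v) v, p, fun u v huv hu hv => ?_, fun v hv => (hp v hv).1,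
    fun v hv => ?_, fun u v huv => ?_⟩
  · rw [(reachable_root _).dist_eq_zero_iff] at hu hv
    exact hu.symm.trans ((root_congr huv).trans hv)
  · simp only [root_congr (hp v hv).1.symm.reachable, (hp v hv).2]
  · simp only [root_congr huv.reachable]
    have := huv.diff_dist_adj (u := root v)
    omega

namespace IsLeveling

variable {G : SimpleGraph V} {l : V → ℕ} {p : V → V}

theorem level_ne_zero_of_horizontal (h : IsLeveling G l p) {a b : V} (hab : G.Adj a b)
    (hl : l a = l b) : l a ≠ 0 :=
  fun h0 => hab.ne (h.eq_of_reachable hab.reachable h0 (hl ▸ h0))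

theorem exists_vertical_path (h : IsLeveling G l p) (n : ℕ) :
    ∀ {a b : V}, l a = n → l b = n → G.Reachable a b →
      ∃ q : (verticalGraph G l).Walk a b, q.IsPath ∧ (∀ x ∈ q.support, l x ≤ n) ∧
        (a ≠ b → s(a, p a) ∈ q.edges ∧ s(b, p b) ∈ q.edges) := by
  induction n with
  | zero =>
    intro a b ha hb hab
    obtain rfl := h.eq_of_reachable hab ha hb
    exact ⟨.nil, by simp [ha]⟩
  | succ n ih =>
    intro a b ha hb hab
    by_cases heq : a = b
    · subst heq
      exact ⟨.nil, by simp [ha]⟩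
    have hpa := h.level_parent (v := a) (by omega)
    have hpb := h.level_parent (v := b) (by omega)
    have hadj_a := h.adj_parent (v := a) (by omega)
    have hadj_b := h.adj_parent (v := b) (by omega)
    obtain ⟨q, hq, hlevel, -⟩ := ih (by omega : l (p a) = n) (by omega : l (p b) = n)
      (hadj_a.symm.reachable.trans (hab.trans hadj_b.reachable))
    have ha_notMem : a ∉ q.support := fun hx => by have := hlevel a hx; omega
    have hb_notMem : b ∉ q.support := fun hx => by have := hlevel b hx; omega
    have hvert_a : (verticalGraph G l).Adj a (p a) := ⟨hadj_a, by omega⟩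
    have hvert_b : (verticalGraph G l).Adj (p b) b := ⟨hadj_b.symm, by omega⟩
    refine ⟨.cons hvert_a (q.concat hvert_b), ?_, ?_, fun _ => ?_⟩
    · rw [SimpleGraph.Walk.cons_isPath_iff, SimpleGraph.Walk.concat_isPath_iff]
      simp [hq, ha_notMem, hb_notMem, heq]
    · simp only [SimpleGraph.Walk.support_cons, SimpleGraph.Walk.support_concat, List.mem_cons,
        List.mem_append, List.not_mem_nil, or_false]
      rintro x (rfl | hx | rfl)
      · omega
      · exact (hlevel x hx).trans n.le_succ
      · omega
    · simp [SimpleGraph.Walk.edges_concat, Sym2.eq_swap]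

theorem even_length_iff (h : IsLeveling G l p) {u v : V} (q : (verticalGraph G l).Walk u v) :
    Even q.length ↔ (Even (l u) ↔ Even (l v)) := by
  induction q with
  | nil => simp
  | @cons u v w huv q ih =>
    have huv_le := h.level_le huv.1
    have hvu_le := h.level_le huv.1.symm
    have hne := huv.2
    rw [SimpleGraph.Walk.length_cons, Nat.even_add_one, ih]
    grind

theorem exists_cycle (h : IsLeveling G l p) {a b : V} (hab : G.Adj a b) (hl : l a = l b) :
    ∃ q : G.Walk b b, q.IsCycle ∧ Odd q.length ∧ s(a, b) ∈ q.edges ∧ s(a, p a) ∈ q.edges ∧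
      s(b, p b) ∈ q.edges ∧ ∀ x y, s(x, y) ∈ q.edges → l x = l y → s(x, y) = s(a, b) := by
  obtain ⟨q, hq, -, hparents⟩ := h.exists_vertical_path (l a) rfl hl.symm hab.reachable
  have hvert {x y : V} (hxy : s(x, y) ∈ q.edges) : l x ≠ l y := (q.adj_of_mem_edges hxy).2
  refine ⟨.cons hab.symm (q.mapLe (verticalGraph_le G l)), ?_, ?_, ?_⟩
  · rw [SimpleGraph.Walk.cons_isCycle_iff, SimpleGraph.Walk.isPath_mapLe,
      SimpleGraph.Walk.edges_mapLe_eq_edges]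
    exact ⟨hq, fun hmem => hvert hmem hl.symm⟩
  · rw [SimpleGraph.Walk.length_cons, SimpleGraph.Walk.length_mapLe]
    exact ((h.even_length_iff q).2 (by rw [hl])).add_one
  · simp only [SimpleGraph.Walk.edges_cons, SimpleGraph.Walk.edges_mapLe_eq_edges, List.mem_cons,
      Sym2.eq_swap (a := b) (b := a), true_or, true_and]
    exact ⟨.inr (hparents hab.ne).1, .inr (hparents hab.ne).2,
      fun x y hxy hlxy => hxy.resolve_right fun hmem => hvert hmem hlxy⟩

theorem colorable_verticalGraph (h : IsLeveling G l p) : (verticalGraph G l).Colorable 2 :=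
  SimpleGraph.two_colorable_iff_forall_loop_even.2 fun _ q => (h.even_length_iff q).2 Iff.rfl

theorem parent_mem_edges (h : IsLeveling G l p) (hG : HasEdgeDisjointCycles G) {a b : V}
    (hab : G.Adj a b) (hl : l a = l b) {u : V} {q : G.Walk u u} (hq : q.IsCycle)
    (hmem : s(a, b) ∈ q.edges) : s(a, p a) ∈ q.edges := by
  obtain ⟨q', hq', -, hmem', hparent, -⟩ := h.exists_cycle hab hl
  exact (hG q q' hq hq' ⟨_, hmem, hmem'⟩ _).2 hparent

theorem eq_of_horizontal (h : IsLeveling G l p) (hG : HasEdgeDisjointCycles G) {a b b' : V}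
    (hab : G.Adj a b) (hl : l a = l b) (hab' : G.Adj a b') (hl' : l a = l b') : b = b' := by
  obtain ⟨q, hq, -, -, hparent, -, hhor⟩ := h.exists_cycle hab hl
  obtain ⟨q', hq', -, hmem', hparent', -⟩ := h.exists_cycle hab' hl'
  have hmem : s(a, b') ∈ q.edges := (hG q q' hq hq' ⟨_, hparent, hparent'⟩ _).2 hmem'
  exact (Sym2.congr_right.1 (hhor a b' hmem hl')).symm

theorem horizontal_eq_or_disjoint (h : IsLeveling G l p) (hG : HasEdgeDisjointCycles G)
    {a b x y : V} (hab : G.Adj a b) (hl : l a = l b) (hxy : G.Adj x y) (hl' : l x = l y) :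
    s(x, y) = s(a, b) ∨ x ≠ a ∧ x ≠ b ∧ y ≠ a ∧ y ≠ b := by
  have meet {u v w : V} (huv : G.Adj u v) (hluv : l u = l v) (huw : G.Adj u w)
      (hluw : l u = l w) : s(u, w) = s(u, v) :=
    Sym2.congr_right.2 (h.eq_of_horizontal hG huw hluw huv hluv)
  by_cases hxa : x = a
  · subst hxa
    exact .inl (meet hab hl hxy hl')
  by_cases hxb : x = b
  · subst hxb
    exact .inl ((meet hab.symm hl.symm hxy hl').trans Sym2.eq_swap)
  by_cases hya : y = a
  · subst hya
    exact .inl (Sym2.eq_swap.trans (meet hab hl hxy.symm hl'.symm))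
  by_cases hyb : y = b
  · subst hyb
    exact .inl (Sym2.eq_swap.trans ((meet hab.symm hl.symm hxy.symm hl'.symm).trans Sym2.eq_swap))
  exact .inr ⟨hxa, hxb, hya, hyb⟩

end IsLeveling

theorem colorable_two_of_forall_isCycle_even {H : SimpleGraph V}
    (hH : ∀ (u : V) (q : H.Walk u u), q.IsCycle → Even q.length) : H.Colorable 2 := by
  obtain ⟨l, p, h⟩ := exists_isLeveling H
  refine h.colorable_verticalGraph.mono_left (SimpleGraph.le_iff_adj.2 fun u v huv => ?_)
  refine ⟨huv, fun hl => ?_⟩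
  obtain ⟨q, hq, hodd, -⟩ := h.exists_cycle huv hl
  exact Nat.not_even_iff_odd.2 hodd (hH v q hq)

/-- A horizontal edge `ab` of `D ≤ G` that can be made irregular by recoloring `ab` and the edge
from `a` to its parent, both of them edges of `D`. -/
def IsRepairable (D : SimpleGraph V) (l : V → ℕ) (p : V → V) (a b : V) : Prop :=
  D.Adj a b ∧ l a = l b ∧ D.Adj a (p a)

/-- The graph of the edges of `D` that are not repairable in either direction. -/
def unrepairableGraph (D : SimpleGraph V) (l : V → ℕ) (p : V → V) : SimpleGraph V where
  Adj u v := D.Adj u v ∧ ¬ IsRepairable D l p u v ∧ ¬ IsRepairable D l p v u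
  symm := ⟨fun _ _ h => ⟨h.1.symm, h.2.2, h.2.1⟩⟩
  loopless := ⟨fun _ h => D.irrefl h.1⟩

theorem unrepairableGraph_le (D : SimpleGraph V) (l : V → ℕ) (p : V → V) :
    unrepairableGraph D l p ≤ D :=
  fun _ _ h => h.1

theorem IsLeveling.colorable_unrepairableGraph {G D : SimpleGraph V} {l : V → ℕ} {p : V → V}
    (h : IsLeveling G l p) (hG : HasEdgeDisjointCycles G) (hD : D ≤ G) :
    (unrepairableGraph D l p).Colorable 2 := by
  refine colorable_two_of_forall_isCycle_even fun w q hq => ?_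
  have hle : unrepairableGraph D l p ≤ G := (unrepairableGraph_le D l p).trans hD
  have hvert : ∀ e ∈ q.edges, e ∈ (verticalGraph G l).edgeSet := by
    refine Sym2.ind fun a b hmem => ⟨hle (q.adj_of_mem_edges hmem), fun hl => ?_⟩
    have hab := q.adj_of_mem_edges hmem
    have hparent := h.parent_mem_edges hG (hle hab) hl (hq.mapLe hle)
      (by rwa [SimpleGraph.Walk.edges_mapLe_eq_edges])
    rw [SimpleGraph.Walk.edges_mapLe_eq_edges] at hparent
    exact hab.2.1 ⟨hab.1, hl, (q.adj_of_mem_edges hparent).1⟩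
  rw [← q.length_transfer hvert]
  exact (h.even_length_iff _).2 Iff.rfl

section Coloring

variable [Fintype V] (G : SimpleGraph V)

/-- The number of edges of color `i` at the vertex `v`. -/
noncomputable def colorDeg {k : ℕ} (c : Sym2 V → Fin k) (i : Fin k) (v : V) : ℕ :=
  #{u | G.Adj v u ∧ c s(v, u) = i}

theorem sum_colorDeg {k : ℕ} (c : Sym2 V → Fin k) (v : V) :
    ∑ i, colorDeg G c i v = G.degree v := by
  simp only [colorDeg, ← Finset.filter_filter]
  rw [← Finset.card_eq_sum_card_fiberwise fun _ _ => Finset.mem_coe.2 (mem_univ _),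
    ← SimpleGraph.card_neighborFinset_eq_degree, SimpleGraph.neighborFinset_eq_filter]

theorem totalDeg_eq_colorDeg_add {k : ℕ} (cV : V → Fin k) (c : Sym2 V → Fin k) (i : Fin k)
    (v : V) : totalDeg G cV c i v = colorDeg G c i v + if cV v = i then 1 else 0 :=
  rfl

theorem sum_totalDeg {k : ℕ} (cV : V → Fin k) (c : Sym2 V → Fin k) (v : V) :
    ∑ i, totalDeg G cV c i v = G.degree v + 1 := by
  rw [← sum_colorDeg G c v]
  simp only [totalDeg_eq_colorDeg_add, sum_add_distrib, sum_ite_eq, mem_univ, if_true]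

theorem colorDeg_congr {k : ℕ} {c c' : Sym2 V → Fin k} {v : V}
    (h : Set.EqOn c c' (G.incidenceSet v)) (i : Fin k) : colorDeg G c i v = colorDeg G c' i v := by
  refine congrArg card (filter_congr fun u _ => and_congr_right fun hvu => ?_)
  rw [h ((G.mem_incidenceSet v u).2 hvu)]

theorem colorDeg_update {k : ℕ} {v w : V} (hvw : G.Adj v w) (c : Sym2 V → Fin k) {i j : Fin k}
    (hij : i ≠ j) :
    colorDeg G (Function.update c s(v, w) i) i v =
      colorDeg G (Function.update c s(v, w) j) i v + 1 := by
  have hw : w ∉ ({u | G.Adj v u ∧ Function.update c s(v, w) j s(v, u) = i} : Finset V) := by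
    simp [hij.symm]
  rw [colorDeg, colorDeg, ← card_insert_of_notMem hw]
  congr 1
  ext u
  by_cases hu : u = w
  · simp [hu, hvw]
  · have hne : s(v, u) ≠ s(v, w) := fun h => hu (Sym2.congr_right.1 h)
    simp [hu, hne]

variable (ρ : V → Fin 2)

/-- The vertex coloring that completes the edge coloring `c` to a total coloring in which the
total degree of each vertex `v` in color `0` has the parity `ρ v`. -/
noncomputable def parityColoring (c : Sym2 V → Fin 2) (v : V) : Fin 2 :=
  if colorDeg G c 0 v % 2 = ρ v then 1 else 0

/-- The total degree of `v` in color `i` when `c` is completed by `parityColoring`. -/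
noncomputable def parityDeg (c : Sym2 V → Fin 2) (i : Fin 2) (v : V) : ℕ :=
  totalDeg G (parityColoring G ρ c) c i v

/-- The pair `uv` satisfies the condition of `IsTLIR` when `c` is completed by
`parityColoring`. -/
def IsIrregularAt (c : Sym2 V → Fin 2) (u v : V) : Prop :=
  parityDeg G ρ c (c s(u, v)) u ≠ parityDeg G ρ c (c s(u, v)) v

variable {G ρ}

theorem IsIrregularAt.symm {c : Sym2 V → Fin 2} {u v : V} (h : IsIrregularAt G ρ c u v) :
    IsIrregularAt G ρ c v u := by
  rw [IsIrregularAt, Sym2.eq_swap]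
  exact Ne.symm h

variable (G ρ)

theorem parityDeg_zero (c : Sym2 V → Fin 2) (v : V) :
    parityDeg G ρ c 0 v =
      colorDeg G c 0 v + if colorDeg G c 0 v % 2 = ρ v then 0 else 1 := by
  rw [parityDeg, totalDeg_eq_colorDeg_add, parityColoring]
  split_ifs <;> simp_all

theorem parityDeg_zero_mod_two (c : Sym2 V → Fin 2) (v : V) :
    parityDeg G ρ c 0 v % 2 = ρ v := by
  rw [parityDeg_zero]
  split_ifs <;> omega

theorem parityDeg_zero_add_one (c : Sym2 V → Fin 2) (v : V) :
    parityDeg G ρ c 0 v + parityDeg G ρ c 1 v = G.degree v + 1 := by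
  rw [← sum_totalDeg G (parityColoring G ρ c) c v, Fin.sum_univ_two, parityDeg, parityDeg]

variable {G ρ}

theorem isIrregularAt_of_degree_eq (c : Sym2 V → Fin 2) {u v : V}
    (hdeg : G.degree u % 2 = G.degree v % 2) (hρ : ρ u ≠ ρ v) : IsIrregularAt G ρ c u v := by
  have hu := parityDeg_zero_mod_two G ρ c u
  have hv := parityDeg_zero_mod_two G ρ c v
  have hu_add := parityDeg_zero_add_one G ρ c u
  have hv_add := parityDeg_zero_add_one G ρ c v
  unfold IsIrregularAt
  obtain hc | hc : c s(u, v) = 0 ∨ c s(u, v) = 1 := by omega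
  all_goals
    rw [hc]
    omega

/-- The edge coloring with color `0` on the edges along which `ρ` changes. -/
noncomputable def cutColoring (ρ : V → Fin 2) (e : Sym2 V) : Fin 2 :=
  if (e.map ρ).IsDiag then 1 else 0

theorem isIrregularAt_of_degree_ne {c : Sym2 V → Fin 2} {u v : V}
    (hdeg : G.degree u % 2 ≠ G.degree v % 2) (hc : c s(u, v) = cutColoring ρ s(u, v)) :
    IsIrregularAt G ρ c u v := by
  have hu := parityDeg_zero_mod_two G ρ c u
  have hv := parityDeg_zero_mod_two G ρ c v
  have hu_add := parityDeg_zero_add_one G ρ c u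
  have hv_add := parityDeg_zero_add_one G ρ c v
  simp only [IsIrregularAt, hc, cutColoring, Sym2.map_mk, Sym2.mk_isDiag_iff]
  split_ifs <;> omega

theorem parityDeg_congr {c c' : Sym2 V → Fin 2} {v : V} (h : Set.EqOn c c' (G.incidenceSet v))
    (i : Fin 2) : parityDeg G ρ c i v = parityDeg G ρ c' i v := by
  have hcolor : parityColoring G ρ c v = parityColoring G ρ c' v := by
    rw [parityColoring, parityColoring, colorDeg_congr G h]
  rw [parityDeg, parityDeg, totalDeg_eq_colorDeg_add, totalDeg_eq_colorDeg_add,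
    colorDeg_congr G h, hcolor]

theorem isIrregularAt_congr {c c' : Sym2 V → Fin 2} {u v : V} (huv : G.Adj u v)
    (hu : Set.EqOn c c' (G.incidenceSet u)) (hv : Set.EqOn c c' (G.incidenceSet v)) :
    IsIrregularAt G ρ c u v ↔ IsIrregularAt G ρ c' u v := by
  unfold IsIrregularAt
  rw [hu ((G.mem_incidenceSet u v).2 huv), parityDeg_congr hu, parityDeg_congr hv]

theorem exists_colorDeg_update_mod_two_eq {v w : V} (hvw : G.Adj v w) (c : Sym2 V → Fin 2)
    (r : Fin 2) :
    ∃ i, colorDeg G (Function.update c s(v, w) i) 0 v % 2 = r := by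
  have hstep := colorDeg_update G hvw c zero_ne_one
  by_cases h : colorDeg G (Function.update c s(v, w) 0) 0 v % 2 = r
  · exact ⟨0, h⟩
  · exact ⟨1, by omega⟩

theorem parityDeg_update_ne {v w : V} (hvw : G.Adj v w) {c : Sym2 V → Fin 2}
    (h : colorDeg G (Function.update c s(v, w) 1) 0 v % 2 = ρ v) (i : Fin 2) :
    parityDeg G ρ (Function.update c s(v, w) 0) i v ≠
      parityDeg G ρ (Function.update c s(v, w) 1) i v := by
  have hstep := colorDeg_update G hvw c zero_ne_one
  have hone := parityDeg_zero G ρ (Function.update c s(v, w) 1) v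
  have hzero := parityDeg_zero G ρ (Function.update c s(v, w) 0) v
  rw [if_pos h] at hone
  have hadd_one := parityDeg_zero_add_one G ρ (Function.update c s(v, w) 1) v
  have hadd_zero := parityDeg_zero_add_one G ρ (Function.update c s(v, w) 0) v
  obtain rfl | rfl : i = 0 ∨ i = 1 := by omega
  all_goals omega

-- The color of `ab` is chosen so that the color of `aa'` affects the total degrees of `a`; since
-- it does not affect those of `b`, one of its two values makes `ab` irregular.
theorem exists_recoloring {a b a' : V} (hab : G.Adj a b) (haa' : G.Adj a a') (hne : a' ≠ b)
    (c : Sym2 V → Fin 2) :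
    ∃ c' : Sym2 V → Fin 2,
      Set.EqOn c' c {s(a, b), s(a, a')}ᶜ ∧ IsIrregularAt G ρ c' a b := by
  have hedge : s(a, b) ≠ s(a, a') := fun h => hne (Sym2.congr_right.1 h).symm
  obtain ⟨i, hi⟩ :=
    exists_colorDeg_update_mod_two_eq hab (Function.update c s(a, a') 1) (ρ a)
  rw [Function.update_comm hedge.symm] at hi
  let c' (j : Fin 2) : Sym2 V → Fin 2 :=
    Function.update (Function.update c s(a, b) i) s(a, a') j
  have hcolor (j : Fin 2) : c' j s(a, b) = i := by simp [c', hedge]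
  have hc' (j : Fin 2) : Set.EqOn (c' j) c {s(a, b), s(a, a')}ᶜ := fun e he => by
    simp only [Set.mem_compl_iff, Set.mem_insert_iff, Set.mem_singleton_iff, not_or] at he
    simp [c', he]
  have hchange : parityDeg G ρ (c' 0) i a ≠ parityDeg G ρ (c' 1) i a :=
    parityDeg_update_ne haa' hi i
  have hfixed : parityDeg G ρ (c' 0) i b = parityDeg G ρ (c' 1) i b := by
    refine parityDeg_congr (fun e he => ?_) i
    have : e ≠ s(a, a') := by
      rintro rfl
      exact (Sym2.mem_iff.1 he.2).elim hab.ne' hne.symm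
    simp [c', this]
  by_contra! hcon
  have hzero := hcon (c' 0) (hc' 0)
  have hone := hcon (c' 1) (hc' 1)
  simp only [IsIrregularAt, hcolor, ne_eq, not_not] at hzero hone
  exact hchange (hzero.trans (hfixed.trans hone.symm))

end Coloring

namespace IsLeveling

variable [Fintype V] {G D : SimpleGraph V} {l : V → ℕ} {p : V → V} {ρ : V → Fin 2}

theorem exists_recoloring_of_isRepairable (h : IsLeveling G l p)
    (hG : HasEdgeDisjointCycles G) (hD : D ≤ G) {a b : V} (hab : IsRepairable D l p a b)
    (c : Sym2 V → Fin 2) :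
    ∃ c' : Sym2 V → Fin 2, Set.EqOn c' c D.edgeSetᶜ ∧ IsIrregularAt G ρ c' a b ∧
      ∀ x y, G.Adj x y → l x = l y → l a ≤ l x → IsIrregularAt G ρ c x y →
        IsIrregularAt G ρ c' x y := by
  obtain ⟨hadj, hl, hparent⟩ := hab
  have hpa := h.level_parent (h.level_ne_zero_of_horizontal (hD hadj) hl)
  obtain ⟨c', hc', hgood⟩ := exists_recoloring (ρ := ρ) (hD hadj) (hD hparent)
    (by rintro rfl; omega) c
  refine ⟨c', hc'.mono ?_, hgood, fun x y hxy hlxy hlx hirr => ?_⟩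
  · refine Set.compl_subset_compl.2 ?_
    rintro e (rfl | rfl)
    exacts [hadj, hparent]
  have agree (z : V) (hza : z ≠ a) (hzb : z ≠ b) (hlz : l a ≤ l z) :
      Set.EqOn c' c (G.incidenceSet z) := by
    have hzp : z ≠ p a := by rintro rfl; omega
    refine hc'.mono fun e he => ?_
    rintro (rfl | rfl)
    · exact (Sym2.mem_iff.1 he.2).elim hza hzb
    · exact (Sym2.mem_iff.1 he.2).elim hza hzp
  obtain heq | ⟨hxa, hxb, hya, hyb⟩ :=
    h.horizontal_eq_or_disjoint hG (hD hadj) hl hxy hlxy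
  · obtain ⟨rfl, rfl⟩ | ⟨rfl, rfl⟩ := Sym2.eq_iff.1 heq
    exacts [hgood, hgood.symm]
  · exact (isIrregularAt_congr hxy (agree x hxa hxb hlx)
      (agree y hya hyb (hlxy ▸ hlx))).2 hirr

theorem exists_recoloring_forall_isRepairable (h : IsLeveling G l p)
    (hG : HasEdgeDisjointCycles G) (hD : D ≤ G) (c : Sym2 V → Fin 2) :
    ∃ c' : Sym2 V → Fin 2, Set.EqOn c' c D.edgeSetᶜ ∧
      ∀ a b, IsRepairable D l p a b → IsIrregularAt G ρ c' a b := by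
  suffices key : ∀ S : Finset (V × V), (∀ q ∈ S, IsRepairable D l p q.1 q.2) →
      ∃ c' : Sym2 V → Fin 2, Set.EqOn c' c D.edgeSetᶜ ∧
        ∀ q ∈ S, IsIrregularAt G ρ c' q.1 q.2 by
    obtain ⟨c', hc', hgood⟩ := key {q | IsRepairable D l p q.1 q.2} (by simp)
    exact ⟨c', hc', fun a b hab => hgood (a, b) (by simpa using hab)⟩
  intro S
  induction S using Finset.induction_on_min_value (fun q : V × V => l q.1) with
  | empty => exact fun _ => ⟨c, Set.eqOn_refl c _, by simp⟩
  | insert q S _ hmin ih =>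
    intro hS
    obtain ⟨c₁, hc₁, hgood₁⟩ := ih fun q hq => hS q (mem_insert_of_mem hq)
    obtain ⟨c₂, hc₂, hq, hgood₂⟩ :=
      h.exists_recoloring_of_isRepairable (ρ := ρ) hG hD (hS q (mem_insert_self q S)) c₁
    refine ⟨c₂, hc₂.trans hc₁, fun q' hq' => ?_⟩
    obtain rfl | hmem := mem_insert.1 hq'
    · exact hq
    · exact hgood₂ _ _ (hD (hS q' hq').1) (hS q' hq').2.1 (hmin q' hmem) (hgood₁ q' hmem)

end IsLeveling

/-- The graph of the edges of `G` whose ends have degrees of the same parity. -/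
def sameParityGraph [Fintype V] (G : SimpleGraph V) : SimpleGraph V where
  Adj u v := G.Adj u v ∧ G.degree u % 2 = G.degree v % 2
  symm := ⟨fun _ _ h => ⟨h.1.symm, h.2.symm⟩⟩
  loopless := ⟨fun _ h => G.irrefl h.1⟩

theorem sameParityGraph_le [Fintype V] (G : SimpleGraph V) : sameParityGraph G ≤ G :=
  fun _ _ h => h.1

theorem stmt3_general {V : Type*} [Fintype V] (G : SimpleGraph V)
    (hG : HasEdgeDisjointCycles G) : HasTLIR G 2 := by
  obtain ⟨l, p, h⟩ := exists_isLeveling G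
  obtain ⟨ρ⟩ := h.colorable_unrepairableGraph hG (sameParityGraph_le G)
  obtain ⟨c, hc, hrepair⟩ :=
    h.exists_recoloring_forall_isRepairable (ρ := ρ) hG (sameParityGraph_le G) (cutColoring ρ)
  refine ⟨parityColoring G ρ c, c, fun u v huv => show IsIrregularAt G ρ c u v from ?_⟩
  by_cases hdeg : G.degree u % 2 = G.degree v % 2
  · by_cases hu : IsRepairable (sameParityGraph G) l p u v
    · exact hrepair u v hu
    by_cases hv : IsRepairable (sameParityGraph G) l p v u
    · exact (hrepair v u hv).symm
    exact isIrregularAt_of_degree_eq c hdeg (ρ.valid ⟨⟨huv, hdeg⟩, hu, hv⟩)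
  · exact isIrregularAt_of_degree_ne hdeg (hc fun hmem => hdeg hmem.2)

/-- Every finite cactus graph admits a locally irregular total coloring
with 2 colors, i.e. `tlir(G) ≤ 2`. -/
theorem stmt3 {V : Type*} [Fintype V] (G : SimpleGraph V) (hG : IsCactus G) :
    HasTLIR G 2 :=
  stmt3_general G hG.2
end

section
/- If G is a finite simple graph with maximum degree at most 3 (a subcubic graph), then G admits a locally irregular total coloring with 2 colors, i.e., tlir(G) ≤ 2. -/
open Finset
open scoped Classical

variable {V : Type*}

/-! Call color `1` red. If `p v` is the parity of the red total degree of `v`, then an edge whose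
ends have degrees of different parity is irregular as soon as it is red exactly when `p` separates
its ends, and an edge whose ends have degrees of the same parity is irregular in either color when
`p` separates its ends. Let `H` consist of the edges of the second kind and let `p` be a maximum cut
of `H`; as degrees are at most `3`, the uncut edges of `H` form a matching `M`, and the ends of an
edge of `M` have equal degrees.

The cut edges of `H` may be colored freely. We color them so that the red degrees of the ends of
each edge of `M`, counted outside `M`, have different parities; a vertex color can only round a red
degree up to the parity `p`, so one of the two colors of the edge then distinguishes its ends. This
is a linear system over the field with two elements. An obstruction to solving it is a set `J` of
edges of `M` such that the set `S` of their ends is closed under adjacency in the cut of `H`. By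
maximality of the cut every vertex of `S` lies on exactly two cut edges, hence on no edge outside
`H`, and the obstruction is that the number of edges of `J` is odd. But the two sides of the cut
contain equally many vertices of `S`; as each edge of `J` lies within one side, that common number
is even, and it equals the number of edges of `J`.
-/

/-- The spanning subgraph of the edges of `G` whose ends have the same label under `f`. -/
def monoGraph {α : Type*} (G : SimpleGraph V) (f : V → α) : SimpleGraph V where
  Adj u v := G.Adj u v ∧ f u = f v
  symm := ⟨fun _ _ h => ⟨h.1.symm, h.2.symm⟩⟩

/-- The cut of `G` given by the labelling `f`, as a spanning subgraph: the edges of `G` whose ends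
have different labels. -/
def cutGraph {α : Type*} (G : SimpleGraph V) (f : V → α) : SimpleGraph V where
  Adj u v := G.Adj u v ∧ f u ≠ f v
  symm := ⟨fun _ _ h => ⟨h.1.symm, h.2.symm⟩⟩

theorem monoGraph_adj {α : Type*} {G : SimpleGraph V} {f : V → α} {u v : V} :
    (monoGraph G f).Adj u v ↔ G.Adj u v ∧ f u = f v :=
  Iff.rfl

theorem monoGraph_le {α : Type*} (G : SimpleGraph V) (f : V → α) : monoGraph G f ≤ G :=
  fun _ _ h => h.1

theorem cutGraph_le {α : Type*} (G : SimpleGraph V) (f : V → α) : cutGraph G f ≤ G :=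
  fun _ _ h => h.1

theorem cutGraph_adj {α : Type*} {G : SimpleGraph V} {f : V → α} {u v : V} :
    (cutGraph G f).Adj u v ↔ G.Adj u v ∧ f u ≠ f v :=
  Iff.rfl

/-- The spanning subgraph of `G` formed by the edges at which the vector `x` over `ZMod 2` is `1`;
it identifies the vectors supported on the edges of `G` with the spanning subgraphs of `G`. -/
def selectEdges (G : SimpleGraph V) (x : Sym2 V → ZMod 2) : SimpleGraph V where
  Adj u v := G.Adj u v ∧ x s(u, v) = 1
  symm := ⟨fun u v h => ⟨h.1.symm, Sym2.eq_swap (a := u) (b := v) ▸ h.2⟩⟩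

theorem mem_edgeSet_selectEdges {G : SimpleGraph V} {x : Sym2 V → ZMod 2} {e : Sym2 V} :
    e ∈ (selectEdges G x).edgeSet ↔ e ∈ G.edgeSet ∧ x e = 1 := by
  induction e with | h u v => rfl

/-- The least natural number that is at least `n` and has parity `p`: the total degree in a color
of a vertex with `n` edges of that color, if its parity is prescribed to be `p`. -/
def parityCeil (p : ZMod 2) (n : ℕ) : ℕ :=
  if (n : ZMod 2) = p then n else n + 1

theorem zmod_two_ne_iff_eq_add_one {a b : ZMod 2} : a ≠ b ↔ a = b + 1 := by
  revert a b; decide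

theorem zmod_two_eq_ite (a : ZMod 2) : a = if a = 1 then 1 else 0 := by
  revert a; decide

section ParityCeil

theorem natCast_parityCeil (p : ZMod 2) (n : ℕ) : (parityCeil p n : ZMod 2) = p := by
  unfold parityCeil
  split_ifs with h
  · exact h
  · rw [Nat.cast_add_one, zmod_two_ne_iff_eq_add_one.1 (Ne.symm h)]

theorem parityCeil_eq_or (p : ZMod 2) (n : ℕ) : parityCeil p n = n ∨ parityCeil p n = n + 1 := by
  unfold parityCeil
  split_ifs <;> simp

theorem parityCeil_succ_ne {p : ZMod 2} {m n : ℕ} (hmn : Odd (m + n))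
    (h : parityCeil p m = parityCeil p n) : parityCeil p (m + 1) ≠ parityCeil p (n + 1) := by
  have hparity : (m : ZMod 2) ≠ n := by
    rw [Ne, ZMod.natCast_eq_natCast_iff']
    grind
  wlog hm : (m : ZMod 2) = p generalizing m n
  · have hn : (n : ZMod 2) = p := by
      rw [zmod_two_ne_iff_eq_add_one.1 hparity.symm, zmod_two_ne_iff_eq_add_one.1 (Ne.symm hm)]
    exact (this (add_comm m n ▸ hmn) h.symm hparity.symm hn).symm
  have hsucc : m = n + 1 := by simpa [parityCeil, hm, hm ▸ hparity.symm] using h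
  subst hsucc
  rw [parityCeil.eq_def p (n + 1), if_pos hm]
  rcases parityCeil_eq_or p (n + 1 + 1) with h | h <;> omega

end ParityCeil

section Coloring

variable [Fintype V] {G R : SimpleGraph V}

theorem totalDeg_zero_add_totalDeg_one (cV : V → Fin 2) (cE : Sym2 V → Fin 2) (v : V) :
    totalDeg G cV cE 0 v + totalDeg G cV cE 1 v = G.degree v + 1 := by
  have hedges := card_filter_add_card_filter_not (s := univ.filter (G.Adj v))
    (fun w => cE s(v, w) = 0)
  have hne_zero : ∀ a : Fin 2, ¬ a = 0 ↔ a = 1 := by decide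
  have hvertex : ((if cV v = 0 then 1 else 0) + if cV v = 1 then 1 else 0) = 1 := by
    generalize cV v = a
    revert a; decide
  rw [← G.card_neighborFinset_eq_degree, G.neighborFinset_eq_filter, ← hedges]
  simp only [totalDeg, filter_filter, hne_zero]
  omega

theorem hasTLIR_two_of_le (hR : R ≤ G) {t : V → ℕ}
    (ht : ∀ v, t v = R.degree v ∨ t v = R.degree v + 1) (hred : ∀ u v, R.Adj u v → t u ≠ t v)
    (hblue : ∀ u v, G.Adj u v → ¬ R.Adj u v → G.degree u + t v ≠ G.degree v + t u) :
    HasTLIR G 2 := by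
  let cV : V → Fin 2 := fun v => if t v = R.degree v then 0 else 1
  let cE : Sym2 V → Fin 2 := fun e => if e ∈ R.edgeSet then 1 else 0
  have htotal_one (v : V) : totalDeg G cV cE 1 v = t v := by
    have hnbrs : univ.filter (fun w => G.Adj v w ∧ cE s(v, w) = 1) = R.neighborFinset v := by
      ext w
      simpa [cE] using fun h => hR h
    rw [totalDeg, hnbrs, R.card_neighborFinset_eq_degree]
    rcases ht v with h | h <;> simp [cV, h]
  have htotal (v : V) := totalDeg_zero_add_totalDeg_one (G := G) cV cE v
  simp only [htotal_one] at htotal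
  refine ⟨cV, cE, fun u v huv => ?_⟩
  by_cases hRuv : R.Adj u v
  · rw [show cE s(u, v) = 1 from if_pos hRuv, htotal_one, htotal_one]
    exact hred u v hRuv
  · rw [show cE s(u, v) = 0 from if_neg hRuv]
    have := hblue u v huv hRuv
    have := htotal u
    have := htotal v
    omega

/-- The parity of the degree, as a labelling of the vertices. -/
noncomputable def degreeParity (G : SimpleGraph V) (v : V) : ZMod 2 :=
  G.degree v

-- `p` is the parity of the total degree in red, the color of the edges of `R`.
theorem hasTLIR_two_of_parity (hR : R ≤ G) (p : V → ZMod 2)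
    (hcut : ∀ u v, (cutGraph G (degreeParity G)).Adj u v → (R.Adj u v ↔ p u ≠ p v))
    (hmono : ∀ u v, (monoGraph (monoGraph G (degreeParity G)) p).Adj u v →
      G.degree u = G.degree v ∧ parityCeil (p u) (R.degree u) ≠ parityCeil (p u) (R.degree v)) :
    HasTLIR G 2 := by
  have hcast (v : V) : (parityCeil (p v) (R.degree v) : ZMod 2) = p v := natCast_parityCeil _ _
  refine hasTLIR_two_of_le hR (t := fun v => parityCeil (p v) (R.degree v))
    (fun v => parityCeil_eq_or _ _) (fun u v hRuv heq => ?_) (fun u v huv hRuv heq => ?_)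
  · have hp : p u = p v := by rw [← hcast u, ← hcast v, heq]
    by_cases hd : degreeParity G u = degreeParity G v
    · exact (hmono u v ⟨⟨hR hRuv, hd⟩, hp⟩).2 (hp ▸ heq)
    · exact (hcut u v ⟨hR hRuv, hd⟩).1 hRuv hp
  · have hcast_eq : degreeParity G u + p v = degreeParity G v + p u := by
      rw [← hcast u, ← hcast v, degreeParity, degreeParity]
      exact_mod_cast congrArg (Nat.cast : ℕ → ZMod 2) heq
    by_cases hp : p u = p v
    · rw [hp, add_left_inj] at hcast_eq
      obtain ⟨hdeg, hne⟩ := hmono u v ⟨⟨huv, hcast_eq⟩, hp⟩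
      have : parityCeil (p u) (R.degree u) = parityCeil (p v) (R.degree v) := by omega
      exact hne (hp ▸ this)
    · have hd : degreeParity G u ≠ degreeParity G v := fun hd => by
        rw [hd, add_right_inj] at hcast_eq
        exact hp hcast_eq.symm
      exact hRuv ((hcut u v ⟨huv, hd⟩).2 hp)

end Coloring

section Degree

variable [Fintype V] {G M N : SimpleGraph V}

theorem degree_sup_of_disjoint (h : Disjoint M N) (v : V) [Fintype ((M ⊔ N).neighborSet v)] :
    (M ⊔ N).degree v = M.degree v + N.degree v := by
  simp only [← SimpleGraph.card_neighborFinset_eq_degree, SimpleGraph.neighborFinset_sup]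
  exact card_union_of_disjoint (SimpleGraph.disjoint_neighborFinset_of_disjoint M N v h)

theorem degree_monoGraph_add_degree_cutGraph {α : Type*} (G : SimpleGraph V) (f : V → α) (v : V) :
    (monoGraph G f).degree v + (cutGraph G f).degree v = G.degree v := by
  have hdisj : Disjoint (monoGraph G f) (cutGraph G f) :=
    SimpleGraph.disjoint_left.2 fun _ _ hmono hcut => hcut.2 hmono.2
  rw [← degree_sup_of_disjoint hdisj]
  congr!
  ext u w
  simp only [SimpleGraph.sup_adj, monoGraph_adj, cutGraph_adj]
  tauto

theorem degree_eq_ite_adj (hN : N ≤ M) {u v : V} (hM : M.degree u ≤ 1) (huv : M.Adj u v) :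
    N.degree u = if N.Adj u v then 1 else 0 := by
  have huniq {w : V} (hw : N.Adj u w) : w = v :=
    card_le_one.1 hM w (by simpa using hN hw) v (by simpa using huv)
  rw [← N.card_neighborFinset_eq_degree]
  split_ifs with h
  · exact card_eq_one.2 ⟨v, by ext w; simpa using ⟨huniq, fun hw => hw ▸ h⟩⟩
  · exact card_eq_zero.2 <| eq_empty_of_forall_notMem fun w hw => by
      rw [SimpleGraph.mem_neighborFinset] at hw
      exact h (huniq hw ▸ hw)

theorem exists_le_parityCeil_degree_ne (hMN : Disjoint M N) (hM : ∀ v, M.degree v ≤ 1)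
    {p : V → ZMod 2} (hp : ∀ u v, M.Adj u v → p u = p v)
    (hodd : ∀ u v, M.Adj u v → Odd (N.degree u + N.degree v)) :
    ∃ R, N ≤ R ∧ R ≤ M ⊔ N ∧ ∀ u v, M.Adj u v →
      parityCeil (p u) (R.degree u) ≠ parityCeil (p u) (R.degree v) := by
  let M' : SimpleGraph V :=
    { Adj u v := M.Adj u v ∧ parityCeil (p u) (N.degree u) = parityCeil (p u) (N.degree v)
      symm := ⟨fun u v h => ⟨h.1.symm, hp u v h.1 ▸ h.2.symm⟩⟩ }
  have hM' : M' ≤ M := fun _ _ h => h.1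
  refine ⟨M' ⊔ N, le_sup_right, sup_le_sup_right hM' N, fun u v huv => ?_⟩
  rw [degree_sup_of_disjoint (hMN.mono_left hM'), degree_sup_of_disjoint (hMN.mono_left hM'),
    degree_eq_ite_adj hM' (hM u) huv, degree_eq_ite_adj hM' (hM v) huv.symm, M'.adj_comm v u]
  split_ifs with h
  · simpa only [add_comm 1] using parityCeil_succ_ne (hodd u v huv) h.2
  · simpa only [zero_add] using fun heq => h ⟨huv, heq⟩

end Degree

section MaxCut

variable [Fintype V] {H : SimpleGraph V} {p : V → ZMod 2}

theorem degree_cutGraph_add_single_self (H : SimpleGraph V) (p : V → ZMod 2) (v : V) :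
    (cutGraph H (p + Pi.single v 1)).degree v = (monoGraph H p).degree v := by
  simp only [← SimpleGraph.card_neighborFinset_eq_degree]
  congr 1
  ext w
  simp only [SimpleGraph.mem_neighborFinset, cutGraph_adj, monoGraph_adj]
  refine and_congr_right fun h => ?_
  have : ∀ a b : ZMod 2, a + 1 ≠ b ↔ a = b := by decide
  simp [h.ne', this]

theorem card_edgeFinset_cutGraph_add_single (H : SimpleGraph V) (p : V → ZMod 2) (v : V) :
    #(cutGraph H (p + Pi.single v 1)).edgeFinset + (cutGraph H p).degree v =
      #(cutGraph H p).edgeFinset + (monoGraph H p).degree v := by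
  have hdelete (q : V → ZMod 2) : #((cutGraph H q).deleteIncidenceSet v).edgeFinset +
      (cutGraph H q).degree v = #(cutGraph H q).edgeFinset := by
    rw [SimpleGraph.card_edgeFinset_deleteIncidenceSet]
    refine Nat.sub_add_cancel ?_
    rw [← SimpleGraph.card_incidenceFinset_eq_degree]
    exact card_le_card (SimpleGraph.incidenceFinset_subset _ _)
  have hoff : (cutGraph H (p + Pi.single v 1)).deleteIncidenceSet v =
      (cutGraph H p).deleteIncidenceSet v := by
    ext u w
    simp only [SimpleGraph.deleteIncidenceSet_adj, cutGraph_adj]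
    refine and_congr_left fun ⟨hu, hw⟩ => ?_
    simp [hu, hw]
  have hflip := hdelete (p + Pi.single v 1)
  rw [degree_cutGraph_add_single_self] at hflip
  rw [← hflip, ← hdelete p, add_right_comm]
  congr!

theorem degree_cutGraph_add_single_of_adj {u v : V} (huv : (cutGraph H p).Adj u v) :
    (cutGraph H (p + Pi.single v 1)).degree u + 1 = (cutGraph H p).degree u := by
  simp only [← SimpleGraph.card_neighborFinset_eq_degree]
  have herase : (cutGraph H (p + Pi.single v 1)).neighborFinset u =
      ((cutGraph H p).neighborFinset u).erase v := by
    ext w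
    simp only [SimpleGraph.mem_neighborFinset, mem_erase, cutGraph_adj]
    rcases eq_or_ne w v with rfl | hw
    · simp [huv.ne, zmod_two_ne_iff_eq_add_one.1 huv.2]
    · simp [huv.ne, hw]
  rw [herase]
  exact card_erase_add_one (by simpa using huv)

/-- `p` cuts the largest possible number of edges of `H`. -/
def IsMaxCut (H : SimpleGraph V) (p : V → ZMod 2) : Prop :=
  ∀ q : V → ZMod 2, #(cutGraph H q).edgeFinset ≤ #(cutGraph H p).edgeFinset

theorem exists_isMaxCut (H : SimpleGraph V) : ∃ p, IsMaxCut H p :=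
  Finite.exists_max fun p : V → ZMod 2 => #(cutGraph H p).edgeFinset

namespace IsMaxCut

theorem degree_monoGraph_le (hp : IsMaxCut H p) (v : V) :
    (monoGraph H p).degree v ≤ (cutGraph H p).degree v := by
  have := hp (p + Pi.single v 1)
  have := card_edgeFinset_cutGraph_add_single H p v
  omega

theorem two_mul_degree_monoGraph_le (hp : IsMaxCut H p) (v : V) :
    2 * (monoGraph H p).degree v ≤ H.degree v := by
  have := hp.degree_monoGraph_le v
  have := degree_monoGraph_add_degree_cutGraph H p v
  omega

theorem add_single (hp : IsMaxCut H p) {v : V}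
    (hv : (monoGraph H p).degree v = (cutGraph H p).degree v) :
    IsMaxCut H (p + Pi.single v 1) := fun q => by
  have := hp q
  have := card_edgeFinset_cutGraph_add_single H p v
  omega

theorem degree_monoGraph_add_two_le (hp : IsMaxCut H p) {u v : V} (huv : (cutGraph H p).Adj u v)
    (hv : (monoGraph H p).degree v = (cutGraph H p).degree v) :
    (monoGraph H p).degree u + 2 ≤ (cutGraph H p).degree u := by
  have := (hp.add_single hv).degree_monoGraph_le u
  have := degree_cutGraph_add_single_of_adj huv
  have := degree_monoGraph_add_degree_cutGraph H p u
  have := degree_monoGraph_add_degree_cutGraph H (p + Pi.single v 1) u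
  omega

end IsMaxCut

end MaxCut

section ParitySystem

open scoped Matrix

theorem exists_mulVec_eq_of_forall_dotProduct_eq_zero {m n K : Type*} [Fintype m] [Fintype n]
    [Field K] (A : Matrix m n K) (b : m → K) (h : ∀ l, l ᵥ* A = 0 → l ⬝ᵥ b = 0) :
    ∃ x, A *ᵥ x = b := by
  by_contra hb
  obtain ⟨φ, hφb, hφA⟩ :=
    Submodule.exists_le_ker_of_notMem (p := LinearMap.range A.mulVecLin) (v := b) hb
  obtain ⟨l, rfl⟩ := (dotProductEquiv K m).surjective φ
  refine hφb (h l (dotProduct_eq_zero _ fun x => ?_))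
  rw [← Matrix.dotProduct_mulVec]
  exact hφA ⟨x, rfl⟩

variable [Fintype V]

theorem vecMul_incMatrix_of_adj {R : Type*} [CommSemiring R] {G : SimpleGraph V} {u v : V}
    (huv : G.Adj u v) (g : V → R) : (g ᵥ* G.incMatrix R) s(u, v) = g u + g v := by
  have h (w : V) : g w * G.incMatrix R w s(u, v) = if w ∈ ({u, v} : Finset V) then g w else 0 := by
    simp [SimpleGraph.incMatrix_apply', SimpleGraph.mk'_mem_incidenceSet_iff, huv, eq_comm]
  simp only [Matrix.vecMul, dotProduct, h, sum_ite_mem, univ_inter]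
  exact sum_pair huv.ne

theorem natCast_degree_selectEdges (G : SimpleGraph V) (x : Sym2 V → ZMod 2) (v : V) :
    ((selectEdges G x).degree v : ZMod 2) = (G.incMatrix (ZMod 2) *ᵥ x) v := by
  rw [← SimpleGraph.sum_incMatrix_apply (G := selectEdges G x)]
  refine sum_congr rfl fun e _ => ?_
  rw [zmod_two_eq_ite (x e)]
  simp only [SimpleGraph.incMatrix_apply', SimpleGraph.incidenceSet, mem_edgeSet_selectEdges,
    Set.mem_sep_iff]
  split_ifs <;> grind

-- Reading a subgraph of `M` as a vector `l`, the condition on `J` says that `l` annihilates the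
-- columns of the linear system for `R`.
theorem exists_le_natCast_degree_add_degree_eq (M K : SimpleGraph V) (b : Sym2 V → ZMod 2)
    (hb : ∀ J ≤ M, (∀ u v, K.Adj u v → (J.degree u : ZMod 2) = J.degree v) →
      ∑ e ∈ J.edgeFinset, b e = 0) :
    ∃ R ≤ K, ∀ u v, M.Adj u v → (R.degree u + R.degree v : ZMod 2) = b s(u, v) := by
  let A := (M.incMatrix (ZMod 2))ᵀ * K.incMatrix (ZMod 2)
  obtain ⟨x, hx⟩ := exists_mulVec_eq_of_forall_dotProduct_eq_zero A
    (fun e => if e ∈ M.edgeSet then b e else 0) fun l hl => by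
      rw [← Matrix.vecMul_vecMul, Matrix.vecMul_transpose] at hl
      have hJ : ∑ e ∈ (selectEdges M l).edgeFinset, b e = 0 :=
        hb _ (fun _ _ h => h.1) fun u v huv => by
          rw [natCast_degree_selectEdges, natCast_degree_selectEdges, ← CharTwo.add_eq_zero,
            ← vecMul_incMatrix_of_adj huv, hl, Pi.zero_apply]
      have hJ_edges : (selectEdges M l).edgeFinset =
          univ.filter fun e => e ∈ M.edgeSet ∧ l e = 1 := by
        ext e
        simp [mem_edgeSet_selectEdges]
      refine Eq.trans ?_ hJ
      rw [hJ_edges, sum_filter, dotProduct]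
      refine sum_congr rfl fun e _ => ?_
      rw [zmod_two_eq_ite (l e)]
      grind
  refine ⟨selectEdges K x, fun _ _ h => h.1, fun u v huv => ?_⟩
  have hxe := congrFun hx s(u, v)
  rw [← Matrix.mulVec_mulVec, Matrix.mulVec_transpose, vecMul_incMatrix_of_adj huv,
    if_pos (M.mem_edgeSet.2 huv)] at hxe
  rw [natCast_degree_selectEdges, natCast_degree_selectEdges, hxe]

end ParitySystem

section Counting

variable [Fintype V] {J K : SimpleGraph V}

theorem sum_mul_degree_eq_of_isBipartiteWith {s t : Finset V} (hK : K.IsBipartiteWith s t)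
    {f : V → ℕ} (hf : ∀ u v, K.Adj u v → f u = f v) :
    ∑ u ∈ s, f u * K.degree u = ∑ v ∈ t, f v * K.degree v := by
  calc ∑ u ∈ s, f u * K.degree u = ∑ u ∈ s, ∑ _ ∈ t.bipartiteAbove K.Adj u, f u :=
        sum_congr rfl fun u hu => by
          rw [← SimpleGraph.isBipartiteWith_bipartiteAbove hK hu, sum_const, smul_eq_mul,
            SimpleGraph.card_neighborFinset_eq_degree, mul_comm]
    _ = ∑ v ∈ t, ∑ u ∈ s.bipartiteBelow K.Adj v, f u :=
        sum_sum_bipartiteAbove_eq_sum_sum_bipartiteBelow _ fun u _ => f u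
    _ = ∑ v ∈ t, ∑ _ ∈ s.bipartiteBelow K.Adj v, f v :=
        sum_congr rfl fun v _ => sum_congr rfl fun u hu => hf u v ((mem_bipartiteBelow _).1 hu).2
    _ = ∑ v ∈ t, f v * K.degree v :=
        sum_congr rfl fun v hv => by
          rw [← SimpleGraph.isBipartiteWith_bipartiteBelow hK hv, sum_const, smul_eq_mul,
            SimpleGraph.card_neighborFinset_eq_degree, mul_comm]

theorem even_sum_degree_of_forall_adj_mem {s : Finset V} (hs : ∀ u v, J.Adj u v → u ∈ s → v ∈ s) :
    Even (∑ u ∈ s, J.degree u) := by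
  have hinduce (u : (s : Set V)) : J.degree u = (J.induce (s : Set V)).degree u := by
    convert (SimpleGraph.degree_induce_of_neighborSet_subset fun v huv => hs u v huv u.2).symm
  rw [sum_subtype s (p := (· ∈ (s : Set V))) (fun _ => mem_coe.symm),
    sum_congr rfl fun u _ => hinduce u, SimpleGraph.sum_degrees_eq_twice_card_edges]
  exact even_two_mul _

theorem even_card_edgeFinset_of_le_monoGraph {H : SimpleGraph V} {p : V → ZMod 2} {k : ℕ}
    (hJ : J ≤ monoGraph H p) (hJK : ∀ u v, (cutGraph H p).Adj u v → J.degree u = J.degree v)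
    (hk : k ≠ 0) (hdeg : ∀ v, J.degree v ≠ 0 → (cutGraph H p).degree v = k) :
    Even #J.edgeFinset := by
  let side (i : ZMod 2) : Finset V := univ.filter fun v => p v = i
  have hbipartite : (cutGraph H p).IsBipartiteWith (side 0) (side 1) := by
    refine ⟨?_, fun u v huv => ?_⟩
    · simp only [side, coe_filter, mem_univ, true_and, Set.disjoint_left, Set.mem_ofPred_eq]
      exact fun v h0 h1 => zero_ne_one (h0.symm.trans h1)
    · have hne := huv.2
      simp only [side, coe_filter, mem_univ, true_and, Set.mem_ofPred_eq]
      generalize p u = a, p v = b at hne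
      revert a b; decide
  have hk_mul (v : V) : J.degree v * (cutGraph H p).degree v = J.degree v * k := by
    by_cases h : J.degree v = 0
    · rw [h, zero_mul, zero_mul]
    · rw [hdeg v h]
  have hbalanced : ∑ v ∈ side 0, J.degree v = ∑ v ∈ side 1, J.degree v := by
    have := sum_mul_degree_eq_of_isBipartiteWith hbipartite hJK
    simp only [hk_mul, ← sum_mul] at this
    exact Nat.eq_of_mul_eq_mul_right (Nat.pos_of_ne_zero hk) this
  have hsplit : ∑ v, J.degree v = ∑ v ∈ side 0, J.degree v + ∑ v ∈ side 1, J.degree v := by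
    have hside : side 1 = univ.filter fun v => ¬ p v = 0 :=
      filter_congr fun v _ => by rw [← Ne, zmod_two_ne_iff_eq_add_one, zero_add]
    rw [hside, sum_filter_add_sum_filter_not]
  have hcard : #J.edgeFinset = ∑ v ∈ side 0, J.degree v := by
    have := J.sum_degrees_eq_twice_card_edges
    omega
  rw [hcard]
  refine even_sum_degree_of_forall_adj_mem fun u v huv hu => ?_
  simp only [side, mem_filter, mem_univ, true_and] at hu ⊢
  rw [← (hJ huv).2, hu]

end Counting

section Subcubic

variable [Fintype V]

namespace IsMaxCut

variable {H J : SimpleGraph V} {p : V → ZMod 2}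

theorem degree_monoGraph_le_one (hp : IsMaxCut H p) (hH : ∀ v, H.degree v ≤ 3) (v : V) :
    (monoGraph H p).degree v ≤ 1 := by
  have := hp.two_mul_degree_monoGraph_le v
  have := hH v
  omega

theorem degree_cutGraph_eq_two_of_le (hp : IsMaxCut H p) (hH : ∀ v, H.degree v ≤ 3)
    (hJ : J ≤ monoGraph H p) (hJK : ∀ u v, (cutGraph H p).Adj u v → J.degree u = J.degree v) {v : V}
    (hv : J.degree v ≠ 0) : (cutGraph H p).degree v = 2 := by
  have hJ_le (w : V) : J.degree w ≤ (monoGraph H p).degree w := SimpleGraph.degree_le_of_le hJ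
  have hdeg (w : V) := degree_monoGraph_add_degree_cutGraph H p w
  have := hp.degree_monoGraph_le v
  have := hJ_le v
  have := hdeg v
  have := hH v
  by_contra hne
  obtain ⟨u, hvu⟩ := ((cutGraph H p).degree_pos_iff_exists_adj v).1 (by omega)
  have := hp.degree_monoGraph_add_two_le hvu.symm (by omega)
  have := hJK v u hvu
  have := hJ_le u
  have := hdeg u
  have := hH u
  omega

theorem even_card_edgeFinset_of_le (hp : IsMaxCut H p) (hH : ∀ v, H.degree v ≤ 3)
    (hJ : J ≤ monoGraph H p) (hJK : ∀ u v, (cutGraph H p).Adj u v → J.degree u = J.degree v) :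
    Even #J.edgeFinset :=
  even_card_edgeFinset_of_le_monoGraph hJ hJK two_ne_zero fun _ =>
    hp.degree_cutGraph_eq_two_of_le hH hJ hJK

theorem exists_le_odd_degree_add_degree (hp : IsMaxCut H p) (hH : ∀ v, H.degree v ≤ 3) {a : V → ℕ}
    (ha : ∀ v, H.degree v = 3 → a v = 0) :
    ∃ K ≤ cutGraph H p, ∀ u v, (monoGraph H p).Adj u v →
      Odd ((a u + K.degree u) + (a v + K.degree v)) := by
  let b : Sym2 V → ZMod 2 := Sym2.lift ⟨fun u v => 1 + (a u + a v), fun u v => by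
    simp only [add_comm (a u : ZMod 2)]⟩
  obtain ⟨K, hK, hKb⟩ := exists_le_natCast_degree_add_degree_eq (monoGraph H p) (cutGraph H p) b
    fun J hJ hparity => by
      have hJ_le (v : V) : J.degree v ≤ (monoGraph H p).degree v := SimpleGraph.degree_le_of_le hJ
      have hJ_le_one (v : V) : J.degree v ≤ 1 := (hJ_le v).trans (hp.degree_monoGraph_le_one hH v)
      have hJK (u v : V) (huv : (cutGraph H p).Adj u v) : J.degree u = J.degree v := by
        have := (ZMod.natCast_eq_natCast_iff' _ _ _).1 (hparity u v huv)
        have := hJ_le_one u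
        have := hJ_le_one v
        omega
      have ha_zero (v : V) (hv : J.degree v ≠ 0) : a v = 0 := ha v <| by
        have := degree_monoGraph_add_degree_cutGraph H p v
        have := hp.degree_cutGraph_eq_two_of_le hH hJ hJK hv
        have := hJ_le v
        have := hH v
        omega
      have hb_one (e : Sym2 V) (he : e ∈ J.edgeFinset) : b e = 1 := by
        induction e with | h u v =>
        rw [SimpleGraph.mem_edgeFinset, SimpleGraph.mem_edgeSet] at he
        simp [b, ha_zero u he.degree_pos_left.ne', ha_zero v he.degree_pos_right.ne']
      rw [sum_congr rfl hb_one, sum_const, nsmul_one, ZMod.natCast_eq_zero_iff_even]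
      exact hp.even_card_edgeFinset_of_le hH hJ hJK
  refine ⟨K, hK, fun u v huv => ?_⟩
  have hKuv : (K.degree u + K.degree v : ZMod 2) = 1 + (a u + a v) := hKb u v huv
  rw [← ZMod.natCast_eq_one_iff_odd, add_add_add_comm, Nat.cast_add, Nat.cast_add, Nat.cast_add,
    hKuv, add_left_comm, CharTwo.add_self_eq_zero, add_zero]

end IsMaxCut

variable {G : SimpleGraph V} {p : V → ZMod 2}

theorem degree_monoGraph_degreeParity_le_three (hG : ∀ v, G.degree v ≤ 3) (v : V) :
    (monoGraph G (degreeParity G)).degree v ≤ 3 :=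
  (SimpleGraph.degree_le_of_le (monoGraph_le G _)).trans (hG v)

theorem degree_eq_of_isMaxCut_of_adj (hG : ∀ v, G.degree v ≤ 3)
    (hp : IsMaxCut (monoGraph G (degreeParity G)) p) {u v : V}
    (huv : (monoGraph (monoGraph G (degreeParity G)) p).Adj u v) : G.degree u = G.degree v := by
  have htwo_le {w : V} (hw : 0 < (monoGraph (monoGraph G (degreeParity G)) p).degree w) :
      2 ≤ G.degree w := by
    have := hp.two_mul_degree_monoGraph_le w
    have := degree_monoGraph_add_degree_cutGraph G (degreeParity G) w
    omega
  have := htwo_le huv.degree_pos_left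
  have := htwo_le huv.degree_pos_right
  have := (ZMod.natCast_eq_natCast_iff' _ _ _).1 huv.1.2
  have := hG u
  have := hG v
  omega

theorem exists_le_odd_degree_add_degree_of_isMaxCut (hG : ∀ v, G.degree v ≤ 3)
    (hp : IsMaxCut (monoGraph G (degreeParity G)) p) :
    ∃ N ≤ cutGraph G p, cutGraph (cutGraph G (degreeParity G)) p ≤ N ∧
      ∀ u v, (monoGraph (monoGraph G (degreeParity G)) p).Adj u v →
        Odd (N.degree u + N.degree v) := by
  set H := monoGraph G (degreeParity G)
  set X := cutGraph G (degreeParity G)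
  have hH_add_X (v : V) : H.degree v + X.degree v = G.degree v :=
    degree_monoGraph_add_degree_cutGraph G _ v
  have hX_eq_zero (v : V) (hv : H.degree v = 3) : (cutGraph X p).degree v = 0 := by
    have : (cutGraph X p).degree v ≤ X.degree v := SimpleGraph.degree_le_of_le (cutGraph_le X p)
    have := hH_add_X v
    have := hG v
    omega
  obtain ⟨K, hK, hodd⟩ :=
    hp.exists_le_odd_degree_add_degree (degree_monoGraph_degreeParity_le_three hG) hX_eq_zero
  have hdisj : Disjoint (cutGraph X p) K :=
    SimpleGraph.disjoint_left.2 fun _ _ hX hKuv => hX.1.2 (hK hKuv).1.2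
  have hX_le : cutGraph X p ≤ cutGraph G p := fun _ _ h => ⟨h.1.1, h.2⟩
  have hK_le : K ≤ cutGraph G p := fun _ _ h => ⟨(hK h).1.1, (hK h).2⟩
  refine ⟨cutGraph X p ⊔ K, sup_le hX_le hK_le, le_sup_left, fun u v huv => ?_⟩
  rw [degree_sup_of_disjoint hdisj, degree_sup_of_disjoint hdisj]
  exact hodd u v huv

end Subcubic

/-- Every finite subcubic graph (every vertex has degree at most 3)
admits a locally irregular total coloring with 2 colors, i.e. `tlir(G) ≤ 2`. -/
theorem stmt4 {V : Type*} [Fintype V] (G : SimpleGraph V) [DecidableRel G.Adj]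
    (hsub : ∀ v, G.degree v ≤ 3) : HasTLIR G 2 := by
  obtain rfl : ‹DecidableRel G.Adj› = fun _ _ => Classical.propDecidable _ :=
    Subsingleton.elim _ _
  obtain ⟨p, hp⟩ := exists_isMaxCut (monoGraph G (degreeParity G))
  set M := monoGraph (monoGraph G (degreeParity G)) p
  have hM_le_one := hp.degree_monoGraph_le_one (degree_monoGraph_degreeParity_le_three hsub)
  obtain ⟨N, hN_le, hle_N, hodd⟩ := exists_le_odd_degree_add_degree_of_isMaxCut hsub hp
  have hdisj : Disjoint M N := SimpleGraph.disjoint_left.2 fun _ _ hM hN => (hN_le hN).2 hM.2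
  obtain ⟨R, hN_le_R, hR_le, hR⟩ :=
    exists_le_parityCeil_degree_ne hdisj hM_le_one (fun _ _ h => h.2) hodd
  have hRG : R ≤ G := fun _ _ h => (hR_le h).elim (fun hM => hM.1.1) fun hN => (hN_le hN).1
  refine hasTLIR_two_of_parity hRG p (fun u v huv => ⟨fun h => ?_, fun h => ?_⟩)
    fun u v huv => ⟨degree_eq_of_isMaxCut_of_adj hsub hp huv, hR u v huv⟩
  · exact (hR_le h).elim (fun hM => absurd hM.1.2 huv.2) fun hN => (hN_le hN).2
  · exact hN_le_R (hle_N ⟨huv, h⟩)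
end

section
/- If G is a finite simple graph with maximum degree exactly 5, then G admits a locally irregular total coloring with 7 colors, i.e., tlir(G) ≤ 7. -/
open Finset
open scoped Classical

variable {V : Type*}

/-!
Orient `G`, color its vertices properly, and give each edge the color of its tail. Along an arc
from `v` to `u`, the total degree of `v` in the color of `v` is its outdegree plus one, and that
of `u` is its number of in-neighbors with that color, so only these two numbers must be kept
apart.

If all degrees are at most `2d`, then by Hall's theorem there is an orientation with all indegrees
at most `d`. An arc whose tail has outdegree at least `d` is harmless, because its head has too few
in-neighbors. If the tail has outdegree less than `d`, we require that the other in-neighbors of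
the head avoid its color. The resulting conflict graph is degenerate because a vertex of outdegree
less than `d` has at most `d ^ 2` conflicts and the others conflict among themselves only along
edges of `G`. It can therefore be colored greedily with `max (2d) (d ^ 2) + 1` colors.

If some vertices have degree `2d + 1`, a maximal independent set of such vertices is removed and
afterwards given one extra color, with all its edges directed outwards. A vertex of this set has
more edges of the extra color, counting itself, than any neighbor has edges. Degree five is the
case `d = 2`, where six colors suffice.
-/

theorem totalDeg_comp_of_injective [Fintype V] (G : SimpleGraph V) {k l : ℕ} {φ : Fin k → Fin l}
    (hφ : φ.Injective) (cV : V → Fin k) (cE : Sym2 V → Fin k) (i : Fin k) (v : V) :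
    totalDeg G (φ ∘ cV) (φ ∘ cE) (φ i) v = totalDeg G cV cE i v := by
  simp only [totalDeg, Function.comp_apply, hφ.eq_iff]

theorem HasTLIR.mono [Fintype V] {G : SimpleGraph V} {k l : ℕ} (hkl : k ≤ l) (h : HasTLIR G k) :
    HasTLIR G l := by
  obtain ⟨cV, cE, hc⟩ := h
  refine ⟨Fin.castLE hkl ∘ cV, Fin.castLE hkl ∘ cE, fun u v huv => ?_⟩
  have hinj := Fin.castLE_injective hkl
  simpa only [Function.comp_apply, totalDeg_comp_of_injective G hinj] using hc u v huv

/-- A graph is `k`-degenerate if every nonempty finite set `S` of its vertices contains a vertex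
with at most `k` neighbors in `S`. -/
def IsDegenerate (G : SimpleGraph V) (k : ℕ) : Prop :=
  ∀ S : Finset V, S.Nonempty → ∃ v ∈ S, #{u ∈ S | G.Adj v u} ≤ k

theorem IsDegenerate.exists_pairwise_adj_ne {G : SimpleGraph V} {k : ℕ} (hG : IsDegenerate G k)
    (S : Finset V) :
    ∃ c : V → Fin (k + 1), (S : Set V).Pairwise fun u v => G.Adj u v → c u ≠ c v := by
  induction S using Finset.strongInduction with
  | H S ih =>
    rcases S.eq_empty_or_nonempty with rfl | hS
    · exact ⟨0, by simp⟩
    obtain ⟨v, hv, hdeg⟩ := hG S hS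
    obtain ⟨c, hc⟩ := ih (S.erase v) (erase_ssubset hv)
    obtain ⟨a, -, ha⟩ : ∃ a ∈ univ, a ∉ {u ∈ S | G.Adj v u}.image c :=
      exists_mem_notMem_of_card_lt_card
        ((card_image_le.trans hdeg).trans_lt (by simp only [card_univ, Fintype.card_fin]; lia))
    have hav : ∀ u ∈ S, G.Adj v u → c u ≠ a := fun u hu huv hua =>
      ha (mem_image.2 ⟨u, mem_filter.2 ⟨hu, huv⟩, hua⟩)
    refine ⟨Function.update c v a, fun u hu w hw huw hadj => ?_⟩
    rcases eq_or_ne u v with rfl | huv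
    · rw [Function.update_self, Function.update_of_ne huw.symm]
      exact (hav w hw hadj).symm
    rcases eq_or_ne w v with rfl | hwv
    · rw [Function.update_self, Function.update_of_ne huw]
      exact hav u hu hadj.symm
    · rw [Function.update_of_ne huv, Function.update_of_ne hwv]
      exact hc (mem_erase.2 ⟨huv, hu⟩) (mem_erase.2 ⟨hwv, hw⟩) huw hadj

theorem IsDegenerate.colorable [Finite V] {G : SimpleGraph V} {k : ℕ} (hG : IsDegenerate G k) :
    G.Colorable (k + 1) := by
  have := Fintype.ofFinite V
  obtain ⟨c, hc⟩ := hG.exists_pairwise_adj_ne univ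
  exact ⟨.mk c fun {u v} huv => hc (mem_univ u) (mem_univ v) huv.ne huv⟩

theorem exists_mem_card_fiber_le_of_card_le_mul {ι α : Type*} [Fintype ι] (t : ι → Finset α)
    (d : ℕ) (ht : ∀ s : Finset ι, #s ≤ d * #(s.biUnion t)) :
    ∃ f : ι → α, (∀ i, f i ∈ t i) ∧ ∀ a, #{i | f i = a} ≤ d := by
  -- Hall's theorem, applied after replacing each element of `α` by `d` copies.
  obtain ⟨g, hg, hgt⟩ :=
    (all_card_le_biUnion_card_iff_exists_injective fun i => t i ×ˢ (univ : Finset (Fin d))).1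
      fun s => by
        have hprod : (s.biUnion fun i => t i ×ˢ (univ : Finset (Fin d))) =
            s.biUnion t ×ˢ univ := by ext; simp
        simpa only [hprod, card_product, card_univ, Fintype.card_fin, mul_comm] using ht s
  refine ⟨fun i => (g i).1, fun i => (mem_product.1 (hgt i)).1, fun a => ?_⟩
  have hcopies : #{i | (g i).1 = a} ≤ #(univ : Finset (Fin d)) :=
    card_le_card_of_injOn (fun i => (g i).2) (fun _ _ => mem_univ _) fun i hi j hj hij =>
      hg (Prod.ext (((mem_filter.1 hi).2).trans (mem_filter.1 hj).2.symm) hij)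
  simpa only [card_univ, Fintype.card_fin] using hcopies

theorem card_le_mul_card_biUnion_toFinset [Fintype V] (G : SimpleGraph V) [DecidableRel G.Adj]
    {d : ℕ} (hG : G.maxDegree ≤ 2 * d) (F : Finset G.edgeSet) :
    #F ≤ d * #(F.biUnion fun e => (e : Sym2 V).toFinset) := by
  set W := F.biUnion fun e => (e : Sym2 V).toFinset
  have hcount : #F * 2 ≤ #W * (2 * d) := by
    refine card_mul_le_card_mul (fun (e : G.edgeSet) v => v ∈ (e : Sym2 V)) (fun e he => ?_)
      fun v _ => ?_
    · rw [← Sym2.card_toFinset_of_not_isDiag _ (G.not_isDiag_of_mem_edgeSet e.2)]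
      exact card_le_card fun v hv =>
        mem_filter.2 ⟨mem_biUnion.2 ⟨e, he, hv⟩, Sym2.mem_toFinset.1 hv⟩
    · refine le_trans ?_ ((G.degree_le_maxDegree v).trans hG)
      rw [← G.card_incidenceFinset_eq_degree]
      exact card_le_card_of_injOn Subtype.val
        (fun e he => (G.mem_incidenceFinset v e).2 ⟨e.2, (mem_filter.1 he).2⟩)
        Subtype.val_injective.injOn
  lia

/-- The set of vertices from which `D` has an arc to `v`. -/
noncomputable def inNeighborFinset [Fintype V] (D : Digraph V) (v : V) : Finset V :=
  {u | D.Adj u v}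

/-- The set of vertices to which `D` has an arc from `v`. -/
noncomputable def outNeighborFinset [Fintype V] (D : Digraph V) (v : V) : Finset V :=
  {u | D.Adj v u}

/-- `D` is an orientation of `G`: it consists of exactly one of the two arcs on each edge of
`G`. -/
structure IsOrientation (G : SimpleGraph V) (D : Digraph V) : Prop where
  adj_iff : ∀ u v, G.Adj u v ↔ D.Adj u v ∨ D.Adj v u
  asymm : ∀ u v, D.Adj u v → ¬ D.Adj v u

/-- The condition on a vertex coloring `c` of a digraph under which the edge coloring by the
colors of the tails is locally irregular: an arc from `v` to `u` compares the in-neighbors of `u`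
colored like `v` with the out-neighbors of `v`, the summand `1` accounting for the color of `v`
itself. -/
def IsTailIrregular [Fintype V] {α : Type*} [DecidableEq α] (D : Digraph V) (c : V → α) : Prop :=
  ∀ v u, D.Adj v u → #{w ∈ inNeighborFinset D u | c w = c v} ≠ #(outNeighborFinset D v) + 1

@[simp]
theorem mem_inNeighborFinset [Fintype V] {D : Digraph V} {u v : V} :
    u ∈ inNeighborFinset D v ↔ D.Adj u v := by
  simp [inNeighborFinset]

@[simp]
theorem mem_outNeighborFinset [Fintype V] {D : Digraph V} {u v : V} :
    u ∈ outNeighborFinset D v ↔ D.Adj v u := by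
  simp [outNeighborFinset]

theorem exists_isOrientation_card_inNeighborFinset_le [Fintype V] (G : SimpleGraph V)
    [DecidableRel G.Adj] {d : ℕ} (hG : G.maxDegree ≤ 2 * d) :
    ∃ D, IsOrientation G D ∧ ∀ v, #(inNeighborFinset D v) ≤ d := by
  obtain ⟨head, hhead, hfiber⟩ := exists_mem_card_fiber_le_of_card_le_mul
    (fun e : G.edgeSet => (e : Sym2 V).toFinset) d (card_le_mul_card_biUnion_toFinset G hG)
  refine ⟨⟨fun u v => ∃ e : G.edgeSet, s(u, v) = e ∧ head e = v⟩, ⟨fun u v => ?_, ?_⟩, fun v => ?_⟩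
  · constructor
    · intro huv
      have hmem := hhead ⟨s(u, v), huv⟩
      rw [Sym2.mem_toFinset, Sym2.mem_iff] at hmem
      exact hmem.symm.imp (fun h => ⟨⟨s(u, v), huv⟩, rfl, h⟩)
        fun h => ⟨⟨s(u, v), huv⟩, Sym2.eq_swap, h⟩
    · rintro (⟨e, he, -⟩ | ⟨e, he, -⟩)
      · exact G.mem_edgeSet.1 (he ▸ e.2)
      · exact (G.mem_edgeSet.1 (he ▸ e.2)).symm
  · rintro u v ⟨e, he, hev⟩ ⟨e', he', heu⟩
    obtain rfl : e = e' := Subtype.ext (he.symm.trans (Sym2.eq_swap.trans he'))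
    exact (G.mem_edgeSet.1 (he ▸ e.2)).ne (heu.symm.trans hev)
  · refine le_trans ?_ ((card_image_le (f := Subtype.val)).trans (hfiber v))
    refine card_le_card_of_injOn (fun u => s(u, v)) (fun u hu => ?_)
      fun u _ w _ huw => Sym2.congr_left.1 huw
    obtain ⟨e, he, hev⟩ := mem_inNeighborFinset.1 hu
    exact mem_image.2 ⟨e, mem_filter.2 ⟨mem_univ e, hev⟩, he.symm⟩

namespace IsOrientation

variable {G : SimpleGraph V} {D : Digraph V}

theorem adj (hD : IsOrientation G D) {u v : V} (huv : D.Adj u v) : G.Adj u v :=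
  (hD.adj_iff u v).2 (.inl huv)

theorem exists_tail_map (hD : IsOrientation G D) :
    ∃ tail : Sym2 V → V, ∀ u v, D.Adj u v → tail s(u, v) = u := by
  have hex : ∀ e : Sym2 V, ∃ t, ∀ u v, D.Adj u v → s(u, v) = e → t = u := by
    intro e
    induction e using Sym2.ind with
    | _ x y =>
      by_cases hxy : D.Adj x y
      · refine ⟨x, fun u v huv h => ?_⟩
        rcases Sym2.eq_iff.1 h with ⟨rfl, -⟩ | ⟨rfl, rfl⟩
        exacts [rfl, (hD.asymm _ _ huv hxy).elim]
      · refine ⟨y, fun u v huv h => ?_⟩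
        rcases Sym2.eq_iff.1 h with ⟨rfl, rfl⟩ | ⟨rfl, -⟩
        exacts [(hxy huv).elim, rfl]
  choose tail htail using hex
  exact ⟨tail, fun u v huv => htail _ u v huv rfl⟩

variable [Fintype V] {k : ℕ}

theorem totalDeg_tail (hD : IsOrientation G D) (c : G.Coloring (Fin k)) {cE : Sym2 V → Fin k}
    (hcE : ∀ u v, D.Adj u v → cE s(u, v) = c u) (v : V) :
    totalDeg G c cE (c v) v = #(outNeighborFinset D v) + 1 := by
  have hout : ({w | G.Adj v w ∧ cE s(v, w) = c v} : Finset V) = outNeighborFinset D v := by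
    ext w
    rw [mem_filter_univ, mem_outNeighborFinset]
    refine ⟨fun ⟨hvw, hcw⟩ => ((hD.adj_iff v w).1 hvw).resolve_right fun hwv => ?_,
      fun hvw => ⟨hD.adj hvw, hcE v w hvw⟩⟩
    rw [Sym2.eq_swap, hcE w v hwv] at hcw
    exact c.valid hvw hcw.symm
  rw [totalDeg, hout, if_pos rfl]

theorem totalDeg_head (hD : IsOrientation G D) (c : G.Coloring (Fin k)) {cE : Sym2 V → Fin k}
    (hcE : ∀ u v, D.Adj u v → cE s(u, v) = c u) {u v : V} (hvu : D.Adj v u) :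
    totalDeg G c cE (c v) u = #{w ∈ inNeighborFinset D u | c w = c v} := by
  have hcvu : c v ≠ c u := c.valid (hD.adj hvu)
  have hin : ({w | G.Adj u w ∧ cE s(u, w) = c v} : Finset V) =
      {w ∈ inNeighborFinset D u | c w = c v} := by
    ext w
    rw [mem_filter_univ, mem_filter, mem_inNeighborFinset, hD.adj_iff]
    constructor
    · rintro ⟨huw | hwu, hcw⟩
      · exact (hcvu (hcw.symm.trans (hcE u w huw))).elim
      · exact ⟨hwu, by rw [← hcw, Sym2.eq_swap, hcE w u hwu]⟩
    · rintro ⟨hwu, hcw⟩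
      exact ⟨.inr hwu, by rw [Sym2.eq_swap, hcE w u hwu, hcw]⟩
  rw [totalDeg, hin, if_neg hcvu.symm, add_zero]

theorem hasTLIR (hD : IsOrientation G D) (c : G.Coloring (Fin k)) (hc : IsTailIrregular D c) :
    HasTLIR G k := by
  obtain ⟨tail, htail⟩ := hD.exists_tail_map
  have hcE : ∀ u v, D.Adj u v → (c ∘ tail) s(u, v) = c u := fun u v huv =>
    congrArg c (htail u v huv)
  have harc : ∀ v u, D.Adj v u → totalDeg G c (c ∘ tail) ((c ∘ tail) s(v, u)) v ≠
      totalDeg G c (c ∘ tail) ((c ∘ tail) s(v, u)) u := fun v u hvu => by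
    rw [hcE v u hvu, hD.totalDeg_tail c hcE, hD.totalDeg_head c hcE hvu]
    exact (hc v u hvu).symm
  refine ⟨c, c ∘ tail, fun u v huv => ?_⟩
  rcases (hD.adj_iff u v).1 huv with h | h
  · exact harc u v h
  · rw [Sym2.eq_swap]
    exact (harc v u h).symm

end IsOrientation

section ConflictGraph

variable [Fintype V] {G : SimpleGraph V} {D : Digraph V} {d : ℕ}

/-- The graph whose proper colorings make an orientation `D` of `G` tail-irregular, when all
indegrees of `D` are at most `d`: besides the edges of `G`, it joins any two vertices that have a
common out-neighbor, provided one of them has outdegree less than `d`. -/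
def conflictGraph (G : SimpleGraph V) (D : Digraph V) (d : ℕ) : SimpleGraph V :=
  G ⊔ .fromRel fun u v => #(outNeighborFinset D u) < d ∧ ∃ w, D.Adj u w ∧ D.Adj v w

theorem card_conflictGraph_adj_le (hD : IsOrientation G D)
    (hin : ∀ v, #(inNeighborFinset D v) ≤ d) (v : V) :
    #{u | (conflictGraph G D d).Adj v u} ≤ (#(outNeighborFinset D v) + 1) * d := by
  have hsub : ({u | (conflictGraph G D d).Adj v u} : Finset V) ⊆ inNeighborFinset D v ∪
      (outNeighborFinset D v).biUnion fun w => insert w ((inNeighborFinset D w).erase v) := by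
    intro u hu
    simp only [mem_filter_univ, conflictGraph, SimpleGraph.sup_adj, SimpleGraph.fromRel_adj,
      hD.adj_iff] at hu
    simp only [mem_union, mem_biUnion, mem_insert, mem_erase, mem_inNeighborFinset,
      mem_outNeighborFinset]
    rcases hu with (hvu | huv) | ⟨hne, ⟨-, w, hvw, huw⟩ | ⟨-, w, huw, hvw⟩⟩
    · exact .inr ⟨u, hvu, .inl rfl⟩
    · exact .inl huv
    · exact .inr ⟨w, hvw, .inr ⟨hne.symm, huw⟩⟩
    · exact .inr ⟨w, hvw, .inr ⟨hne.symm, huw⟩⟩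
  have hout : ∀ w ∈ outNeighborFinset D v, #(insert w ((inNeighborFinset D w).erase v)) ≤ d :=
    fun w hw => calc
      _ ≤ #((inNeighborFinset D w).erase v) + 1 := card_insert_le _ _
      _ = #(inNeighborFinset D w) :=
        card_erase_add_one (mem_inNeighborFinset.2 (mem_outNeighborFinset.1 hw))
      _ ≤ d := hin w
  calc
    _ ≤ _ := card_le_card hsub
    _ ≤ d + #(outNeighborFinset D v) * d :=
      (card_union_le _ _).trans (add_le_add (hin v) (card_biUnion_le_card_mul _ _ _ hout))
    _ = _ := by ring

theorem isDegenerate_conflictGraph [DecidableRel G.Adj] (hG : G.maxDegree ≤ 2 * d)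
    (hD : IsOrientation G D) (hin : ∀ v, #(inNeighborFinset D v) ≤ d) :
    IsDegenerate (conflictGraph G D d) (max (2 * d) (d ^ 2)) := by
  intro S hS
  by_cases hlow : ∃ v ∈ S, #(outNeighborFinset D v) < d
  · obtain ⟨v, hv, hout⟩ := hlow
    refine ⟨v, hv, le_max_of_le_right ?_⟩
    calc
      _ ≤ #{u | (conflictGraph G D d).Adj v u} :=
        card_le_card (filter_subset_filter _ (subset_univ S))
      _ ≤ (#(outNeighborFinset D v) + 1) * d := card_conflictGraph_adj_le hD hin v
      _ ≤ d ^ 2 := by rw [sq]; exact Nat.mul_le_mul_right d hout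
  · push Not at hlow
    obtain ⟨v, hv⟩ := hS
    refine ⟨v, hv, le_max_of_le_left ?_⟩
    have hsub : {u ∈ S | (conflictGraph G D d).Adj v u} ⊆ G.neighborFinset v := fun u hu => by
      obtain ⟨huS, hvu⟩ := mem_filter.1 hu
      simpa [conflictGraph, (hlow u huS).not_gt, (hlow v hv).not_gt] using hvu
    exact (card_le_card hsub).trans ((G.degree_le_maxDegree v).trans hG)

theorem isTailIrregular_of_conflictGraph_adj_ne {α : Type*} [DecidableEq α]
    (hin : ∀ v, #(inNeighborFinset D v) ≤ d) (c : (conflictGraph G D d).Coloring α) :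
    IsTailIrregular D c := by
  intro v u hvu heq
  have hout_lt : #(outNeighborFinset D v) < d :=
    Nat.lt_of_succ_le (heq.ge.trans ((card_filter_le _ _).trans (hin u)))
  have hout_pos : 0 < #(outNeighborFinset D v) := card_pos.2 ⟨u, mem_outNeighborFinset.2 hvu⟩
  obtain ⟨w, hw, hwv⟩ := exists_mem_ne (heq ▸ Nat.lt_add_of_pos_left hout_pos) v
  obtain ⟨hwu, hcw⟩ := mem_filter.1 hw
  refine c.valid (v := v) (w := w) ?_ hcw.symm
  exact .inr ⟨hwv.symm, .inl ⟨hout_lt, u, hvu, mem_inNeighborFinset.1 hwu⟩⟩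

theorem exists_isOrientation_isTailIrregular (G : SimpleGraph V) [DecidableRel G.Adj]
    (hG : G.maxDegree ≤ 2 * d) :
    ∃ (D : Digraph V) (c : G.Coloring (Fin (max (2 * d) (d ^ 2) + 1))),
      IsOrientation G D ∧ IsTailIrregular D c := by
  obtain ⟨D, hD, hin⟩ := exists_isOrientation_card_inNeighborFinset_le G hG
  obtain ⟨c⟩ := (isDegenerate_conflictGraph hG hD hin).colorable
  exact ⟨D, c.comp (.ofLE le_sup_left), hD, isTailIrregular_of_conflictGraph_adj_ne hin c⟩

end ConflictGraph

section Sources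

variable {G : SimpleGraph V} {I : Set V}

theorem exists_isIndepSet_dominating [Finite V] (G : SimpleGraph V) (S : Set V) :
    ∃ I ⊆ S, G.IsIndepSet I ∧ ∀ v ∈ S, v ∉ I → ∃ u ∈ I, G.Adj v u := by
  obtain ⟨I, hI⟩ := (Set.toFinite {I | I ⊆ S ∧ G.IsIndepSet I}).exists_maximal
    ⟨∅, S.empty_subset, Set.pairwise_empty _⟩
  refine ⟨I, hI.prop.1, hI.prop.2, fun v hv hvI => ?_⟩
  by_contra! hdom
  have hinsert : G.IsIndepSet (insert v I) := hI.prop.2.insert fun u hu _ =>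
    ⟨hdom u hu, fun huv => hdom u hu huv.symm⟩
  exact hvI (hI.le_of_ge ⟨Set.insert_subset hv hI.prop.1, hinsert⟩ (Set.subset_insert v I)
    (Set.mem_insert v I))

/-- The subgraph of `G` obtained by deleting all edges that meet `I`; the vertices of `I` are kept
as isolated vertices so that the vertex type does not change. -/
def isolateVerts (G : SimpleGraph V) (I : Set V) : SimpleGraph V where
  Adj u v := G.Adj u v ∧ u ∉ I ∧ v ∉ I
  symm := ⟨fun _ _ h => ⟨h.1.symm, h.2.2, h.2.1⟩⟩
  loopless := ⟨fun _ h => G.irrefl h.1⟩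

theorem maxDegree_isolateVerts_le [Fintype V] [DecidableRel G.Adj] {k : ℕ}
    (hG : G.maxDegree ≤ k + 1)
    (hI : ∀ v, G.degree v = k + 1 → v ∉ I → ∃ u ∈ I, G.Adj v u) :
    (isolateVerts G I).maxDegree ≤ k := by
  refine SimpleGraph.maxDegree_le_of_forall_degree_le _ _ fun v => ?_
  have hsub : (isolateVerts G I).neighborFinset v ⊆ G.neighborFinset v := fun u hu => by
    rw [SimpleGraph.mem_neighborFinset] at hu ⊢
    exact hu.1
  by_cases hv : v ∈ I
  · have hempty : (isolateVerts G I).neighborFinset v = ∅ :=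
      eq_empty_of_forall_notMem fun u hu =>
        ((SimpleGraph.mem_neighborFinset _ _ _).1 hu).2.1 hv
    simp [← SimpleGraph.card_neighborFinset_eq_degree, hempty]
  rcases ((G.degree_le_maxDegree v).trans hG).lt_or_eq with hlt | heq
  · exact (card_le_card hsub).trans (Nat.le_of_lt_succ hlt)
  · obtain ⟨u, hu, hvu⟩ := hI v heq hv
    have hssub : (isolateVerts G I).neighborFinset v ⊂ G.neighborFinset v :=
      (ssubset_iff_of_subset hsub).2 ⟨u, (G.mem_neighborFinset v u).2 hvu, fun h =>
        ((SimpleGraph.mem_neighborFinset _ _ _).1 h).2.2 hu⟩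
    exact Nat.le_of_lt_succ ((card_lt_card hssub).trans_eq heq)

/-- The digraph obtained from `D` by adding all edges of `G` that meet `I`, directed away from
`I`. -/
def addSources (G : SimpleGraph V) (I : Set V) (D : Digraph V) : Digraph V where
  Adj u v := (u ∈ I ∧ G.Adj u v) ∨ D.Adj u v

/-- The proper coloring of `G` that gives the independent set `I` the new color `0` and shifts the
colors of the other vertices by one. -/
noncomputable def addColor {k : ℕ} (hI : G.IsIndepSet I) (c : (isolateVerts G I).Coloring (Fin k)) :
    G.Coloring (Fin (k + 1)) :=
  .mk (fun v => if v ∈ I then 0 else (c v).succ) fun {u v} huv => by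
    by_cases hu : u ∈ I <;> by_cases hv : v ∈ I
    · exact (hI hu hv huv.ne huv).elim
    · simp [hu, hv, (Fin.succ_ne_zero _).symm]
    · simp [hu, hv]
    · simpa [hu, hv] using c.valid (v := u) (w := v) ⟨huv, hu, hv⟩

theorem addColor_eq_addColor_iff {k : ℕ} (hI : G.IsIndepSet I)
    (c : (isolateVerts G I).Coloring (Fin k)) {v w : V} (hv : v ∉ I) :
    addColor hI c w = addColor hI c v ↔ w ∉ I ∧ c w = c v := by
  change (if w ∈ I then 0 else (c w).succ) = (if v ∈ I then 0 else (c v).succ) ↔ _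
  by_cases hw : w ∈ I
  · simp [hv, hw, (Fin.succ_ne_zero _).symm]
  · simp [hv, hw]

variable {D : Digraph V}

theorem isOrientation_addSources (hI : G.IsIndepSet I)
    (hD : IsOrientation (isolateVerts G I) D) :
    IsOrientation G (addSources G I D) where
  adj_iff u v := by
    have hiso : G.Adj u v ∧ u ∉ I ∧ v ∉ I ↔ D.Adj u v ∨ D.Adj v u := hD.adj_iff u v
    change G.Adj u v ↔ ((u ∈ I ∧ G.Adj u v) ∨ D.Adj u v) ∨ ((v ∈ I ∧ G.Adj v u) ∨ D.Adj v u)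
    rw [G.adj_comm v u]
    tauto
  asymm u v := by
    rintro (⟨hu, huv⟩ | huv) (⟨hv, -⟩ | hvu)
    · exact hI hu hv huv.ne huv
    · exact (hD.adj hvu).2.2 hu
    · exact (hD.adj huv).2.2 hv
    · exact hD.asymm u v huv hvu

theorem isTailIrregular_addSources [Fintype V] [DecidableRel G.Adj] {k : ℕ}
    {c : (isolateVerts G I).Coloring (Fin k)} (hI : G.IsIndepSet I)
    (hD : IsOrientation (isolateVerts G I) D) (hc : IsTailIrregular D c)
    (hdeg : ∀ v ∈ I, ∀ u, G.Adj v u → G.degree u ≤ G.degree v) :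
    IsTailIrregular (addSources G I D) (addColor hI c) := by
  have hA := isOrientation_addSources hI hD
  intro v u hvu
  by_cases hv : v ∈ I
  · have hout : G.neighborFinset v ⊆ outNeighborFinset (addSources G I D) v := fun w hw =>
      mem_outNeighborFinset.2 (.inl ⟨hv, (G.mem_neighborFinset v w).1 hw⟩)
    have hin : inNeighborFinset (addSources G I D) u ⊆ G.neighborFinset u := fun w hw =>
      (G.mem_neighborFinset u w).2 (hA.adj (mem_inNeighborFinset.1 hw)).symm
    refine (Nat.lt_succ_of_le ?_).ne
    calc
      _ ≤ #(inNeighborFinset (addSources G I D) u) := card_filter_le _ _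
      _ ≤ G.degree u := card_le_card hin
      _ ≤ G.degree v := hdeg v hv u (hA.adj hvu)
      _ ≤ _ := card_le_card hout
  · have hvu' : D.Adj v u := hvu.resolve_left fun h => hv h.1
    have hout : outNeighborFinset (addSources G I D) v = outNeighborFinset D v := by
      ext w
      simp [addSources, hv]
    have hin : {w ∈ inNeighborFinset (addSources G I D) u | addColor hI c w = addColor hI c v} =
        {w ∈ inNeighborFinset D u | c w = c v} := by
      ext w
      rw [mem_filter, mem_filter, mem_inNeighborFinset, mem_inNeighborFinset,
        addColor_eq_addColor_iff hI c hv]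
      exact ⟨fun ⟨hwu, hw, hcw⟩ => ⟨hwu.resolve_left fun h => hw h.1, hcw⟩,
        fun ⟨hwu, hcw⟩ => ⟨.inr hwu, (hD.adj hwu).2.1, hcw⟩⟩
    rw [hout, hin]
    exact hc v u hvu'

end Sources

theorem stmt11_general [Fintype V] (G : SimpleGraph V) [DecidableRel G.Adj] {d : ℕ}
    (hG : G.maxDegree ≤ 2 * d + 1) : HasTLIR G (max (2 * d) (d ^ 2) + 2) := by
  obtain ⟨I, hIS, hI, hdom⟩ := exists_isIndepSet_dominating G {v | G.degree v = 2 * d + 1}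
  obtain ⟨D, c, hD, hc⟩ := exists_isOrientation_isTailIrregular _
    (maxDegree_isolateVerts_le hG hdom)
  have hdeg : ∀ v ∈ I, ∀ u, G.Adj v u → G.degree u ≤ G.degree v := fun v hv u _ =>
    ((G.degree_le_maxDegree u).trans hG).trans (hIS hv).ge
  exact (isOrientation_addSources hI hD).hasTLIR _ (isTailIrregular_addSources hI hD hc hdeg)

/-- Every finite simple graph with maximum degree exactly 5 admits a
locally irregular total coloring with 7 colors, i.e. `tlir(G) ≤ 7`. -/
theorem stmt11 {V : Type*} [Fintype V] (G : SimpleGraph V) [DecidableRel G.Adj]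
    (hmax : G.maxDegree = 5) : HasTLIR G 7 :=
  (stmt11_general G (d := 2) hmax.le).mono (by norm_num)
end

section
/- For every finite simple graph G, the locally irregular total chromatic index satisfies tlir(G) ≤ 220. -/
open Finset
open scoped Classical

variable {V : Type*}

/-!
Partition the vertices into 13 classes with as few edges inside classes as possible, and put a
regular tournament on the classes. A vertex has at least six times as many neighbors in the six
classes dominated by its own, its reservoir, as in its own class. So each class, together with some
edges to its reservoir, becomes a locally irregular graph: the vertices of the class get even
degrees chosen by greedy list coloring, and a parity argument over `ZMod 2` makes the degrees in
the reservoir odd or zero. Removing these 13 graphs leaves a 13-colorable graph, a union of four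
bipartite graphs. In a bipartite graph, deleting at most one vertex per component and a subforest
makes the degrees odd on one side and even on the other; what is deleted falls into three star
forests, and a star forest is locally irregular up to a matching. This takes 16 more graphs and
leaves a graph of maximum degree 12, which is cut greedily into paths with two edges, up to a
matching; 37 classes suffice to keep the paths of each class disjoint. The final matching has a
color of its own, given also to one end of each of its edges, and one more color serves the other
vertices.
-/

namespace TLIR

-- Gives the degree of `G ⊔ H` or `G \ H` the same instance as the degree of a graph variable.
noncomputable local instance (priority := 10000) adjDecidable (G : SimpleGraph V) :
    DecidableRel G.Adj :=
  Classical.decRel _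

section Span

variable {R κ : Type*} [Ring R]

theorem single_sub_single_mem_of_reachable {G : SimpleGraph V} {S : Submodule R (V → R)}
    (hS : ∀ u v, G.Adj u v → (Pi.single u 1 - Pi.single v 1 : V → R) ∈ S) {u v : V}
    (h : G.Reachable u v) : (Pi.single u 1 - Pi.single v 1 : V → R) ∈ S := by
  obtain ⟨p⟩ := h
  induction p with
  | nil => simp
  | cons hadj _ ih => simpa using S.add_mem (hS _ _ hadj) ih

theorem mem_of_sum_fiber_eq_zero [Fintype V] (π : V → κ) {S : Submodule R (V → R)} {τ : V → R}
    (hS : ∀ u v, τ u ≠ 0 → τ v ≠ 0 → π u = π v → (Pi.single u 1 - Pi.single v 1 : V → R) ∈ S)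
    (hτ : ∀ k, ∑ v with π v = k, τ v = 0) : τ ∈ S := by
  have fiber_mem (k : κ) : ∑ v with π v = k, Pi.single v (τ v) ∈ S := by
    by_cases hk : ∃ w, π w = k ∧ τ w ≠ 0
    · obtain ⟨w, rfl, hw⟩ := hk
      have hsum : ∑ v with π v = π w, Pi.single v (τ v) =
          ∑ v with π v = π w, τ v • (Pi.single v 1 - Pi.single w 1 : V → R) := by
        simp_rw [smul_sub, sum_sub_distrib, ← sum_smul, hτ, zero_smul, sub_zero,
          ← Pi.single_smul', smul_eq_mul, mul_one]
      rw [hsum]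
      refine S.sum_mem fun v hv => ?_
      by_cases h0 : τ v = 0
      · simp [h0]
      · exact S.smul_mem _ (hS v w h0 hw (mem_filter.1 hv).2)
    · push Not at hk
      rw [sum_eq_zero fun v hv => by rw [hk v (mem_filter.1 hv).2, Pi.single_zero]]
      exact S.zero_mem
  have hτsum : ∑ k ∈ univ.image π, ∑ v with π v = k, Pi.single v (τ v) = τ := by
    rw [sum_fiberwise_of_maps_to fun v _ => mem_image_of_mem π (mem_univ v)]
    exact univ_sum_single τ
  rw [← hτsum]
  exact S.sum_mem fun k _ => fiber_mem k

end Span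

/-- The span over `ZMod 2` of the vectors `1_u + 1_v` for the edges `uv` of `G`. These are the
prescriptions of degree parities that can be realized inside `G`. -/
noncomputable def paritySpan (G : SimpleGraph V) : Submodule (ZMod 2) (V → ZMod 2) :=
  .span _ {x | ∃ u v, G.Adj u v ∧ x = Pi.single u 1 - Pi.single v 1}

theorem single_sub_single_mem_paritySpan {G : SimpleGraph V} {u v : V} (h : G.Reachable u v) :
    Pi.single u 1 - Pi.single v 1 ∈ paritySpan G := by
  refine single_sub_single_mem_of_reachable (fun u v huv => ?_) h
  exact Submodule.subset_span ⟨u, v, huv, rfl⟩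

theorem zmod_two_eq_zero_or_one (a : ZMod 2) : a = 0 ∨ a = 1 :=
  (Fin.forall_fin_two (p := fun a => a = 0 ∨ a = 1)).2 ⟨.inl rfl, .inr rfl⟩ a

section Degree

variable [Fintype V] {G H : SimpleGraph V}

theorem cast_degree (R : Type*) [AddCommMonoidWithOne R] (v : V) :
    (G.degree v : R) = ∑ u, if G.Adj v u then 1 else 0 := by
  rw [sum_boole, ← G.card_neighborFinset_eq_degree]
  congr 2
  ext
  simp

theorem cast_degree_symmDiff (v : V) :
    ((symmDiff G H).degree v : ZMod 2) = G.degree v + H.degree v := by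
  simp only [cast_degree, ← sum_add_distrib]
  refine sum_congr rfl fun u _ => ?_
  by_cases hG : G.Adj v u <;> by_cases hH : H.Adj v u <;> simp [symmDiff, hG, hH]
  rfl

theorem cast_degree_edge {u v : V} (huv : u ≠ v) (w : V) :
    ((SimpleGraph.edge u v).degree w : ZMod 2) =
      (Pi.single u 1 - Pi.single v 1 : V → ZMod 2) w := by
  have adj_iff (x : V) : (SimpleGraph.edge u v).Adj w x ↔ w = u ∧ x = v ∨ w = v ∧ x = u := by
    rw [SimpleGraph.edge_adj]
    grind
  simp only [cast_degree, adj_iff, Pi.sub_apply, CharTwo.sub_eq_add]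
  obtain rfl | hu := eq_or_ne w u
  · simp [huv]
  · obtain rfl | hv := eq_or_ne w v <;> simp [*]

theorem exists_le_degree_eq_of_mem_paritySpan {x : V → ZMod 2}
    (hx : x ∈ paritySpan G) : ∃ F ≤ G, ∀ v, (F.degree v : ZMod 2) = x v := by
  induction hx using Submodule.span_induction with
  | mem x hx =>
    obtain ⟨u, v, huv, rfl⟩ := hx
    exact ⟨.edge u v, (SimpleGraph.edge_le_iff G).2 (.inr huv), cast_degree_edge huv.ne⟩
  | zero => exact ⟨⊥, bot_le, by simp⟩
  | add x y _ _ ihx ihy =>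
    obtain ⟨F, hF, hFx⟩ := ihx
    obtain ⟨F', hF', hFy⟩ := ihy
    exact ⟨symmDiff F F', symmDiff_le_sup.trans (sup_le hF hF'), fun v => by
      rw [cast_degree_symmDiff, hFx, hFy, Pi.add_apply]⟩
  | smul a x _ ih =>
    obtain rfl | rfl := zmod_two_eq_zero_or_one a
    · exact ⟨⊥, bot_le, by simp⟩
    · simpa using ih

end Degree

theorem sum_single_update {ι R : Type*} [Fintype ι] [Ring R] (σ : ι → V) (i : ι) (w : V) :
    ∑ j, Pi.single (Function.update σ i w j) 1 =
      ∑ j, Pi.single (σ j) 1 + (Pi.single w 1 - Pi.single (σ i) 1 : V → R) := by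
  have hrest : ∑ j ∈ univ.erase i, Pi.single (Function.update σ i w j) 1 =
      ∑ j ∈ univ.erase i, (Pi.single (σ j) 1 : V → R) :=
    sum_congr rfl fun j hj => by rw [Function.update_of_ne (ne_of_mem_erase hj)]
  rw [← add_sum_erase _ _ (mem_univ i), ← add_sum_erase univ _ (mem_univ i), hrest,
    Function.update_self]
  abel

theorem exists_choice_sum_eq_of_mem_paritySpan {ι : Type*} [Fintype ι] {e : ι → Sym2 V} {I : Set ι}
    {x : V → ZMod 2} (hx : x ∈ paritySpan (.fromEdgeSet (e '' I))) (σ : ι → V)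
    (hσ : ∀ i, σ i ∈ e i) :
    ∃ σ' : ι → V, (∀ i, σ' i ∈ e i) ∧ (∀ i ∉ I, σ' i = σ i) ∧
      ∑ i, Pi.single (σ' i) 1 = ∑ i, Pi.single (σ i) 1 + x := by
  induction hx using Submodule.span_induction generalizing σ with
  | mem x hx =>
    obtain ⟨u, v, huv, rfl⟩ := hx
    obtain ⟨⟨i, hi, heq⟩, hne⟩ := (SimpleGraph.fromEdgeSet_adj _).1 huv
    obtain ⟨w, hw⟩ := Sym2.mem_iff_exists.1 (hσ i)
    have hx : (Pi.single u 1 - Pi.single v 1 : V → ZMod 2) =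
        Pi.single w 1 - Pi.single (σ i) 1 := by
      obtain ⟨rfl, rfl⟩ | ⟨rfl, rfl⟩ := Sym2.eq_iff.1 (heq.symm.trans hw)
      · rw [← neg_sub, ZModModule.neg_eq_self]
      · rfl
    refine ⟨Function.update σ i w, fun j => ?_, fun j hj => ?_, ?_⟩
    · obtain rfl | hj := eq_or_ne j i
      · simp [hw]
      · simpa [hj] using hσ j
    · exact Function.update_of_ne (ne_of_mem_of_not_mem hi hj).symm ..
    · rw [hx, sum_single_update]
  | zero => exact ⟨σ, hσ, by simp⟩
  | add x y _ _ ihx ihy =>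
    obtain ⟨σ₁, h₁, hI₁, hsum₁⟩ := ihx σ hσ
    obtain ⟨σ₂, h₂, hI₂, hsum₂⟩ := ihy σ₁ h₁
    exact ⟨σ₂, h₂, fun i hi => (hI₂ i hi).trans (hI₁ i hi), by rw [hsum₂, hsum₁, add_assoc]⟩
  | smul a x _ ih =>
    obtain rfl | rfl := zmod_two_eq_zero_or_one a
    · exact ⟨σ, hσ, by simp⟩
    · simpa using ih σ hσ

section Components

variable {Γ H : SimpleGraph V}

theorem exists_adj_dist_lt_of_reachable {r v : V} (h : Γ.Reachable r v) (hne : v ≠ r) :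
    ∃ w, Γ.Adj v w ∧ Γ.dist r w < Γ.dist r v := by
  obtain ⟨p, hp⟩ := h.symm.exists_walk_length_eq_dist
  cases p with
  | nil => exact (hne rfl).elim
  | @cons _ w _ hvw p =>
    refine ⟨w, hvw, ?_⟩
    rw [Γ.dist_comm (v := w), Γ.dist_comm (v := v), ← hp, SimpleGraph.Walk.length_cons]
    exact Nat.lt_succ_of_le (SimpleGraph.dist_le p)

/-- A vertex chosen in the component of `v`, from which distances are measured. -/
noncomputable def root (Γ : SimpleGraph V) (v : V) : V :=
  (Γ.connectedComponentMk v).out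

theorem reachable_root (v : V) : Γ.Reachable (root Γ v) v :=
  SimpleGraph.ConnectedComponent.exact (Quot.out_eq _)

theorem root_eq_root {u v : V} (h : Γ.Reachable u v) : root Γ u = root Γ v :=
  congrArg Quot.out (SimpleGraph.ConnectedComponent.sound h)

theorem reachable_of_exists_adj_dist_lt {D : Set V}
    (hD : ∀ v ∈ D, v ≠ root Γ v → ∃ w ∈ D, H.Adj v w ∧ Γ.Adj v w ∧
      Γ.dist (root Γ v) w < Γ.dist (root Γ v) v) {u v : V} (hu : u ∈ D) (hv : v ∈ D)
    (h : Γ.Reachable u v) : H.Reachable u v := by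
  have reachable_of_root (n : ℕ) : ∀ v ∈ D, Γ.dist (root Γ v) v = n → H.Reachable v (root Γ v) := by
    induction n using Nat.strong_induction_on with
    | _ n ih =>
      rintro v hv rfl
      by_cases hr : v = root Γ v
      · exact hr ▸ .rfl
      obtain ⟨w, hw, hH, hΓ, hlt⟩ := hD v hv hr
      have hroot := root_eq_root hΓ.reachable
      rw [hroot] at hlt ⊢
      exact hH.reachable.trans (ih _ (by rwa [hroot]) w hw rfl)
  have := reachable_of_root _ v hv rfl
  rw [← root_eq_root h] at this
  exact (reachable_of_root _ u hu rfl).trans this.symm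

theorem exists_spanning_parent_forest (Γ : SimpleGraph V) :
    ∃ T ≤ Γ, ∃ par : V → V, (∀ u v, T.Adj u v → par u = v ∨ par v = u) ∧
      ∀ u v, Γ.Reachable u v → T.Reachable u v := by
  have (v : V) : ∃ w, v ≠ root Γ v → Γ.Adj v w ∧ Γ.dist (root Γ v) w < Γ.dist (root Γ v) v := by
    by_cases hv : v = root Γ v
    · exact ⟨v, fun h => (h hv).elim⟩
    · exact (exists_adj_dist_lt_of_reachable (reachable_root v) hv).imp fun _ hw _ => hw
  choose par hpar using this
  refine ⟨Γ ⊓ .fromRel fun u v => par u = v, inf_le_left, par, fun u v h => h.2.2, fun u v h => ?_⟩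
  refine reachable_of_exists_adj_dist_lt (D := Set.univ) (fun v _ hv => ?_) trivial trivial h
  obtain ⟨hadj, hlt⟩ := hpar v hv
  exact ⟨par v, trivial, ⟨hadj, hadj.ne, .inl rfl⟩, hadj, hlt⟩

/-- Deleting the vertices of `Z` does not disconnect the rest of any component of `Γ`. -/
def IsNonseparating (Γ : SimpleGraph V) (Z : Set V) : Prop :=
  ∀ H : SimpleGraph V, (∀ u ∉ Z, ∀ v ∉ Z, Γ.Adj u v → H.Adj u v) →
    ∀ u ∉ Z, ∀ v ∉ Z, Γ.Reachable u v → H.Reachable u v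

theorem isNonseparating_of_forall_dist_le {Z : Set V}
    (hZ : ∀ z ∈ Z, ∀ v, Γ.Reachable z v → Γ.dist (root Γ z) v ≤ Γ.dist (root Γ z) z) :
    IsNonseparating Γ Z := by
  intro H hH u hu v hv
  refine reachable_of_exists_adj_dist_lt (D := Zᶜ) (fun v hv hr => ?_) hu hv
  obtain ⟨w, hadj, hlt⟩ := exists_adj_dist_lt_of_reachable (reachable_root v) hr
  have hw : w ∉ Z := fun hw => by
    have := hZ w hw v hadj.symm.reachable
    rw [← root_eq_root hadj.reachable] at this
    exact hlt.not_ge this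
  exact ⟨w, hw, hH v hv w hw hadj, hadj, hlt⟩

theorem exists_isNonseparating_even [Finite V] (Γ : SimpleGraph V) (n : Γ.ConnectedComponent → ℕ)
    (P : V → Finset V) (hP : ∀ t, t ∈ P t) (hPc : ∀ t, ∀ v ∈ P t, Γ.Reachable t v) :
    ∃ Z : Set V, IsNonseparating Γ Z ∧ ∀ c, ∃ t, Γ.connectedComponentMk t = c ∧
      (∀ z ∈ Z, Γ.Reachable t z → z = t) ∧ Even (n c + #{v ∈ P t | v ∉ Z}) := by
  -- A vertex at maximal distance from the root can be deleted without separating anything; it is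
  -- put into `Z` where the parity is wrong.
  have (c : Γ.ConnectedComponent) : ∃ t, Γ.connectedComponentMk t = c ∧
      ∀ v, Γ.Reachable t v → Γ.dist (root Γ t) v ≤ Γ.dist (root Γ t) t := by
    obtain ⟨t, ht, hmax⟩ := c.supp.toFinite.exists_maximalFor (Γ.dist c.out) _ c.nonempty_supp
    have hroot : root Γ t = c.out := congrArg Quot.out ht
    exact ⟨t, ht, fun v hv => hroot ▸ (le_total _ _).elim id
      (hmax (by rw [← ht]; exact (SimpleGraph.ConnectedComponent.sound hv).symm))⟩
  choose top htop hfar using this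
  have top_eq {c z} (h : Γ.Reachable (top c) (top z)) : c = z := by
    rw [← htop c, ← htop z]
    exact SimpleGraph.ConnectedComponent.sound h
  set Z : Set V := {v | ∃ c, Odd (n c + #(P (top c))) ∧ top c = v}
  have top_mem (c) : top c ∈ Z ↔ Odd (n c + #(P (top c))) :=
    ⟨fun ⟨d, hd, h⟩ => Function.LeftInverse.injective htop h ▸ hd, fun h => ⟨c, h, rfl⟩⟩
  have eq_top (c) : ∀ z ∈ Z, Γ.Reachable (top c) z → z = top c := by
    rintro _ ⟨d, -, rfl⟩ h
    rw [top_eq h]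
  refine ⟨Z, isNonseparating_of_forall_dist_le ?_, fun c => ⟨top c, htop c, eq_top c, ?_⟩⟩
  · rintro _ ⟨c, -, rfl⟩
    exact hfar c
  by_cases hc : top c ∈ Z
  · have : {v ∈ P (top c) | v ∉ Z} = (P (top c)).erase (top c) := by
      ext v
      simp only [mem_filter, mem_erase]
      grind
    rw [this, card_erase_of_mem (hP _)]
    have := (top_mem c).1 hc
    have := card_pos.2 ⟨_, hP (top c)⟩
    grind
  · have : {v ∈ P (top c) | v ∉ Z} = P (top c) :=
      filter_true_of_mem fun v hv hvZ => hc (eq_top c v hvZ (hPc _ v hv) ▸ hvZ)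
    rw [this]
    exact Nat.not_odd_iff_even.1 ((top_mem c).not.1 hc)

theorem sum_degree_eq_zero_of_closed [Fintype V] (s : Finset V)
    (hs : ∀ v ∈ s, ∀ w, H.Adj v w → w ∈ s) : ∑ v ∈ s, (H.degree v : ZMod 2) = 0 := by
  have hsum :=
    calc ∑ v : (s : Set V), H.degree v
      _ = ∑ v, (H.induce (s : Set V)).degree v := sum_congr rfl fun v _ => by
        convert (H.degree_induce_of_neighborSet_subset (hs v v.2)).symm
      _ = 2 * _ := (H.induce (s : Set V)).sum_degrees_eq_twice_card_edges
  rw [← Nat.cast_sum, ZMod.natCast_eq_zero_iff_even, ← sum_coe_sort]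
  exact even_iff_two_dvd.2 ⟨_, hsum⟩

end Components

section OddChoice

theorem sum_single_apply {ι : Type*} [Fintype ι] (σ : ι → V) (v : V) :
    (∑ i, Pi.single (σ i) 1 : V → ZMod 2) v = #{i | σ i = v} := by
  simp [Finset.sum_apply, Pi.single_apply, eq_comm]

theorem reachable_fromEdgeSet_of_mem {S : Set (Sym2 V)} {p : Sym2 V} (hp : p ∈ S) {u v : V}
    (hu : u ∈ p) (hv : v ∈ p) : (SimpleGraph.fromEdgeSet S).Reachable u v := by
  obtain rfl | hne := eq_or_ne u v
  · exact .rfl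
  · obtain rfl := (Sym2.mem_and_mem_iff hne).1 ⟨hu, hv⟩
    exact ((SimpleGraph.fromEdgeSet_adj S).2 ⟨hp, hne⟩).reachable

theorem sum_fiber_sum_single [Fintype V] {ι κ : Type*} [Fintype ι] (π : V → κ) (σ : ι → V) (k : κ) :
    ∑ v with π v = k, (∑ i, Pi.single (σ i) 1 : V → ZMod 2) v = #{i | π (σ i) = k} := by
  simp only [sum_single_apply]
  rw [← Nat.cast_sum, card_eq_sum_card_fiberwise (f := σ) (t := {v | π v = k})
    fun i hi => by simpa using hi]
  congr 1
  refine sum_congr rfl fun v hv => ?_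
  rw [filter_filter]
  congr 1
  ext i
  grind

theorem exists_mem_notMem_of_not_isDiag {p : Sym2 V} (hp : ¬ p.IsDiag) {Z : Set V}
    (hZ : ∀ u ∈ p, ∀ v ∈ p, u ∈ Z → v ∈ Z → u = v) : ∃ v ∈ p, v ∉ Z := by
  by_contra! h
  have hother := Sym2.other_mem p.out_fst_mem
  exact Sym2.other_ne hp p.out_fst_mem
    (hZ _ hother _ p.out_fst_mem (h _ hother) (h _ p.out_fst_mem))

variable [Finite V]

-- The vector in question is what has to be added to the counts of the choices `σ` to make them
-- odd outside `Z`.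
theorem exists_choice_add_indicator_mem_paritySpan {ι : Type*} [Fintype ι] (e : ι → Sym2 V)
    (he : ∀ i, ¬ (e i).IsDiag) :
    ∃ (Z : Set V) (σ : ι → V), (∀ i, σ i ∈ e i ∧ σ i ∉ Z) ∧
      ∑ i, Pi.single (σ i) 1 + Zᶜ.indicator 1 ∈
        paritySpan (.fromEdgeSet (e '' {i | ∀ v ∈ e i, v ∉ Z})) := by
  have := Fintype.ofFinite V
  set Γ : SimpleGraph V := .fromEdgeSet (Set.range e)
  have reachable {i u v} (hu : u ∈ e i) (hv : v ∈ e i) : Γ.Reachable u v :=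
    reachable_fromEdgeSet_of_mem (Set.mem_range_self i) hu hv
  obtain ⟨Z, hsep, hZ⟩ := exists_isNonseparating_even Γ
    (fun c => #{i | Γ.connectedComponentMk (e i).out.1 = c}) (fun t => {v | Γ.Reachable t v})
    (by simp) (by simp)
  have eq_of_mem {i u v} (hu : u ∈ e i) (hv : v ∈ e i) (huZ : u ∈ Z) (hvZ : v ∈ Z) : u = v := by
    obtain ⟨t, ht, hZt, -⟩ := hZ (Γ.connectedComponentMk u)
    have htu : Γ.Reachable t u := SimpleGraph.ConnectedComponent.exact ht
    rw [hZt u huZ htu, hZt v hvZ (htu.trans (reachable hu hv))]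
  choose σ hσ hσZ using fun i => exists_mem_notMem_of_not_isDiag (he i) (Z := Z)
    fun u hu v hv => eq_of_mem hu hv
  have eq_zero_of_mem {v} (hv : v ∈ Z) :
      (∑ i, Pi.single (σ i) 1 + Zᶜ.indicator 1 : V → ZMod 2) v = 0 := by
    have : #{i | σ i = v} = 0 := by
      rw [card_eq_zero, filter_eq_empty_iff]
      rintro i - rfl
      exact hσZ i hv
    rw [Pi.add_apply, sum_single_apply, this, Set.indicator_of_notMem (Set.notMem_compl_iff.2 hv),
      Nat.cast_zero, add_zero]
  refine ⟨Z, σ, fun i => ⟨hσ i, hσZ i⟩, mem_of_sum_fiber_eq_zero Γ.connectedComponentMk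
    (fun u v hu hv huv => ?_) fun c => ?_⟩
  · refine single_sub_single_mem_paritySpan <| hsep _ (fun a ha b hb hab => ?_)
      u (mt eq_zero_of_mem hu) v (mt eq_zero_of_mem hv) (SimpleGraph.ConnectedComponent.exact huv)
    obtain ⟨⟨i, hi⟩, hne⟩ := (SimpleGraph.fromEdgeSet_adj _).1 hab
    exact (SimpleGraph.fromEdgeSet_adj _).2 ⟨⟨i, by simp [hi, ha, hb], hi⟩, hne⟩
  · obtain ⟨t, rfl, -, heven⟩ := hZ c
    have hσ_comp (i) : Γ.connectedComponentMk (σ i) = Γ.connectedComponentMk (e i).out.1 :=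
      SimpleGraph.ConnectedComponent.sound (reachable (hσ i) (e i).out_fst_mem)
    have hind : ∑ v with Γ.connectedComponentMk v = Γ.connectedComponentMk t,
        Zᶜ.indicator (1 : V → ZMod 2) v = #{v ∈ ({v | Γ.Reachable t v} : Finset V) | v ∉ Z} := by
      simp only [Set.indicator_apply, Set.mem_compl_iff, Pi.one_apply, sum_boole,
        SimpleGraph.ConnectedComponent.eq, Γ.reachable_comm]
    simp only [Pi.add_apply, sum_add_distrib, sum_fiber_sum_single, hσ_comp, hind]
    rw [← Nat.cast_add, ZMod.natCast_eq_zero_iff_even]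
    exact heven

theorem exists_choice_eq_zero_or_odd {ι : Type*} [Fintype ι] (e : ι → Sym2 V)
    (he : ∀ i, ¬ (e i).IsDiag) :
    ∃ σ : ι → V, (∀ i, σ i ∈ e i) ∧ ∀ v, #{i | σ i = v} = 0 ∨ Odd #{i | σ i = v} := by
  obtain ⟨Z, σ, hσ, hmem⟩ := exists_choice_add_indicator_mem_paritySpan e he
  obtain ⟨σ', hσ', hσI, hsum⟩ :=
    exists_choice_sum_eq_of_mem_paritySpan hmem σ fun i => (hσ i).1
  refine ⟨σ', hσ', fun v => ?_⟩
  by_cases hv : v ∈ Z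
  · refine .inl (card_eq_zero.2 (filter_eq_empty_iff.2 ?_))
    rintro i - rfl
    by_cases hi : ∀ v ∈ e i, v ∉ Z
    · exact hi _ (hσ' i) hv
    · exact (hσ i).2 (hσI i hi ▸ hv)
  · right
    rw [← ZMod.natCast_eq_one_iff_odd, ← sum_single_apply, hsum, ← add_assoc,
      ZModModule.add_self, zero_add, Set.indicator_of_mem hv, Pi.one_apply]

theorem exists_subset_card_eq_forall_eq_zero_or_odd {α : Type*} [Fintype α] (O : α → Finset V)
    (n : α → ℕ) (hn : ∀ a, 2 * n a ≤ #(O a)) :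
    ∃ S : α → Finset V, (∀ a, S a ⊆ O a) ∧ (∀ a, #(S a) = n a) ∧
      ∀ v, #{a | v ∈ S a} = 0 ∨ Odd #{a | v ∈ S a} := by
  have (a : α) : ∃ f : Fin (n a) × Bool ↪ V, ∀ p, f p ∈ O a := by
    have hcard : Fintype.card (Fin (n a) × Bool) ≤ Fintype.card (O a) := by
      simpa [mul_comm] using hn a
    obtain ⟨f⟩ := Function.Embedding.nonempty_of_card_le hcard
    exact ⟨f.trans (.subtype _), fun p => (f p).2⟩
  choose f hf using this
  obtain ⟨σ, hσ, hodd⟩ := exists_choice_eq_zero_or_odd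
    (fun i : Σ a, Fin (n a) => s(f i.1 (i.2, true), f i.1 (i.2, false))) (by simp)
  simp only [Sym2.mem_iff] at hσ
  have σ_inj (a) : Function.Injective fun j => σ ⟨a, j⟩ := fun j k hjk => by
    have hj := hσ ⟨a, j⟩
    have hk := hσ ⟨a, k⟩
    simp only at hjk hj hk
    grind [(f a).injective]
  refine ⟨fun a => univ.image fun j => σ ⟨a, j⟩, fun a => ?_, fun a => ?_, fun v => ?_⟩
  · refine image_subset_iff.2 fun j _ => ?_
    obtain h | h := hσ ⟨a, j⟩ <;> exact h ▸ hf a _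
  · rw [card_image_of_injective _ (σ_inj a), card_univ, Fintype.card_fin]
  · have : #{a | v ∈ univ.image fun j => σ ⟨a, j⟩} = #{i | σ i = v} := by
      rw [← card_image_of_injOn (s := {i | σ i = v}) (f := Sigma.fst)]
      · congr 1
        ext a
        simp
      · rintro ⟨a, j⟩ hj ⟨b, k⟩ hk (rfl : a = b)
        rw [@σ_inj a j k ((mem_filter.1 hj).2.trans (mem_filter.1 hk).2.symm)]
    rw [this]
    exact hodd v

end OddChoice

section ListColoring

variable {G : SimpleGraph V}

theorem exists_coloring_mem_of_degree_lt_card [Fintype V] {α : Type*} {L : V → Finset α}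
    (hL : ∀ v, G.degree v < #(L v)) : ∃ C : G.Coloring α, ∀ v, C v ∈ L v := by
  suffices ∀ s : Finset V, ∃ c : V → α, (∀ v, c v ∈ L v) ∧
      ∀ u ∈ s, ∀ v ∈ s, G.Adj u v → c u ≠ c v by
    obtain ⟨c, hc, hne⟩ := this univ
    exact ⟨.mk c fun h => hne _ (mem_univ _) _ (mem_univ _) h, hc⟩
  intro s
  induction s using Finset.induction_on with
  | empty =>
    choose c hc using fun v => card_pos.1 ((Nat.zero_le _).trans_lt (hL v))
    exact ⟨c, hc, by simp⟩
  | insert a s ha ih =>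
    obtain ⟨c, hc, hs⟩ := ih
    obtain ⟨x, hx, hxN⟩ : ∃ x ∈ L a, x ∉ (G.neighborFinset a).image c :=
      exists_mem_notMem_of_card_lt_card (card_image_le.trans_lt (hL a))
    have ne_of_adj {v} (hv : G.Adj a v) : c v ≠ x :=
      fun h => hxN (mem_image.2 ⟨v, (G.mem_neighborFinset a v).2 hv, h⟩)
    refine ⟨Function.update c a x, fun v => ?_, fun u hu v hv huv => ?_⟩
    · obtain rfl | hv := eq_or_ne v a <;> simp [*]
    · obtain rfl | hu' := eq_or_ne u a
      · simpa [huv.ne'] using (ne_of_adj huv).symm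
      · obtain rfl | hv' := eq_or_ne v a
        · simpa [hu'] using ne_of_adj huv.symm
        · simpa [hu', hv'] using hs u (mem_of_mem_insert_of_ne hu hu') v
            (mem_of_mem_insert_of_ne hv hv') huv

theorem exists_coloring_even_le [Fintype V] (G : SimpleGraph V) :
    ∃ C : G.Coloring ℕ, ∀ v, Even (C v) ∧ G.degree v ≤ C v ∧ C v ≤ 4 * G.degree v := by
  let L (v : V) : Finset ℕ :=
    (range (G.degree v + 1)).image fun j => G.degree v + G.degree v % 2 + 2 * j
  obtain ⟨C, hC⟩ := exists_coloring_mem_of_degree_lt_card (G := G) (L := L) fun v => by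
    rw [card_image_of_injective _ fun i j h => by grind, card_range]
    exact Nat.lt_succ_self _
  refine ⟨C, fun v => ?_⟩
  obtain ⟨j, hj, hCj⟩ := mem_image.1 (hC v)
  rw [mem_range] at hj
  grind

end ListColoring

open scoped Function

section Packing

variable [Fintype V] {G H K : SimpleGraph V} {k l d e : ℕ}

theorem degree_sup_of_disjoint (h : Disjoint G H) (v : V) :
    (G ⊔ H).degree v = G.degree v + H.degree v := by
  simp only [← SimpleGraph.card_neighborFinset_eq_degree]
  rw [← card_union_of_disjoint]
  · congr 1
    ext
    simp
  · rw [Finset.disjoint_left]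
    simpa using SimpleGraph.disjoint_left.1 h v

theorem degree_sdiff_add_degree (h : H ≤ G) (v : V) :
    (G \ H).degree v + H.degree v = G.degree v := by
  rw [← degree_sup_of_disjoint disjoint_sdiff_self_left, sdiff_sup_cancel h]

theorem degree_sup_le (G H : SimpleGraph V) (v : V) :
    (G ⊔ H).degree v ≤ G.degree v + H.degree v := by
  rw [← sdiff_sup_self, degree_sup_of_disjoint disjoint_sdiff_self_left]
  gcongr
  exact SimpleGraph.degree_le_of_le sdiff_le

/-- Adjacent vertices have distinct degrees. -/
def IsLocallyIrregular (G : SimpleGraph V) : Prop :=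
  ∀ ⦃u v⦄, G.Adj u v → G.degree u ≠ G.degree v

theorem IsLocallyIrregular.sup_of_disjoint_support (hG : IsLocallyIrregular G)
    (hH : IsLocallyIrregular H) (h : Disjoint G.support H.support) :
    IsLocallyIrregular (G ⊔ H) := by
  have hdeg := degree_sup_of_disjoint (SimpleGraph.disjoint_of_disjoint_support H h)
  rintro u v (huv | huv)
  · have degree_eq {w} (hw : w ∈ G.support) : (G ⊔ H).degree w = G.degree w := by
      rw [hdeg, (H.degree_eq_zero_iff_notMem_support w).2 (h.notMem_of_mem_left hw), add_zero]
    rw [degree_eq ⟨v, huv⟩, degree_eq ⟨u, huv.symm⟩]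
    exact hG huv
  · have degree_eq {w} (hw : w ∈ H.support) : (G ⊔ H).degree w = H.degree w := by
      rw [hdeg, (G.degree_eq_zero_iff_notMem_support w).2 (h.notMem_of_mem_right hw), zero_add]
    rw [degree_eq ⟨v, huv⟩, degree_eq ⟨u, huv.symm⟩]
    exact hH huv

/-- There are `k` edge-disjoint locally irregular subgraphs of `G` whose removal leaves a graph of
maximum degree at most `d`. -/
def HasIrregularPacking (G : SimpleGraph V) (k d : ℕ) : Prop :=
  ∃ H : Fin k → SimpleGraph V, (∀ i, IsLocallyIrregular (H i)) ∧ Pairwise (Disjoint on H) ∧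
    (∀ i, H i ≤ G) ∧ ∀ v, (G \ ⨆ i, H i).degree v ≤ d

theorem IsLocallyIrregular.hasIrregularPacking (h : IsLocallyIrregular G) :
    HasIrregularPacking G 1 0 :=
  ⟨fun _ => G, fun _ => h, Subsingleton.pairwise, fun _ => le_rfl, by simp⟩

theorem hasIrregularPacking_of_degree_le (k : ℕ) (h : ∀ v, G.degree v ≤ d) :
    HasIrregularPacking G k d :=
  ⟨fun _ => ⊥, fun _ _ _ h => h.elim, fun _ _ _ => disjoint_bot_left, fun _ => bot_le, fun v =>
    (SimpleGraph.degree_le_of_le sdiff_le).trans (h v)⟩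

theorem hasIrregularPacking_iSup {H : Fin k → SimpleGraph V} (hI : ∀ i, IsLocallyIrregular (H i))
    (hH : Pairwise (Disjoint on H)) : HasIrregularPacking (⨆ i, H i) k 0 :=
  ⟨H, hI, hH, le_iSup H, by simp⟩

theorem HasIrregularPacking.of_sdiff (hHG : H ≤ G) (hH : HasIrregularPacking H k d)
    (hGH : HasIrregularPacking (G \ H) l e) : HasIrregularPacking G (k + l) (d + e) := by
  obtain ⟨A, hAI, hA, hAH, hAd⟩ := hH
  obtain ⟨B, hBI, hB, hBH, hBe⟩ := hGH
  have hAB (i j) : Disjoint (A i) (B j) := disjoint_sdiff_self_right.mono (hAH i) (hBH j)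
  have hdisj : Pairwise (Disjoint on Sum.elim A B) := by
    rintro (i | i) (j | j) hij
    · exact hA (ne_of_apply_ne Sum.inl hij)
    · exact hAB i j
    · exact (hAB j i).symm
    · exact hB (ne_of_apply_ne Sum.inr hij)
  refine ⟨Sum.elim A B ∘ finSumFinEquiv.symm, fun i => ?_,
    hdisj.comp_of_injective finSumFinEquiv.symm.injective, fun i => ?_, fun v => ?_⟩
  · exact (Sum.forall (p := fun x => IsLocallyIrregular (Sum.elim A B x))).2 ⟨hAI, hBI⟩ _
  · exact (Sum.forall (p := fun x => Sum.elim A B x ≤ G)).2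
      ⟨fun j => (hAH j).trans hHG, fun j => (hBH j).trans sdiff_le⟩ _
  · have hle : G \ ⨆ i, (Sum.elim A B ∘ finSumFinEquiv.symm) i ≤
        H \ (⨆ i, A i) ⊔ (G \ H) \ ⨆ i, B i := by
      simp only [Function.comp_apply, Equiv.iSup_comp (g := Sum.elim A B), iSup_sum, Sum.elim_inl,
        Sum.elim_inr]
      intro u v
      simp only [SimpleGraph.sdiff_adj, SimpleGraph.sup_adj]
      tauto
    exact (SimpleGraph.degree_le_of_le hle).trans
      ((degree_sup_le _ _ v).trans (add_le_add (hAd v) (hBe v)))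

theorem HasIrregularPacking.trans (hG : HasIrregularPacking G k d)
    (hd : ∀ R : SimpleGraph V, (∀ v, R.degree v ≤ d) → HasIrregularPacking R l e) :
    HasIrregularPacking G (k + l) e := by
  obtain ⟨H, hI, hH, hHG, hdeg⟩ := hG
  simpa using (hasIrregularPacking_iSup hI hH).of_sdiff (iSup_le hHG) (hd _ hdeg)

end Packing

section RemoveVertices

/-- The graph `Γ` without the edges that meet `Z`. -/
def removeVertices (Γ : SimpleGraph V) (Z : Set V) : SimpleGraph V where
  Adj u v := Γ.Adj u v ∧ u ∉ Z ∧ v ∉ Z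
  symm := ⟨fun _ _ h => ⟨h.1.symm, h.2.2, h.2.1⟩⟩
  loopless := ⟨fun _ h => h.1.ne rfl⟩

theorem removeVertices_le {Γ : SimpleGraph V} {Z : Set V} : removeVertices Γ Z ≤ Γ :=
  fun _ _ h => h.1

end RemoveVertices

section Bipartite

variable [Fintype V] {G Γ : SimpleGraph V} {Z : Set V}

/-- Every edge has an end which is a leaf, i.e. the components are stars. -/
def IsStarForest (G : SimpleGraph V) : Prop :=
  ∀ ⦃u v⦄, G.Adj u v → G.degree u ≤ 1 ∨ G.degree v ≤ 1

theorem degree_le_one_of_forall_adj_eq {v w : V} (h : ∀ u, G.Adj v u → u = w) :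
    G.degree v ≤ 1 := by
  rw [← G.card_neighborFinset_eq_degree, ← card_singleton w]
  exact card_le_card fun u hu => mem_singleton.2 (h u ((G.mem_neighborFinset v u).1 hu))

theorem IsStarForest.hasIrregularPacking (hG : IsStarForest G) : HasIrregularPacking G 1 1 := by
  set H : SimpleGraph V := G ⊓ .fromRel fun u _ => 2 ≤ G.degree u
  have hHG : H ≤ G := inf_le_left
  have adj_of_two_le {u v} (huv : G.Adj u v) (hu : 2 ≤ G.degree u) : H.Adj u v :=
    ⟨huv, huv.ne, .inl hu⟩
  have degree_lt {u v} (huv : G.Adj u v) (hu : 2 ≤ G.degree u) : H.degree v < H.degree u :=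
    calc H.degree v ≤ G.degree v := SimpleGraph.degree_le_of_le hHG
      _ ≤ 1 := (hG huv).resolve_left (by lia)
      _ < G.degree u := hu
      _ ≤ H.degree u := card_le_card fun w hw => by
        simpa using adj_of_two_le ((G.mem_neighborFinset u w).1 hw) hu
  refine IsLocallyIrregular.hasIrregularPacking (G := H) ?_ |>.of_sdiff hHG
    (hasIrregularPacking_of_degree_le 0 (d := 1) fun v => ?_)
  · rintro u v ⟨huv, -, hu | hv⟩
    · exact (degree_lt huv hu).ne'
    · exact (degree_lt huv.symm hv).ne
  · obtain hv | hv := le_or_gt (G.degree v) 1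
    · exact (SimpleGraph.degree_le_of_le sdiff_le).trans hv
    · refine degree_le_one_of_forall_adj_eq (w := v) fun u hu => ?_
      exact (hu.2 (adj_of_two_le hu.1 hv)).elim

theorem isStarForest_of_parent {C : Set V} {par : V → V} (hC : ∀ u v, G.Adj u v → u ∉ C ∨ v ∉ C)
    (hpar : ∀ u v, G.Adj u v → u ∉ C → par u = v) : IsStarForest G := by
  have degree_le {u} (hu : u ∉ C) : G.degree u ≤ 1 :=
    degree_le_one_of_forall_adj_eq fun v huv => (hpar u v huv hu).symm
  exact fun u v huv => (hC u v huv).imp degree_le degree_le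

theorem hasIrregularPacking_of_parent (s : G.Coloring Bool) {par : V → V}
    (hpar : ∀ u v, G.Adj u v → par u = v ∨ par v = u) : HasIrregularPacking G 2 2 := by
  have hs {u v} (huv : G.Adj u v) : s u ≠ s v := s.valid huv
  refine HasIrregularPacking.of_sdiff (H := G ⊓ .fromRel fun u v => par u = v ∧ s v = true)
    inf_le_left
    (isStarForest_of_parent (C := {v | s v = true}) (par := par) ?_ ?_).hasIrregularPacking
    (isStarForest_of_parent (C := {v | s v = false}) (par := par) ?_ ?_).hasIrregularPacking
  all_goals
    intro u v huv
    have := hs huv.1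
    have := hpar u v huv.1
    grind [SimpleGraph.sdiff_adj, SimpleGraph.inf_adj, SimpleGraph.fromRel_adj]

theorem degree_removeVertices_of_mem {v : V} (hv : v ∈ Z) : (removeVertices Γ Z).degree v = 0 := by
  rw [SimpleGraph.degree_eq_zero_iff_notMem_support]
  rintro ⟨w, -, hv', -⟩
  exact hv' hv

theorem isStarForest_sdiff_removeVertices
    (hZ : ∀ u ∈ Z, ∀ v ∈ Z, Γ.Reachable u v → u = v) :
    IsStarForest (Γ \ removeVertices Γ Z) := by
  have degree_le {u v} (huv : Γ.Adj u v) (hu : u ∈ Z) : (Γ \ removeVertices Γ Z).degree v ≤ 1 := by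
    refine degree_le_one_of_forall_adj_eq (w := u) fun w hw => ?_
    have hv : v ∉ Z := fun hv => huv.ne (hZ u hu v hv huv.reachable)
    have hwZ : w ∈ Z := by
      by_contra hwZ
      exact hw.2 ⟨hw.1, hv, hwZ⟩
    exact (hZ u hu w hwZ (huv.reachable.trans hw.1.reachable)).symm
  intro u v huv
  by_cases hu : u ∈ Z
  · exact .inr (degree_le huv.1 hu)
  · by_cases hv : v ∈ Z
    · exact .inl (degree_le huv.1.symm hv)
    · exact (huv.2 ⟨huv.1, hu, hv⟩).elim

theorem exists_le_removeVertices_degree_eq (hsep : IsNonseparating Γ Z) {x : V → ZMod 2}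
    (hxZ : ∀ v ∈ Z, x v = 0) (hx : ∀ c, ∑ v with Γ.connectedComponentMk v = c, x v = 0) :
    ∃ F ≤ removeVertices Γ Z, (∃ par : V → V, ∀ u v, F.Adj u v → par u = v ∨ par v = u) ∧
      ∀ v, (F.degree v : ZMod 2) = x v := by
  obtain ⟨T, hT, par, hpar, hreach⟩ := exists_spanning_parent_forest (removeVertices Γ Z)
  have hmem : x ∈ paritySpan T := by
    refine mem_of_sum_fiber_eq_zero Γ.connectedComponentMk (fun u v hu hv huv => ?_) hx
    refine single_sub_single_mem_paritySpan (hreach u v ?_)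
    exact hsep (removeVertices Γ Z) (fun a ha b hb hab => ⟨hab, ha, hb⟩)
      u (mt (hxZ u) hu) v (mt (hxZ v) hv)
      (SimpleGraph.ConnectedComponent.exact huv)
  obtain ⟨F, hFT, hdeg⟩ := exists_le_degree_eq_of_mem_paritySpan hmem
  exact ⟨F, hFT.trans hT, ⟨par, fun u v huv => hpar u v (hFT huv)⟩, hdeg⟩

theorem exists_isNonseparating_alternating_set (s : Γ.Coloring Bool) :
    ∃ Z A : Set V, IsNonseparating Γ Z ∧ (∀ u ∈ Z, ∀ v ∈ Z, Γ.Reachable u v → u = v) ∧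
      Disjoint Z A ∧ (∀ u v, (removeVertices Γ Z).Adj u v → (u ∈ A ↔ v ∉ A)) ∧
      ∀ c, Even #{v | Γ.connectedComponentMk v = c ∧ v ∈ A} := by
  obtain ⟨Z, hsep, hZ⟩ := exists_isNonseparating_even Γ 0
    (fun t => {v | Γ.Reachable t v ∧ s v = s t}) (by simp) (by simp +contextual)
  choose top htop hZtop heven using hZ
  have eq_top {z} (hz : z ∈ Z) : z = top (Γ.connectedComponentMk z) :=
    hZtop _ z hz (SimpleGraph.ConnectedComponent.exact (htop _))
  refine ⟨Z, {v | v ∉ Z ∧ s v = s (top (Γ.connectedComponentMk v))}, hsep,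
    fun u hu v hv huv => ?_, Set.disjoint_left.2 fun v hv h => h.1 hv, ?_, fun c => ?_⟩
  · rw [eq_top hu, eq_top hv, SimpleGraph.ConnectedComponent.sound huv]
  · rintro u v ⟨huv, hu, hv⟩
    have hs : s u ≠ s v := s.valid huv
    simp only [Set.mem_ofPred_eq, SimpleGraph.ConnectedComponent.sound huv.reachable, hu, hv,
      not_false_eq_true, true_and]
    cases h : s (top (Γ.connectedComponentMk v)) <;> grind
  · convert heven c using 1
    rw [Pi.zero_apply, zero_add, filter_filter]
    congr 1
    ext v
    have : Γ.Reachable (top c) v ↔ Γ.connectedComponentMk v = c := by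
      rw [← SimpleGraph.ConnectedComponent.eq, htop, eq_comm]
    simp only [Set.mem_ofPred_eq, mem_filter, mem_univ, true_and, this]
    grind

theorem exists_parent_forest_isLocallyIrregular_sdiff (s : Γ.Coloring Bool) :
    ∃ Z : Set V, (∀ u ∈ Z, ∀ v ∈ Z, Γ.Reachable u v → u = v) ∧
      ∃ F ≤ removeVertices Γ Z, (∃ par : V → V, ∀ u v, F.Adj u v → par u = v ∨ par v = u) ∧
        IsLocallyIrregular (removeVertices Γ Z \ F) := by
  obtain ⟨Z, A, hsep, hZ, hZA, hA, heven⟩ := exists_isNonseparating_alternating_set s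
  set Γ' := removeVertices Γ Z
  obtain ⟨F, hF, hpar, hdeg⟩ := exists_le_removeVertices_degree_eq hsep
    (x := fun v => Γ'.degree v + A.indicator 1 v)
    (fun v hv => by
      simp [Γ', degree_removeVertices_of_mem hv, Set.disjoint_left.1 hZA hv])
    (fun c => by
      have hclosed := sum_degree_eq_zero_of_closed (H := Γ') {v | Γ.connectedComponentMk v = c}
        fun v hv w hvw => by
          rw [mem_filter_univ] at hv ⊢
          rw [← hv, SimpleGraph.ConnectedComponent.sound hvw.1.reachable]
      simp only [sum_add_distrib, hclosed, zero_add, Set.indicator_apply, Pi.one_apply, sum_boole,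
        filter_filter]
      exact (ZMod.natCast_eq_zero_iff_even).2 (heven c))
  have cast_degree_eq (v) : ((Γ' \ F).degree v : ZMod 2) = A.indicator 1 v := by
    have := congrArg (Nat.cast : ℕ → ZMod 2) (degree_sdiff_add_degree hF v)
    rwa [Nat.cast_add, hdeg, add_left_comm, add_eq_left, CharTwo.add_eq_zero] at this
  refine ⟨Z, hZ, F, hF, hpar, fun u v huv h => ?_⟩
  have hind := cast_degree_eq u
  rw [h, cast_degree_eq v] at hind
  have := hA u v huv.1
  by_cases hv : v ∈ A <;> simp_all

theorem hasIrregularPacking_of_bipartite (s : Γ.Coloring Bool) : HasIrregularPacking Γ 4 3 := by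
  obtain ⟨Z, hZ, F, hF, ⟨par, hpar⟩, hI⟩ := exists_parent_forest_isLocallyIrregular_sdiff s
  have hFpack : HasIrregularPacking F 2 2 :=
    hasIrregularPacking_of_parent (s.comp (.ofLE (hF.trans removeVertices_le))) hpar
  exact (hFpack.of_sdiff hF hI.hasIrregularPacking).of_sdiff removeVertices_le
    (isStarForest_sdiff_removeVertices hZ).hasIrregularPacking

end Bipartite

section Colorable

variable [Fintype V] {G : SimpleGraph V}

theorem hasIrregularPacking_of_colorable_two_pow {n : ℕ} (hG : G.Colorable (2 ^ n)) :
    HasIrregularPacking G (4 * n) (3 * n) := by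
  induction n generalizing G with
  | zero =>
    have := G.colorable_one_iff.1 hG
    refine hasIrregularPacking_of_degree_le 0 fun v => ?_
    subst this
    simp
  | succ n ih =>
    let C : G.Coloring (Bool × Fin (2 ^ n)) := hG.toColoring (by simp [pow_succ'])
    let B : SimpleGraph V := G ⊓ .comap (fun v => (C v).1) ⊤
    have hB : HasIrregularPacking B 4 3 :=
      hasIrregularPacking_of_bipartite (.mk (fun v => (C v).1) fun h => h.2)
    have hC : (G \ B).Coloring (Fin (2 ^ n)) := .mk (fun v => (C v).2) fun {u v} h h2 => by
      refine C.valid h.1 (Prod.ext ?_ h2)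
      by_contra h1
      exact h.2 ⟨h.1, h1⟩
    convert hB.of_sdiff inf_le_left (ih (hC.colorable.mono (by simp))) using 1 <;> ring

end Colorable

section BoundedDegree

variable [Fintype V] {G : SimpleGraph V} {d : ℕ}

theorem isLocallyIrregular_of_forall_adj_eq {c : V} (h : ∀ u v, G.Adj u v → u = c ∨ v = c)
    (hc : 2 ≤ G.degree c) : IsLocallyIrregular G := by
  have degree_lt {v} (hv : v ≠ c) : G.degree v < G.degree c :=
    (degree_le_one_of_forall_adj_eq fun u hvu => (h v u hvu).resolve_left hv).trans_lt hc
  intro u v huv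
  obtain rfl | rfl := h u v huv
  · exact (degree_lt huv.ne').ne'
  · exact (degree_lt huv.ne).ne

theorem exists_le_isLocallyIrregular_support_subset {v : V} (hv : 2 ≤ G.degree v) :
    ∃ P ≤ G, P ≠ ⊥ ∧ IsLocallyIrregular P ∧ ∃ X : Finset V, #X ≤ 3 ∧ P.support ⊆ X := by
  rw [← G.card_neighborFinset_eq_degree] at hv
  obtain ⟨X, hX, hcard⟩ := exists_subset_card_eq hv
  set P : SimpleGraph V := G ⊓ .fromRel fun a b => a = v ∧ b ∈ X
  have adj_of_mem {b} (hb : b ∈ X) : P.Adj v b :=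
    have hvb := (G.mem_neighborFinset v b).1 (hX hb)
    ⟨hvb, hvb.ne, .inl ⟨rfl, hb⟩⟩
  have two_le_degree : 2 ≤ P.degree v := by
    rw [← hcard]
    exact card_le_card fun b hb => (P.mem_neighborFinset v b).2 (adj_of_mem hb)
  refine ⟨P, inf_le_left, ?_, isLocallyIrregular_of_forall_adj_eq (c := v) ?_ two_le_degree,
    insert v X, (card_insert_le v X).trans (by rw [hcard]), ?_⟩
  · obtain ⟨b, hb⟩ := card_pos.1 (hcard ▸ two_pos)
    exact SimpleGraph.ne_bot_iff_exists_adj.2 ⟨v, b, adj_of_mem hb⟩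
  · rintro a b ⟨-, -, h | h⟩
    exacts [.inl h.1, .inr h.1]
  · rintro a ⟨b, -, -, ⟨rfl, -⟩ | ⟨-, ha⟩⟩
    exacts [mem_insert_self a X, mem_insert_of_mem ha]

theorem card_mem_support_le_degree {ι : Type*} [Fintype ι] {H : ι → SimpleGraph V}
    (hH : Pairwise (Disjoint on H)) (hHG : ∀ i, H i ≤ G) (v : V) :
    #{i | v ∈ (H i).support} ≤ G.degree v := by
  rw [← G.card_neighborFinset_eq_degree]
  refine card_le_card_of_forall_subsingleton (fun i w => (H i).Adj v w) (fun i hi => ?_)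
    fun w _ i hi j hj => ?_
  · obtain ⟨w, hw⟩ := (mem_filter_univ _).1 hi
    exact ⟨w, (G.mem_neighborFinset v w).2 (hHG i hw), hw⟩
  · by_contra hij
    exact SimpleGraph.disjoint_left.1 (hH hij) v w hi.2 hj.2

theorem exists_disjoint_support {ι : Type*} [Fintype ι] {H : ι → SimpleGraph V}
    (hH : Pairwise (Disjoint on H)) (hHG : ∀ i, H i ≤ G) {X : Finset V}
    (hX : ∑ v ∈ X, G.degree v < Fintype.card ι) : ∃ i, Disjoint (H i).support X := by
  have hcard : #(X.biUnion fun v => {i | v ∈ (H i).support}) < #(univ : Finset ι) :=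
    calc _ ≤ ∑ v ∈ X, #{i | v ∈ (H i).support} := card_biUnion_le
      _ ≤ ∑ v ∈ X, G.degree v := sum_le_sum fun v _ => card_mem_support_le_degree hH hHG v
      _ < #univ := hX
  obtain ⟨i, -, hi⟩ := exists_mem_notMem_of_card_lt_card hcard
  refine ⟨i, Set.disjoint_right.2 fun v hv h => hi ?_⟩
  exact mem_biUnion.2 ⟨v, hv, (mem_filter_univ _).2 h⟩

theorem HasIrregularPacking.of_sdiff_of_disjoint_support {k e : ℕ} {P : SimpleGraph V}
    {H : Fin k → SimpleGraph V} (hP : IsLocallyIrregular P) (hPG : P ≤ G)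
    (hI : ∀ i, IsLocallyIrregular (H i)) (hH : Pairwise (Disjoint on H)) (hHG : ∀ i, H i ≤ G \ P)
    (hdeg : ∀ v, ((G \ P) \ ⨆ i, H i).degree v ≤ e) {i : Fin k}
    (hi : Disjoint (H i).support P.support) : HasIrregularPacking G k e := by
  have hHP (j) : Disjoint (H j) P := disjoint_sdiff_self_left.mono_left (hHG j)
  have hle (j) : H j ≤ Function.update H i (H i ⊔ P) j := by
    obtain rfl | hj := eq_or_ne j i <;> simp [*]
  refine ⟨Function.update H i (H i ⊔ P), fun j => ?_, fun j l hjl => ?_, fun j => ?_, fun v => ?_⟩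
  · obtain rfl | hj := eq_or_ne j i
    · simpa using (hI j).sup_of_disjoint_support hP hi
    · simpa [hj] using hI j
  · obtain rfl | hj := eq_or_ne j i
    · simpa [Function.onFun, hjl.symm] using ⟨hH hjl, (hHP l).symm⟩
    · obtain rfl | hl := eq_or_ne l i
      · simpa [Function.onFun, hj] using ⟨hH hjl, hHP j⟩
      · simpa [Function.onFun, hj, hl] using hH hjl
  · obtain rfl | hj := eq_or_ne j i
    · simpa using ⟨(hHG j).trans sdiff_le, hPG⟩
    · simpa [hj] using (hHG j).trans sdiff_le
  · refine (SimpleGraph.degree_le_of_le ?_).trans (hdeg v)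
    rw [sdiff_sdiff_left]
    refine sdiff_le_sdiff_left (sup_le ?_ (iSup_mono hle))
    exact le_iSup_of_le i (by simp)

theorem hasIrregularPacking_of_forall_degree_le (hG : ∀ v, G.degree v ≤ d) :
    HasIrregularPacking G (3 * d + 1) 1 := by
  induction G using WellFoundedLT.induction with
  | _ G ih =>
    by_cases h : ∀ v, G.degree v ≤ 1
    · exact hasIrregularPacking_of_degree_le _ h
    push Not at h
    obtain ⟨v, hv⟩ := h
    obtain ⟨P, hPG, hP0, hP, X, hX, hPX⟩ := exists_le_isLocallyIrregular_support_subset hv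
    have hlt : G \ P < G := sdiff_lt hPG hP0
    obtain ⟨H, hI, hH, hHG, hdeg⟩ := ih (G \ P) hlt fun v =>
      (SimpleGraph.degree_le_of_le sdiff_le).trans (hG v)
    obtain ⟨i, hi⟩ := exists_disjoint_support hH (fun i => (hHG i).trans sdiff_le) (X := X) <|
      calc ∑ v ∈ X, G.degree v ≤ #X * d := sum_le_card_nsmul _ _ _ fun v _ => hG v
        _ ≤ 3 * d := Nat.mul_le_mul_right d hX
        _ < Fintype.card (Fin (3 * d + 1)) := by simp
    exact .of_sdiff_of_disjoint_support hP hPG hI hH hHG hdeg (hi.mono_right hPX)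

end BoundedDegree

section Reservoir

variable [Fintype V] {K : SimpleGraph V} {S : V → Finset V}

theorem degree_sup_fromRel_of_mem_support
    (hS : ∀ a, ∀ p ∈ S a, a ∈ K.support ∧ p ∉ K.support) {a : V} (ha : a ∈ K.support) :
    (K ⊔ .fromRel fun a p => p ∈ S a).degree a = K.degree a + #(S a) := by
  set B : SimpleGraph V := .fromRel fun a p => p ∈ S a
  have hdisj : Disjoint K B := SimpleGraph.disjoint_left.2 fun u v huv hB => hB.2.elim
    (fun h => (hS u v h).2 ⟨u, huv.symm⟩) fun h => (hS v u h).2 ⟨v, huv⟩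
  have hB : B.neighborFinset a = S a := by
    ext p
    rw [B.mem_neighborFinset]
    exact ⟨fun h => h.2.resolve_right fun h => (hS p a h).2 ha,
      fun h => ⟨fun hap => (hS a p h).2 (hap ▸ ha), .inl h⟩⟩
  rw [degree_sup_of_disjoint hdisj, ← B.card_neighborFinset_eq_degree, hB]

theorem degree_sup_fromRel_of_notMem_support
    (hS : ∀ a, ∀ p ∈ S a, a ∈ K.support ∧ p ∉ K.support) {p : V} (hp : p ∉ K.support) :
    (K ⊔ .fromRel fun a p => p ∈ S a).degree p = #{a | p ∈ S a} := by
  rw [← SimpleGraph.card_neighborFinset_eq_degree]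
  congr 1
  ext a
  rw [SimpleGraph.mem_neighborFinset, mem_filter_univ]
  constructor
  · rintro (h | h)
    · exact (hp ⟨a, h⟩).elim
    · exact h.2.resolve_left fun h => hp (hS p a h).1
  · exact fun h => .inr ⟨fun hpa => hp (hpa ▸ (hS a p h).1), .inr h⟩

theorem isLocallyIrregular_sup_fromRel (C : K.Coloring ℕ) (hC : ∀ v, Even (C v))
    (hS : ∀ a, ∀ p ∈ S a, a ∈ K.support ∧ p ∉ K.support)
    (hcard : ∀ a, K.degree a + #(S a) = C a)
    (hodd : ∀ p, #{a | p ∈ S a} = 0 ∨ Odd #{a | p ∈ S a}) :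
    IsLocallyIrregular (K ⊔ .fromRel fun a p => p ∈ S a) := by
  set H : SimpleGraph V := K ⊔ .fromRel fun a p => p ∈ S a
  have degree_eq {a} (ha : a ∈ K.support) : H.degree a = C a :=
    (degree_sup_fromRel_of_mem_support hS ha).trans (hcard a)
  have degree_ne {a p} (hp : p ∈ S a) : H.degree a ≠ H.degree p := fun h => by
    have hoddp : Odd (H.degree p) := by
      rw [degree_sup_fromRel_of_notMem_support hS (hS a p hp).2]
      exact (hodd p).resolve_left (card_pos.2 ⟨a, (mem_filter_univ a).2 hp⟩).ne'
    rw [← h, degree_eq (hS a p hp).1] at hoddp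
    exact Nat.not_even_iff_odd.2 hoddp (hC a)
  rintro u v (huv | ⟨-, huv | huv⟩)
  · rw [degree_eq ⟨v, huv⟩, degree_eq ⟨u, huv.symm⟩]
    exact C.valid huv
  · exact degree_ne huv
  · exact (degree_ne huv).symm

theorem exists_isLocallyIrregular_sup_of_reservoir (K : SimpleGraph V) (O : V → Finset V)
    (hO : ∀ a ∈ K.support, ∀ p ∈ O a, p ∉ K.support) (hcard : ∀ a, 6 * K.degree a ≤ #(O a)) :
    ∃ B : SimpleGraph V, IsLocallyIrregular (K ⊔ B) ∧
      ∀ u v, B.Adj u v → u ∈ K.support ∧ v ∈ O u ∨ v ∈ K.support ∧ u ∈ O v := by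
  obtain ⟨C, hC⟩ := exists_coloring_even_le K
  obtain ⟨S, hSO, hScard, hodd⟩ := exists_subset_card_eq_forall_eq_zero_or_odd O
    (fun a => C a - K.degree a) fun a => by
      have := hC a
      have := hcard a
      lia
  have mem_support {a p} (hp : p ∈ S a) : a ∈ K.support := by
    have := card_pos.2 ⟨p, hp⟩
    have := hScard a
    have := hC a
    exact (K.degree_pos_iff_mem_support a).1 (by lia)
  refine ⟨.fromRel fun a p => p ∈ S a, isLocallyIrregular_sup_fromRel C (fun v => (hC v).1)
    (fun a p hp => ⟨mem_support hp, hO a (mem_support hp) p (hSO a hp)⟩) (fun a => ?_) hodd,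
    fun u v h => h.2.imp (fun h => ⟨mem_support h, hSO u h⟩) fun h => ⟨mem_support h, hSO v h⟩⟩
  rw [hScard]
  exact Nat.add_sub_cancel' (hC a).2.1

end Reservoir

section Partition

variable [Fintype V]

theorem sum_sum_eq_of_symm {R : Type*} [NonAssocSemiring R] (g : V → V → R)
    (hg : ∀ u w, g u w = g w u) (v : V) (hv : g v v = 0) :
    ∑ u, ∑ w, g u w = 2 * ∑ w, g v w + ∑ u ∈ univ.erase v, ∑ w ∈ univ.erase v, g u w := by
  have hcol : ∑ u ∈ univ.erase v, g u v = ∑ w, g v w := by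
    rw [← add_sum_erase univ _ (mem_univ v), hv, zero_add]
    exact sum_congr rfl fun u _ => hg u v
  rw [← add_sum_erase univ _ (mem_univ v),
    sum_congr rfl fun u _ => (add_sum_erase univ (g u) (mem_univ v)).symm,
    sum_add_distrib, hcol, two_mul, add_assoc]

theorem exists_unfriendly_partition {κ : Type*} [Finite κ] [Nonempty κ] (G : SimpleGraph V) :
    ∃ f : V → κ, ∀ v c, #{w | G.Adj v w ∧ f w = f v} ≤ #{w | G.Adj v w ∧ f w = c} := by
  let g (f : V → κ) (u w : V) : ℕ := if G.Adj u w ∧ f w = f u then 1 else 0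
  obtain ⟨f, hf⟩ := Finite.exists_min fun f : V → κ => ∑ u, ∑ w, g f u w
  refine ⟨f, fun v c => ?_⟩
  have hsum (f : V → κ) := sum_sum_eq_of_symm (g f)
    (fun u w => by simp only [g, G.adj_comm u w, eq_comm (a := f w)]) v (by simp [g])
  have hrest : ∑ u ∈ univ.erase v, ∑ w ∈ univ.erase v, g (Function.update f v c) u w =
      ∑ u ∈ univ.erase v, ∑ w ∈ univ.erase v, g f u w :=
    sum_congr rfl fun u hu => sum_congr rfl fun w hw => by
      simp only [g, Function.update_of_ne (ne_of_mem_erase hu),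
        Function.update_of_ne (ne_of_mem_erase hw)]
  have hnew : ∑ w, g (Function.update f v c) v w = #{w | G.Adj v w ∧ f w = c} := by
    rw [card_filter]
    refine sum_congr rfl fun w _ => ?_
    obtain rfl | hw := eq_or_ne w v <;> simp [g, *]
  have hmin := hf (Function.update f v c)
  rw [hsum, hsum, hrest, hnew] at hmin
  rw [card_filter]
  change ∑ w, g f v w ≤ _
  lia

theorem card_mul_card_le_of_unfriendly {κ : Type*} {G : SimpleGraph V} {f : V → κ} {v : V}
    (hf : ∀ c, #{w | G.Adj v w ∧ f w = f v} ≤ #{w | G.Adj v w ∧ f w = c}) (s : Finset κ) :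
    #s * #{w | G.Adj v w ∧ f w = f v} ≤ #{w | G.Adj v w ∧ f w ∈ s} := by
  rw [card_eq_sum_card_fiberwise (f := f) (t := s) (s := {w | G.Adj v w ∧ f w ∈ s})
    fun w hw => (mem_filter.1 hw).2.2, ← smul_eq_mul]
  refine card_nsmul_le_sum s _ _ fun c hc => (hf c).trans (card_le_card fun w hw => ?_)
  simp only [mem_filter, mem_univ, true_and] at hw ⊢
  exact ⟨⟨hw.1, hw.2 ▸ hc⟩, hw.2⟩

theorem exists_isLocallyIrregular_of_unfriendly {κ : Type*} {G : SimpleGraph V} {f : V → κ}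
    (hf : ∀ v c, #{w | G.Adj v w ∧ f w = f v} ≤ #{w | G.Adj v w ∧ f w = c}) {i : κ}
    {s : Finset κ} (his : i ∉ s) (hs : 6 ≤ #s) :
    ∃ H ≤ G, IsLocallyIrregular H ∧
      (∀ u v, G.Adj u v → f u = i → f v = i → H.Adj u v) ∧
      ∀ u v, H.Adj u v → f u = i ∧ (f v = i ∨ f v ∈ s) ∨ f v = i ∧ (f u = i ∨ f u ∈ s) := by
  let K : SimpleGraph V := .fromRel fun u v => G.Adj u v ∧ f u = i ∧ f v = i
  let O (a : V) : Finset V := {p | G.Adj a p ∧ f p ∈ s}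
  have adj_K {u v} : K.Adj u v ↔ G.Adj u v ∧ f u = i ∧ f v = i := by
    have := fun h : G.Adj u v => h.ne
    simp only [K, SimpleGraph.fromRel_adj, G.adj_comm v u]
    tauto
  have eq_of_mem_support {u} : u ∈ K.support → f u = i := fun ⟨_, h⟩ => (adj_K.1 h).2.1
  have hcard (a) : 6 * K.degree a ≤ #(O a) := by
    refine (Nat.mul_le_mul hs (card_le_card fun w hw => ?_)).trans
      (card_mul_card_le_of_unfriendly (hf a) s)
    obtain ⟨haw, ha, hw⟩ := adj_K.1 ((K.mem_neighborFinset a w).1 hw)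
    exact (mem_filter_univ w).2 ⟨haw, hw.trans ha.symm⟩
  obtain ⟨B, hI, hB⟩ := exists_isLocallyIrregular_sup_of_reservoir K O
    (fun a _ p hp hpK => his (eq_of_mem_support hpK ▸ ((mem_filter_univ p).1 hp).2)) hcard
  refine ⟨K ⊔ B, sup_le (fun u v h => (adj_K.1 h).1) fun u v h => ?_, hI,
    fun u v huv hu hv => .inl (adj_K.2 ⟨huv, hu, hv⟩), fun u v h => ?_⟩
  · obtain ⟨-, h⟩ | ⟨-, h⟩ := hB u v h
    · exact ((mem_filter_univ v).1 h).1
    · exact ((mem_filter_univ u).1 h).1.symm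
  · obtain h | h := h
    · exact .inl ⟨(adj_K.1 h).2.1, .inl (adj_K.1 h).2.2⟩
    · exact (hB u v h).imp (fun h => ⟨eq_of_mem_support h.1, .inr ((mem_filter_univ v).1 h.2).2⟩)
        fun h => ⟨eq_of_mem_support h.1, .inr ((mem_filter_univ u).1 h.2).2⟩

theorem exists_hasIrregularPacking_colorable {n : ℕ} [NeZero n] (out : Fin n → Finset (Fin n))
    (hasymm : ∀ i j, j ∈ out i → i ∉ out j) (hcard : ∀ i, 6 ≤ #(out i)) (G : SimpleGraph V) :
    ∃ H ≤ G, HasIrregularPacking H n 0 ∧ (G \ H).Colorable n := by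
  obtain ⟨f, hf⟩ := exists_unfriendly_partition (κ := Fin n) G
  choose H hHG hI hsub hH using fun i => exists_isLocallyIrregular_of_unfriendly hf
    (fun h => hasymm i i h h) (hcard i)
  refine ⟨⨆ i, H i, iSup_le hHG,
    hasIrregularPacking_iSup hI fun i j hij => SimpleGraph.disjoint_left.2 fun u v hi hj => ?_,
    ⟨f, fun {u v} huv huf =>
      huv.2 (SimpleGraph.iSup_adj.2 ⟨f u, hsub _ u v huv.1 rfl huf.symm⟩)⟩⟩
  have := hH i u v hi
  have := hH j u v hj
  grind

end Partition

section TotalColoring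

variable {G : SimpleGraph V} {k l : ℕ}

theorem exists_edge_coloring {H : Fin k → SimpleGraph V} (hH : Pairwise (Disjoint on H)) :
    ∃ c : Sym2 V → Fin (k + 1), ∀ e i, c e = i.castSucc ↔ e ∈ (H i).edgeSet := by
  refine ⟨fun e => if h : ∃ i, e ∈ (H i).edgeSet then h.choose.castSucc else Fin.last k,
    fun e i => ?_⟩
  beta_reduce
  split_ifs with h
  · rw [Fin.castSucc_inj]
    refine ⟨fun hi => hi ▸ h.choose_spec, fun hi => by_contra fun hne => ?_⟩
    exact Set.disjoint_left.1 (SimpleGraph.disjoint_edgeSet.2 (hH hne)) h.choose_spec hi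
  · exact iff_of_false (Fin.castSucc_ne_last i).symm fun hi => h ⟨i, hi⟩

variable [Fintype V]

theorem hasIrregularPacking_sixtySix_one (G : SimpleGraph V) : HasIrregularPacking G 66 1 := by
  -- The sets below form a regular tournament on `ℤ/13`.
  obtain ⟨H, hHG, hH, hcol⟩ := exists_hasIrregularPacking_colorable (n := 13)
    (fun i => {j | 1 ≤ j - i ∧ j - i ≤ 6}) (by decide) (by decide) G
  have hGH : HasIrregularPacking (G \ H) 16 12 :=
    hasIrregularPacking_of_colorable_two_pow (n := 4) (hcol.mono (by decide))
  have hG : HasIrregularPacking G 29 12 := hH.of_sdiff hHG hGH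
  exact hG.trans fun R hR => hasIrregularPacking_of_forall_degree_le hR

theorem totalDeg_eq_degree_add {H : SimpleGraph V} {cV : V → Fin k} {cE : Sym2 V → Fin k}
    {i : Fin k} (hH : ∀ u v, H.Adj u v ↔ G.Adj u v ∧ cE s(u, v) = i) (v : V) :
    totalDeg G cV cE i v = H.degree v + if cV v = i then 1 else 0 := by
  rw [totalDeg, ← H.card_neighborFinset_eq_degree]
  congr 2
  ext u
  rw [mem_filter_univ, H.mem_neighborFinset, hH]

theorem HasIrregularPacking.hasTLIR (h : HasIrregularPacking G k 1) : HasTLIR G (k + 2) := by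
  obtain ⟨H, hI, hH, hHG, hM⟩ := h
  obtain ⟨c, hc⟩ := exists_edge_coloring hH
  obtain ⟨C, -⟩ := exists_coloring_mem_of_degree_lt_card (L := fun _ => (univ : Finset Bool))
    fun v => (hM v).trans_lt (by decide)
  set M : SimpleGraph V := G \ ⨆ i, H i with hM_def
  have adj_M {u v} : M.Adj u v ↔ G.Adj u v ∧ c s(u, v) = Fin.last k := by
    rw [hM_def, SimpleGraph.sdiff_adj, SimpleGraph.iSup_adj, ← not_ne_iff (b := Fin.last k),
      ← Fin.exists_castSucc_eq]
    simp only [eq_comm (b := c _), hc, SimpleGraph.mem_edgeSet]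
  let cV (v : V) : Fin (k + 2) := if C v then (Fin.last k).castSucc else Fin.last (k + 1)
  let cE (e : Sym2 V) : Fin (k + 2) := (c e).castSucc
  have totalDeg_castSucc (i : Fin k) (v) :
      totalDeg G cV cE i.castSucc.castSucc v = (H i).degree v := by
    rw [totalDeg_eq_degree_add (H := H i) fun u w => ?_, if_neg, add_zero]
    · by_cases hv : C v <;> simp [cV, hv, Fin.ext_iff] <;> lia
    · simp only [cE, Fin.castSucc_inj, hc, SimpleGraph.mem_edgeSet]
      exact (and_iff_right_of_imp (hHG i ·)).symm
  have totalDeg_last (v) :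
      totalDeg G cV cE (Fin.last k).castSucc v = M.degree v + if C v then 1 else 0 := by
    rw [totalDeg_eq_degree_add (H := M) fun u w => ?_]
    · by_cases hv : C v <;> simp [cV, hv, Fin.ext_iff]
    · simp only [cE, Fin.castSucc_inj, adj_M]
  refine ⟨cV, cE, fun u v huv => ?_⟩
  obtain ⟨i, hi⟩ | hlast := (c s(u, v)).eq_castSucc_or_eq_last
  · simp only [cE, hi, totalDeg_castSucc]
    exact hI i ((hc _ i).1 hi)
  · have hMuv : M.Adj u v := adj_M.2 ⟨huv, hlast⟩
    have degree_eq_one {w} (hw : w ∈ M.support) : M.degree w = 1 :=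
      (hM w).antisymm ((M.degree_pos_iff_mem_support w).2 hw)
    simp only [cE, hlast, totalDeg_last, degree_eq_one ⟨v, hMuv⟩, degree_eq_one ⟨u, hMuv.symm⟩]
    have := C.valid hMuv
    grind

theorem hasTLIR_mono (hkl : k ≤ l) (h : HasTLIR G k) : HasTLIR G l := by
  obtain ⟨cV, cE, hc⟩ := h
  refine ⟨fun v => (cV v).castLE hkl, fun e => (cE e).castLE hkl, fun u v huv => ?_⟩
  simpa only [totalDeg, Fin.castLE_inj] using hc u v huv

end TotalColoring

end TLIR

theorem stmt14_general {V : Type*} [Fintype V] (G : SimpleGraph V) : HasTLIR G 68 :=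
  (TLIR.hasIrregularPacking_sixtySix_one G).hasTLIR

/-- For every finite simple graph `G`, `tlir(G) ≤ 220`. -/
theorem stmt14 {V : Type*} [Fintype V] (G : SimpleGraph V) : HasTLIR G 220 := by
  exact TLIR.hasTLIR_mono (by decide) (stmt14_general G)
end
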